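/- arXiv:2109.05758 — 2 statements merged into one kernel-verified Lean document; each statement's English description precedes it below -/
import Mathlib

section
/- Let p ∈ (0,1) be fixed and let m ≥ 5 be a fixed integer. Then there exist constants c₁ = c₁(p,m) > 0 and c₂ = c₂(p,m) > 0 such that with high probability n + c₁·n/ln n ≤ sat(G(n,p), C_m) ≤ n + c₂·n/ln n; that is, whp sat(G(n,p), C_m) = n + Θ(n/ln n). -/
open MeasureTheory Filter Real

/-- The index type of potential edges of a graph on `Fin n`. -/
abbrev EdgeType (n : ℕ) := {e : Sym2 (Fin n) // ¬ e.IsDiag}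

/-- The product Bernoulli measure on edge-indicator functions: the binomial
random graph `G(n,p)`. -/
noncomputable def erMeasure (n : ℕ) (p : ℝ) : Measure (EdgeType n → Bool) :=
  Measure.pi fun _ => (PMF.bernoulli (min (Real.toNNReal p) 1) (min_le_right _ _)).toMeasure

/-- The simple graph determined by an edge-indicator function. -/
def graphOf {n : ℕ} (ω : EdgeType n → Bool) : SimpleGraph (Fin n) :=
  SimpleGraph.fromEdgeSet {e | ∃ h : ¬ e.IsDiag, ω ⟨e, h⟩ = true}

/-- `H` contains a (not necessarily induced) copy of `F`. -/
def ContainsCopy {α β : Type*} (F : SimpleGraph α) (H : SimpleGraph β) : Prop :=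
  ∃ f : α → β, Function.Injective f ∧ ∀ ⦃a b⦄, F.Adj a b → H.Adj (f a) (f b)

/-- `H` is `F`-saturated in `G`: `H` is a spanning subgraph of `G` that is `F`-free,
and adding any edge of `G` missing from `H` creates a copy of `F`. -/
def IsSaturatedIn {V : Type*} {α : Type*} (G H : SimpleGraph V) (F : SimpleGraph α) : Prop :=
  H ≤ G ∧ ¬ ContainsCopy F H ∧
    ∀ v w : V, G.Adj v w → ¬ H.Adj v w →
      ContainsCopy F (H ⊔ SimpleGraph.fromEdgeSet {s(v, w)})

/-- The saturation number `sat(G,F)`: the minimum number of edges of an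
`F`-saturated spanning subgraph of `G`. -/
noncomputable def satNum {V α : Type*} (G : SimpleGraph V) (F : SimpleGraph α) : ℕ :=
  sInf {k | ∃ H : SimpleGraph V, IsSaturatedIn G H F ∧ H.edgeSet.ncard = k}

/-- The cycle `C_m`, as a graph on `ZMod m`. -/
def cycGraph (m : ℕ) : SimpleGraph (ZMod m) :=
  SimpleGraph.fromRel (fun a b => a = b + 1)

/-!
Whp any two disjoint vertex sets of size `s = O(log n)` in `G(n,p)` span both edges and non-edges,
some vertex of the first being joined to a constant proportion of the second, and any two vertices
have linearly many common neighbours. Both bounds hold for every graph `G` with these properties.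

Lower bound. In a `C_m`-saturated `H ≤ G` the ends of every edge of `G` outside `H` are joined by a
path of length `m - 1` in `H`; in particular `H` is connected. Remove from `H` its pendant trees. If
`H` has `n + x` edges, the core that remains has `O(x)` branching vertices, and away from them it is
a union of bare paths. A pendant tree, and the part of the core far from the branching, offer so few
paths of length `m - 1` that large pieces of either would contain two sets of `s` vertices with no
edge of `G` between them. So a core vertex carries `O(s)` vertices on average, the core has
`O(s + x)` vertices, and `x = Ω(n / s)`.

Upper bound. Take about `n / log n` copies of `K_{m-1}` in `G` that share one vertex. This graph
contains no `C_m`, but paths of length `m - 3` and `m - 2` between any two of its vertices, and of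
length `m - 1` between any two that are not adjacent. Hang each remaining vertex on it as a leaf.
Neighbourhoods in `G` contain independent sets of logarithmic size, so the leaves can be arranged in
such sets, up to a few exceptions: then only `o(n / log n)` edges of `G` join two leaves at the same
vertex, all other edges of `G` close a cycle `C_m`, and saturating the graph adds few edges.
-/

/-! ### Saturated graphs and paths -/

/-- `H` contains a path of length `L` from `x` to `y`. -/
def HasPath {V : Type*} (H : SimpleGraph V) (L : ℕ) (x y : V) : Prop :=
  ∃ w : H.Walk x y, w.IsPath ∧ w.length = L

/-- Every edge of `G` is an edge of `H` or joins the ends of a path of length `L` in `H`. If `H` is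
a `C_m`-free subgraph of `G` and `L = m - 1`, this is `C_m`-saturation. -/
def JoinsEdgesByPaths {V : Type*} (G H : SimpleGraph V) (L : ℕ) : Prop :=
  ∀ ⦃x y⦄, G.Adj x y → H.Adj x y ∨ HasPath H L x y

section Saturation

variable {V α : Type*} {F : SimpleGraph α} {G H H' : SimpleGraph V} {L m : ℕ} {x y : V}

lemma HasPath.symm (h : HasPath H L x y) : HasPath H L y x :=
  let ⟨w, hw, hL⟩ := h
  ⟨w.reverse, hw.reverse, by rw [SimpleGraph.Walk.length_reverse, hL]⟩

lemma HasPath.reachable (h : HasPath H L x y) : H.Reachable x y := ⟨h.choose⟩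

lemma hasPath_one (h : H.Adj x y) : HasPath H 1 x y := ⟨h.toWalk, .of_adj h, rfl⟩

lemma JoinsEdgesByPaths.connected (h : JoinsEdgesByPaths G H L) (hG : G.Connected) :
    H.Connected := by
  have := hG.nonempty
  refine ⟨fun x y => ?_⟩
  obtain ⟨w⟩ := hG x y
  induction w with
  | nil => rfl
  | cons hadj _ ih => exact ((h hadj).elim (·.reachable) (·.reachable)).trans ih

lemma containsCopy_iff_isContained : ContainsCopy F H ↔ F.IsContained H :=
  ⟨fun ⟨f, hf, hadj⟩ => ⟨⟨⟨f, @hadj⟩, hf⟩⟩, fun ⟨f⟩ => ⟨f, f.injective, fun _ _ => f.toHom.map_adj⟩⟩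

lemma ContainsCopy.mono (hle : H ≤ H') (h : ContainsCopy F H) : ContainsCopy F H' := by
  rw [containsCopy_iff_isContained] at h ⊢
  exact h.mono_right hle

lemma cycGraph_succ_eq_cycleGraph (k : ℕ) : cycGraph (k + 1) = SimpleGraph.cycleGraph (k + 1) := by
  rw [SimpleGraph.cycleGraph_eq_circulantGraph]
  ext a b
  simp only [cycGraph, SimpleGraph.circulantGraph, SimpleGraph.fromRel_adj,
    Set.mem_singleton_iff, sub_eq_iff_eq_add']
  exact Iff.rfl

lemma containsCopy_cycGraph_iff (hm : 3 ≤ m) : ContainsCopy (cycGraph m) H ↔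
    ∃ (v : V) (c : H.Walk v v), c.IsCycle ∧ c.length = m := by
  obtain ⟨k, rfl⟩ : ∃ k, m = k + 1 := ⟨m - 1, by omega⟩
  rw [containsCopy_iff_isContained, cycGraph_succ_eq_cycleGraph]
  exact SimpleGraph.cycleGraph_isContained_iff (by omega)

lemma not_containsCopy_cycGraph_bot (hm : 3 ≤ m) :
    ¬ ContainsCopy (cycGraph m) (⊥ : SimpleGraph V) := by
  rw [containsCopy_cycGraph_iff hm]
  rintro ⟨_, c, hc, _⟩
  exact hc.ne_bot rfl

lemma HasPath.containsCopy_sup_edge (hm : 3 ≤ m) (h : HasPath H (m - 1) x y) :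
    ContainsCopy (cycGraph m) (H ⊔ SimpleGraph.edge x y) := by
  obtain ⟨w, hw, hL⟩ := h
  have hne : y ≠ x := by
    rintro rfl
    have := SimpleGraph.Walk.length_eq_zero_iff.2 (SimpleGraph.Walk.isPath_iff_nil.1 hw)
    omega
  have hadj : (H ⊔ SimpleGraph.edge x y).Adj y x := by
    simp [SimpleGraph.edge_adj, hne]
  rw [containsCopy_cycGraph_iff hm]
  refine ⟨y, .cons hadj (w.mapLe le_sup_left), ?_, ?_⟩
  · rw [SimpleGraph.Walk.cons_isCycle_iff, SimpleGraph.Walk.isPath_mapLe,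
      SimpleGraph.Walk.edges_mapLe_eq_edges, Sym2.eq_swap]
    refine ⟨hw, fun hmem => ?_⟩
    have := hw.length_eq_one_of_mem_edges hmem
    omega
  · simp only [SimpleGraph.Walk.length_cons, SimpleGraph.Walk.length_map]
    omega

lemma exists_path_of_cycle_through_edge {c : H.Walk x x} (hc : c.IsCycle)
    (hy : s(x, y) ∈ c.edges) :
    ∃ w : H.Walk x y, w.IsPath ∧ w.length + 1 = c.length ∧ s(x, y) ∉ w.edges := by
  cases c with
  | nil => simp at hy
  | @cons _ z _ hxz p =>
    obtain ⟨hp, hxzp⟩ := (SimpleGraph.Walk.cons_isCycle_iff p hxz).1 hc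
    rw [SimpleGraph.Walk.edges_cons, List.mem_cons] at hy
    obtain hy | hy := hy
    · obtain rfl : y = z := Sym2.congr_right.1 hy
      exact ⟨p.reverse, hp.reverse, by simp, by simpa using hxzp⟩
    · obtain rfl := hp.eq_penultimate_of_mem_edges hy
      have hlast := p.adj_penultimate fun hnil => hxz.ne hnil.eq.symm
      have hsplit := p.concat_dropLast hlast
      generalize p.dropLast = q at hsplit
      rw [← hsplit, SimpleGraph.Walk.edges_concat] at hxzp
      have hqx : q.IsPath ∧ x ∉ q.support := by
        rwa [← hsplit, SimpleGraph.Walk.concat_isPath_iff] at hp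
      refine ⟨.cons hxz q, hqx.1.cons hqx.2, by simp [← hsplit], fun hmem => ?_⟩
      rw [SimpleGraph.Walk.edges_cons, List.mem_cons] at hmem
      obtain hmem | hmem := hmem
      · simp [← Sym2.congr_right.1 hmem, Sym2.eq_swap] at hxzp
      · exact hqx.2 (q.fst_mem_support_of_mem_edges hmem)

lemma hasPath_of_containsCopy_sup_edge (hm : 3 ≤ m) (hfree : ¬ ContainsCopy (cycGraph m) H)
    (h : ContainsCopy (cycGraph m) (H ⊔ SimpleGraph.edge x y)) : HasPath H (m - 1) x y := by
  classical
  have mem_edgeSet {e : Sym2 V} (he : e ∈ (H ⊔ SimpleGraph.edge x y).edgeSet)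
      (hne : e ≠ s(x, y)) : e ∈ H.edgeSet := by
    rw [SimpleGraph.edgeSet_sup] at he
    exact he.resolve_right fun he => hne (SimpleGraph.edgeSet_edge_subset he)
  obtain ⟨v, c, hc, rfl⟩ := (containsCopy_cycGraph_iff hm).1 h
  have hxy : s(x, y) ∈ c.edges := by
    by_contra hxy
    have hcH : ∀ e ∈ c.edges, e ∈ H.edgeSet := fun e he =>
      mem_edgeSet (c.edges_subset_edgeSet he) (ne_of_mem_of_not_mem he hxy)
    exact hfree ((containsCopy_cycGraph_iff hm).2 ⟨v, c.transfer H hcH, hc.transfer hcH, by simp⟩)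
  have hx := c.fst_mem_support_of_mem_edges hxy
  obtain ⟨w, hw, hlen, hxyw⟩ := exists_path_of_cycle_through_edge
    (hc.rotate hx) ((c.rotate_edges x hx).mem_iff.2 hxy)
  have hwH : ∀ e ∈ w.edges, e ∈ H.edgeSet := fun e he =>
    mem_edgeSet (w.edges_subset_edgeSet he) (ne_of_mem_of_not_mem he hxyw)
  refine ⟨w.transfer H hwH, hw.transfer hwH, ?_⟩
  rw [SimpleGraph.Walk.length_transfer, ← c.length_rotate x hx, ← hlen, Nat.add_sub_cancel]

lemma sup_edge_le (hle : H ≤ G) (h : G.Adj x y) : H ⊔ SimpleGraph.edge x y ≤ G :=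
  sup_le hle (by simpa [SimpleGraph.edge_le_iff] using Or.inr h)

lemma exists_isSaturatedIn_ge [Finite V] (hle : H ≤ G) (hfree : ¬ ContainsCopy F H) :
    ∃ K, H ≤ K ∧ IsSaturatedIn G K F := by
  obtain ⟨K, ⟨hHK, hKG, hKfree⟩, hmax⟩ :=
    (Set.toFinite {K | H ≤ K ∧ K ≤ G ∧ ¬ ContainsCopy F K}).exists_maximal ⟨H, le_rfl, hle, hfree⟩
  refine ⟨K, hHK, hKG, hKfree, fun v w hG hK => by_contra fun hcopy => hK ?_⟩
  have hmem : K ⊔ SimpleGraph.edge v w ≤ K :=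
    hmax ⟨hHK.trans le_sup_left, sup_edge_le hKG hG, hcopy⟩ le_sup_left
  exact hmem (by simp [SimpleGraph.edge_adj, hG.ne])

lemma exists_isSaturatedIn_ncard_edgeSet_eq_satNum [Finite V] (G : SimpleGraph V)
    (hfree : ¬ ContainsCopy F (⊥ : SimpleGraph V)) :
    ∃ H, IsSaturatedIn G H F ∧ H.edgeSet.ncard = satNum G F :=
  let ⟨H, _, hH⟩ := exists_isSaturatedIn_ge bot_le hfree
  Nat.sInf_mem (s := {k | ∃ H, IsSaturatedIn G H F ∧ H.edgeSet.ncard = k}) ⟨_, H, hH, rfl⟩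

lemma satNum_le_ncard_edgeSet_add [Finite V] (hle : H ≤ G) (hfree : ¬ ContainsCopy F H)
    {bad : Set (Sym2 V)} (hbad : ∀ v w, G.Adj v w → ¬ H.Adj v w → s(v, w) ∉ bad →
      ContainsCopy F (H ⊔ SimpleGraph.edge v w)) :
    satNum G F ≤ H.edgeSet.ncard + bad.ncard := by
  obtain ⟨K, hHK, hK⟩ := exists_isSaturatedIn_ge hle hfree
  have hsub : K.edgeSet ⊆ H.edgeSet ∪ bad := fun e => by
    induction e with | _ v w =>
    refine fun hvw => by_contra fun hcon => hK.2.1 ?_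
    rw [Set.mem_union, not_or] at hcon
    exact (hbad v w (hK.1 hvw) hcon.1 hcon.2).mono (sup_edge_le hHK hvw)
  calc satNum G F ≤ K.edgeSet.ncard := Nat.sInf_le ⟨K, hK, rfl⟩
    _ ≤ (H.edgeSet ∪ bad).ncard := Set.ncard_le_ncard hsub (Set.toFinite _)
    _ ≤ H.edgeSet.ncard + bad.ncard := Set.ncard_union_le _ _

lemma IsSaturatedIn.joinsEdgesByPaths (hm : 3 ≤ m) (h : IsSaturatedIn G H (cycGraph m)) :
    JoinsEdgesByPaths G H (m - 1) := fun x y hG =>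
  or_iff_not_imp_left.2 fun hH => hasPath_of_containsCopy_sup_edge hm h.2.1 (h.2.2 x y hG hH)

end Saturation

/-! ### The lower bound: pendant trees and the core -/

/-- Trees pendant on a vertex set `core` of `H`: every edge lies inside `core` or joins a vertex
outside `core` to its parent, and iterating `par` leads every vertex into `core`. -/
structure PendantForest {V : Type*} (H : SimpleGraph V) where
  core : Finset V
  par : V → V
  exists_iterate_mem_core : ∀ x, ∃ i, par^[i] x ∈ core
  edge : ∀ ⦃x y⦄, H.Adj x y →
    (x ∈ core ∧ y ∈ core) ∨ (x ∉ core ∧ y = par x) ∨ (y ∉ core ∧ x = par y)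

namespace PendantForest

variable {V : Type*} {G H : SimpleGraph V} (P : PendantForest H) {L : ℕ} {x y z : V}

open Classical in
/-- The number of steps to the parent that lead from `x` into the core. -/
noncomputable def height (x : V) : ℕ := Nat.find (P.exists_iterate_mem_core x)

/-- The core vertex carrying the pendant tree of `x`. -/
noncomputable def top (x : V) : V := P.par^[P.height x] x

lemma top_mem_core (x : V) : P.top x ∈ P.core := by
  classical exact Nat.find_spec (P.exists_iterate_mem_core x)

variable {P}

lemma height_of_mem (hx : x ∈ P.core) : P.height x = 0 := by
  classical exact (Nat.find_eq_zero _).2 hx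

lemma top_of_mem (hx : x ∈ P.core) : P.top x = x := by
  rw [top, height_of_mem hx, Function.iterate_zero, id]

lemma height_of_notMem (hx : x ∉ P.core) : P.height x = P.height (P.par x) + 1 := by
  classical exact Nat.find_comp_succ _ (P.exists_iterate_mem_core (P.par x)) hx

lemma top_of_notMem (hx : x ∉ P.core) : P.top x = P.top (P.par x) := by
  rw [top, height_of_notMem hx, Function.iterate_succ_apply, top]

lemma mem_core_of_adj (h : H.Adj x y) (hne : P.top x ≠ P.top y) : x ∈ P.core ∧ y ∈ P.core := by
  obtain hxy | ⟨hx, rfl⟩ | ⟨hy, rfl⟩ := P.edge h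
  · exact hxy
  · exact absurd (top_of_notMem hx) hne
  · exact absurd (top_of_notMem hy).symm hne

lemma height_le_height_add_one (h : H.Adj x y) : P.height x ≤ P.height y + 1 := by
  obtain ⟨hx, -⟩ | ⟨hx, rfl⟩ | ⟨hy, rfl⟩ := P.edge h
  · simp [height_of_mem hx]
  · exact (height_of_notMem hx).le
  · rw [height_of_notMem hy]; omega

lemma height_add_height_mod_two_of_adj (h : H.Adj x y) (htop : P.top x = P.top y) :
    (P.height x + P.height y) % 2 = 1 := by
  obtain ⟨hx, hy⟩ | ⟨hx, rfl⟩ | ⟨hy, rfl⟩ := P.edge h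
  · rw [top_of_mem hx, top_of_mem hy] at htop
    exact absurd htop h.ne
  · rw [height_of_notMem hx]; omega
  · rw [height_of_notMem hy]; omega

/-- A path that steps from a vertex to one of its children goes on descending. -/
lemma top_eq_and_height_eq_of_isPath_cons (hy : y ∉ P.core) (hx : x = P.par y) {h : H.Adj x y}
    {w : H.Walk y z} (hw : (SimpleGraph.Walk.cons h w).IsPath) :
    P.top z = P.top x ∧ P.height z = P.height x + w.length + 1 := by
  induction w generalizing x with
  | nil => exact ⟨hx ▸ top_of_notMem hy, hx ▸ height_of_notMem hy⟩
  | @cons _ y' _ h' w ih =>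
    obtain ⟨hw', hxw⟩ := (SimpleGraph.Walk.cons_isPath_iff _ _).1 hw
    obtain ⟨hy', -⟩ | ⟨-, hy'⟩ | ⟨hy', hyy'⟩ := P.edge h'
    · exact absurd hy' hy
    · obtain rfl := hy'.trans hx.symm
      simp at hxw
    · obtain ⟨htop, hheight⟩ := ih hy' hyy' hw'
      rw [htop, hheight, top_of_notMem hy, height_of_notMem hy, ← hx, SimpleGraph.Walk.length_cons]
      exact ⟨rfl, by omega⟩

lemma top_mem_support {w : H.Walk x y} (hw : w.IsPath) (hx : x ∈ P.core) :
    P.top y ∈ w.support := by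
  induction w with
  | nil => simp [top_of_mem hx]
  | @cons x y' _ h w ih =>
    obtain ⟨-, hy'⟩ | ⟨hx', -⟩ | ⟨hy', hxy'⟩ := P.edge h
    · exact List.mem_cons_of_mem _ (ih hw.of_cons hy')
    · exact absurd hx hx'
    · rw [(top_eq_and_height_eq_of_isPath_cons hy' hxy' hw).1, top_of_mem hx]
      exact SimpleGraph.Walk.start_mem_support _

lemma length_le_and_mod_two_of_isPath {w : H.Walk x y} (hw : w.IsPath) (htop : P.top x = P.top y) :
    w.length ≤ P.height x + P.height y ∧ w.length % 2 = (P.height x + P.height y) % 2 := by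
  induction w with
  | nil => exact ⟨Nat.zero_le _, by rw [SimpleGraph.Walk.length_nil]; omega⟩
  | @cons x y' _ h w ih =>
    obtain ⟨hw', hxw⟩ := (SimpleGraph.Walk.cons_isPath_iff _ _).1 hw
    rw [SimpleGraph.Walk.length_cons]
    obtain ⟨hx, hy'⟩ | ⟨hx, rfl⟩ | ⟨hy', hxy'⟩ := P.edge h
    · rw [top_of_mem hx] at htop
      exact absurd (htop ▸ top_mem_support hw' hy') hxw
    · have := ih hw' (top_of_notMem hx ▸ htop)
      rw [height_of_notMem hx]
      omega
    · have := (top_eq_and_height_eq_of_isPath_cons hy' hxy' hw).2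
      omega

lemma height_le_height_add_length (w : H.Walk x y) : P.height x ≤ P.height y + w.length := by
  induction w with
  | nil => simp
  | cons h w ih =>
    have := P.height_le_height_add_one h
    rw [SimpleGraph.Walk.length_cons]
    omega

lemma height_add_height_lt_length (w : H.Walk x y) (hne : P.top x ≠ P.top y) :
    P.height x + P.height y < w.length := by
  induction w with
  | nil => exact absurd rfl hne
  | @cons x y' _ h w ih =>
    rw [SimpleGraph.Walk.length_cons]
    by_cases htop : P.top x = P.top y'
    · have := ih (htop ▸ hne)
      have := P.height_le_height_add_one h
      omega
    · obtain ⟨hx, hy'⟩ := mem_core_of_adj h htop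
      have := P.height_le_height_add_length w.reverse
      rw [height_of_mem hy', SimpleGraph.Walk.length_reverse] at this
      rw [height_of_mem hx]
      omega

lemma hasPath_par (h : HasPath H L x y) (hx : x ∉ P.core) (hne : x ≠ y)
    (hle : P.height y ≤ P.height x) : ∃ k, L = k + 1 ∧ HasPath H k (P.par x) y := by
  obtain ⟨w, hw, rfl⟩ := h
  cases w with
  | nil => exact absurd rfl hne
  | cons h w =>
    obtain ⟨hx', -⟩ | ⟨-, rfl⟩ | ⟨hy, hxy⟩ := P.edge h
    · exact absurd hx' hx
    · exact ⟨w.length, rfl, w, hw.of_cons, rfl⟩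
    · have := (top_eq_and_height_eq_of_isPath_cons hy hxy hw).2
      omega

lemma eq_two_of_hasPath_of_par_eq (h : HasPath H L x y) (hx : x ∉ P.core) (hy : y ∉ P.core)
    (hne : x ≠ y) (hpar : P.par x = P.par y) : L = 2 := by
  have hxheight := height_of_notMem hx
  have hyheight := height_of_notMem hy
  rw [hpar] at hxheight
  obtain ⟨k, rfl, hk⟩ := hasPath_par h hx hne (by omega)
  rw [hpar] at hk
  have hne' : y ≠ P.par y := fun h => by rw [← h] at hyheight; omega
  obtain ⟨l, rfl, w, hw, hl⟩ := hasPath_par hk.symm hy hne' (by omega)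
  have := SimpleGraph.Walk.length_eq_zero_iff.2 (SimpleGraph.Walk.isPath_iff_nil.1 hw)
  omega

lemma eq_par_or_eq_par_of_adj (hsat : JoinsEdgesByPaths G H L) (h : G.Adj x y)
    (htop : P.top x = P.top y) (hne : (P.height x + P.height y) % 2 ≠ L % 2) :
    (x ∉ P.core ∧ y = P.par x) ∨ (y ∉ P.core ∧ x = P.par y) := by
  obtain h | ⟨w, hw, hwL⟩ := hsat h
  · refine (P.edge h).resolve_left fun ⟨hx, hy⟩ => h.ne ?_
    rwa [top_of_mem hx, top_of_mem hy] at htop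
  · exact absurd (hwL ▸ (length_le_and_mod_two_of_isPath hw htop).2.symm) hne

end PendantForest

/-- Any two disjoint sets of `s` vertices are joined by an edge of `G`. -/
def NoBipartiteHole {V : Type*} (G : SimpleGraph V) (s : ℕ) : Prop :=
  ∀ A B : Finset V, Disjoint A B → s ≤ A.card → s ≤ B.card → ∃ a ∈ A, ∃ b ∈ B, G.Adj a b

section Holes

variable {V β : Type*} {G : SimpleGraph V} {s : ℕ} {X : Finset V}

lemma NoBipartiteHole.card_lt_of_isIndepSet (hG : NoBipartiteHole G s)
    (hX : G.IsIndepSet (X : Set V)) (hs : 1 ≤ s) : X.card < 2 * s := by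
  classical
  by_contra! hcon
  obtain ⟨A, hA, hAc⟩ := Finset.exists_subset_card_eq (s := X) (n := s) (by omega)
  obtain ⟨a, ha, b, hb, hab⟩ := hG A (X \ A) Finset.disjoint_sdiff hAc.ge
    (by rw [Finset.card_sdiff_of_subset hA]; omega)
  exact hX (hA ha) (Finset.sdiff_subset hb) hab.ne hab

/-- Order the classes of `f` and cut where `s` vertices are reached: the class at the cut contains
everything except fewer than `s` vertices on either side. -/
lemma NoBipartiteHole.exists_large_fiber [DecidableEq β] (hG : NoBipartiteHole G s) (hs : 1 ≤ s)
    (hX : 2 * s ≤ X.card) (f : V → β) (hf : ∀ x ∈ X, ∀ y ∈ X, G.Adj x y → f x = f y) :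
    ∃ b, X.card < (X.filter (f · = b)).card + 2 * s := by
  classical
  obtain ⟨T, hT, hmin⟩ := exists_minimal_of_wellFoundedLT
    (fun T : Finset β => s ≤ (X.filter (f · ∈ T)).card) ⟨X.image f, by
      rw [Finset.filter_true_of_mem fun x hx => Finset.mem_image_of_mem f hx]; omega⟩
  obtain ⟨b, hb⟩ : T.Nonempty := by
    rw [Finset.nonempty_iff_ne_empty]
    rintro rfl
    simp only [Finset.notMem_empty, Finset.filter_false, Finset.card_empty] at hT
    omega
  have hbefore : (X.filter (f · ∈ T.erase b)).card < s := by
    by_contra! hcon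
    exact Finset.notMem_erase b T (hmin hcon (Finset.erase_subset b T) hb)
  have hafter : (X.filter (f · ∉ T)).card < s := by
    by_contra! hcon
    obtain ⟨x, hx, y, hy, hxy⟩ := hG _ _ (Finset.disjoint_filter_filter_not X X (f · ∈ T)) hT hcon
    rw [Finset.mem_filter] at hx hy
    exact hy.2 (hf x hx.1 y hy.1 hxy ▸ hx.2)
  have hcover : X ⊆ X.filter (f · = b) ∪ (X.filter (f · ∈ T.erase b) ∪ X.filter (f · ∉ T)) := by
    intro x hx
    simp only [Finset.mem_union, Finset.mem_filter, Finset.mem_erase, hx, true_and]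
    tauto
  have := Finset.card_le_card hcover
  grw [Finset.card_union_le, Finset.card_union_le] at this
  exact ⟨b, by omega⟩

end Holes

namespace PendantForest

variable {V : Type*} {G H : SimpleGraph V} (P : PendantForest H) {s L : ℕ}

open Finset

/-- The vertices of `Q` that are neither children nor parents of vertices of `A`. -/
def unrelated [DecidableEq V] (Q A : Finset V) : Finset V :=
  {x ∈ Q | x ∉ A.image P.par ∧ ¬ (x ∉ P.core ∧ P.par x ∈ A)}

lemma card_unrelated_lt [DecidableEq V] (hG : NoBipartiteHole G s) (heven : L % 2 = 0)
    (hsat : JoinsEdgesByPaths G H L) {Q A : Finset V} {v : V} {i : ℕ}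
    (hQ : ∀ x ∈ Q, P.top x = v ∧ P.height x % 2 = i)
    (hA : ∀ x ∈ A, P.top x = v ∧ P.height x % 2 ≠ i) (hAs : s ≤ #A) : #(P.unrelated Q A) < s := by
  by_contra! hcon
  have hdisj : Disjoint A (P.unrelated Q A) := disjoint_left.2 fun x hxA hx =>
    (hA x hxA).2 (hQ x (mem_filter.1 hx).1).2
  obtain ⟨a, ha, b, hb, hab⟩ := hG A _ hdisj hAs hcon
  obtain ⟨hbQ, hb⟩ := mem_filter.1 hb
  have ha' := hA a ha
  have hb' := hQ b hbQ
  obtain h | h := eq_par_or_eq_par_of_adj hsat hab (ha'.1.trans hb'.1.symm) (by omega)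
  · exact hb.1 (mem_image.2 ⟨a, ha, h.2.symm⟩)
  · exact hb.2 ⟨h.1, h.2 ▸ ha⟩

variable [Fintype V]

lemma card_top_eq_and_height_lt_le [DecidableEq V] (hG : NoBipartiteHole G s) (hs : 1 ≤ s)
    (hsat : JoinsEdgesByPaths G H L) (v : V) :
    #{x | P.top x = v ∧ 2 * P.height x < L} ≤ 2 * s * 2 := by
  refine card_le_mul_card_image_of_maps_to (f := (P.height · % 2)) (t := range 2)
    (fun x _ => mem_range.2 (Nat.mod_lt _ two_pos)) (2 * s) fun i _ => ?_
  refine (hG.card_lt_of_isIndepSet (fun x hx y hy _ hxy => ?_) hs).le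
  simp only [filter_filter, coe_filter, Set.mem_ofPred_eq, mem_univ, true_and] at hx hy
  have htop : P.top x = P.top y := hx.1.1.trans hy.1.1.symm
  obtain h | ⟨w, hw, hwL⟩ := hsat hxy
  · have := P.height_add_height_mod_two_of_adj h htop
    omega
  · have := length_le_and_mod_two_of_isPath hw htop
    omega

lemma card_children_lt [DecidableEq V] (hG : NoBipartiteHole G s) (hs : 1 ≤ s) (hL : L ≠ 2)
    (hsat : JoinsEdgesByPaths G H L) (v : V) :
    #{x | x ∉ P.core ∧ P.par x = v} < 2 * s := by
  refine hG.card_lt_of_isIndepSet (fun x hx y hy hne hxy => ?_) hs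
  simp only [coe_filter, Set.mem_ofPred_eq, mem_univ, true_and] at hx hy
  have hpar := hx.2.trans hy.2.symm
  obtain h | h := hsat hxy
  · have := P.height_add_height_mod_two_of_adj h
      (by rw [top_of_notMem hx.1, top_of_notMem hy.1, hpar])
    rw [height_of_notMem hx.1, height_of_notMem hy.1, hpar] at this
    omega
  · exact hL (eq_two_of_hasPath_of_par_eq h hx.1 hy.1 hne hpar)

lemma card_children_le [DecidableEq V] (hG : NoBipartiteHole G s) (hs : 1 ≤ s) (hL : L ≠ 2)
    (hsat : JoinsEdgesByPaths G H L) (A : Finset V) :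
    #{x | x ∉ P.core ∧ P.par x ∈ A} ≤ 2 * s * #A := by
  refine card_le_mul_card_image_of_maps_to (fun x hx => (mem_filter.1 hx).2.2) _ fun v _ => ?_
  refine (card_le_card fun x hx => ?_).trans (P.card_children_lt hG hs hL hsat v).le
  simp only [mem_filter] at hx ⊢
  exact ⟨hx.1.1, hx.1.2.1, hx.2⟩

lemma card_le_card_unrelated_add [DecidableEq V] (hG : NoBipartiteHole G s) (hs : 1 ≤ s)
    (hL : L ≠ 2) (hsat : JoinsEdgesByPaths G H L) (Q A : Finset V) :
    #Q ≤ #(P.unrelated Q A) + (#A + 2 * s * #A) := by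
  have hcover : Q ⊆ P.unrelated Q A ∪
      (A.image P.par ∪ ({x | x ∉ P.core ∧ P.par x ∈ A} : Finset V)) := by
    intro x hx
    simp only [unrelated, mem_union, mem_filter, mem_univ, true_and, hx]
    tauto
  grw [hcover, card_union_le, card_union_le, card_image_le, P.card_children_le hG hs hL hsat A]

/-- For even `L` the edges of `G` between the two parity classes of a pendant tree are tree edges.
So `s` vertices of one class are related to all but `s` vertices of the other. -/
lemma card_top_eq_and_height_mod_two_le_of_even [DecidableEq V] (hG : NoBipartiteHole G s)
    (hs : 1 ≤ s) (hL : L ≠ 2) (heven : L % 2 = 0) (hsat : JoinsEdgesByPaths G H L) (v : V) (i : ℕ) :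
    #{x | P.top x = v ∧ P.height x % 2 = i} ≤ 2 * s * s + 2 * s := by
  set Q : Finset V := {x | P.top x = v ∧ P.height x % 2 = i}
  set R : Finset V := {x | P.top x = v ∧ P.height x % 2 ≠ i}
  obtain ⟨A, hAR, hA⟩ := exists_subset_card_eq (s := R) (min_le_right s #R)
  have hunrelated : #(P.unrelated Q A) ≤ s := by
    obtain hsR | hRs := le_total s #R
    · exact (P.card_unrelated_lt hG heven hsat (fun x hx => (mem_filter.1 hx).2)
        (fun x hx => (mem_filter.1 (hAR hx)).2) (by omega)).le
    · have hAR : A = R := eq_of_subset_of_card_le hAR (by omega)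
      have hroot : P.unrelated Q A ⊆ {v} := fun x hx => by
        obtain ⟨hxQ, -, hx⟩ := mem_filter.1 hx
        have hxQ := (mem_filter.1 hxQ).2
        by_cases hcore : x ∈ P.core
        · rw [mem_singleton, ← hxQ.1, top_of_mem hcore]
        · have hheight := height_of_notMem hcore
          refine absurd ⟨hcore, hAR ▸ mem_filter.2 ⟨mem_univ _, ?_, by omega⟩⟩ hx
          rw [← top_of_notMem hcore, hxQ.1]
      exact (card_le_card hroot).trans (by rwa [card_singleton])
  have hcover := P.card_le_card_unrelated_add hG hs hL hsat Q A
  have hAs : #A ≤ s := hA ▸ min_le_left _ _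
  nlinarith

lemma card_top_eq_and_height_mod_two_le [DecidableEq V] (hG : NoBipartiteHole G s) (hs : 1 ≤ s)
    (hL : L ≠ 2) (hsat : JoinsEdgesByPaths G H L) (v : V) (i : ℕ) :
    #{x | P.top x = v ∧ P.height x % 2 = i} ≤ 2 * s * s + 2 * s := by
  obtain heven | hodd := Nat.mod_two_eq_zero_or_one L
  · exact P.card_top_eq_and_height_mod_two_le_of_even hG hs hL heven hsat v i
  · refine (hG.card_lt_of_isIndepSet (fun x hx y hy _ hxy => ?_) hs).le.trans (Nat.le_add_left _ _)
    simp only [coe_filter, Set.mem_ofPred_eq, mem_univ, true_and] at hx hy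
    have htop : P.top x = P.top y := hx.1.trans hy.1.symm
    obtain ⟨hx', hpar⟩ | ⟨hy', hpar⟩ := eq_par_or_eq_par_of_adj hsat hxy htop (by omega)
    · have := height_of_notMem hx'
      rw [← hpar] at this
      omega
    · have := height_of_notMem hy'
      rw [← hpar] at this
      omega

lemma card_top_eq_le [DecidableEq V] (hG : NoBipartiteHole G s) (hs : 1 ≤ s) (hL : L ≠ 2)
    (hsat : JoinsEdgesByPaths G H L) (v : V) :
    #{x | P.top x = v} ≤ (2 * s * s + 2 * s) * 2 := by
  refine card_le_mul_card_image_of_maps_to (f := (P.height · % 2)) (t := range 2)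
    (fun x _ => mem_range.2 (Nat.mod_lt _ two_pos)) _ fun i _ => ?_
  rw [filter_filter]
  exact P.card_top_eq_and_height_mod_two_le hG hs hL hsat v i

lemma card_le_two_mul_height_le (hG : NoBipartiteHole G s) (hs : 1 ≤ s) (hL : 3 ≤ L)
    (hsat : JoinsEdgesByPaths G H L) :
    #{x | L ≤ 2 * P.height x} ≤ 4 * s * s + 6 * s := by
  classical
  by_contra! hcon
  obtain ⟨v, hv⟩ := hG.exists_large_fiber (X := {x | L ≤ 2 * P.height x}) hs (by nlinarith) P.top
    fun x hx y hy hxy => by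
      rw [mem_filter] at hx hy
      by_contra hne
      obtain h | ⟨w, -, hwL⟩ := hsat hxy
      · have := P.height_of_mem (mem_core_of_adj h hne).1
        omega
      · have := height_add_height_lt_length w hne
        omega
  rw [filter_filter] at hv
  have htree := P.card_top_eq_le hG hs (by omega) hsat v
  have : #{x | L ≤ 2 * P.height x ∧ P.top x = v} ≤ #{x | P.top x = v} :=
    card_le_card (monotone_filter_right _ fun _ _ h => h.2)
  nlinarith

/-- Almost every vertex has small height, and few vertices of small height share a core vertex. -/
lemma card_le_mul_card_core (hG : NoBipartiteHole G s) (hs : 1 ≤ s) (hL : 3 ≤ L)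
    (hsat : JoinsEdgesByPaths G H L) :
    Fintype.card V ≤ 4 * s * #P.core + (4 * s * s + 6 * s) := by
  classical
  have hlow : #{x | 2 * P.height x < L} ≤ 2 * s * 2 * #P.core := by
    refine card_le_mul_card_image_of_maps_to (fun x _ => P.top_mem_core x) _ fun v _ => ?_
    rw [filter_filter]
    simpa only [and_comm] using P.card_top_eq_and_height_lt_le hG hs hsat v
  have hdeep := P.card_le_two_mul_height_le hG hs hL hsat
  have hsplit := card_filter_add_card_filter_not (s := univ) (fun x => 2 * P.height x < L)
  simp only [not_lt, card_univ] at hsplit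
  nlinarith

end PendantForest


/-- A spanning forest of `H`, given by parent pointers, with a set `ports` that meets every chain
of parents and contains both ends of every edge of `H` outside the forest. -/
structure PortedForest {V : Type*} (H : SimpleGraph V) where
  par : V → V
  ports : Finset V
  exists_iterate_mem_ports : ∀ x, ∃ i, par^[i] x ∈ ports
  edge : ∀ ⦃x y⦄, H.Adj x y → y = par x ∨ x = par y ∨ (x ∈ ports ∧ y ∈ ports)

section Existence

open Finset

variable {V : Type*} {H : SimpleGraph V} {r : V} {par : V → V}

lemma card_image_parentEdge [Fintype V] [DecidableEq V]
    (hdist : ∀ x, x ≠ r → H.dist (par x) r < H.dist x r) :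
    #((univ.erase r).image fun x => s(x, par x)) + 1 = Fintype.card V := by
  rw [card_image_of_injOn, card_erase_add_one (mem_univ r), card_univ]
  intro x hx y hy hxy
  obtain ⟨h, -⟩ | ⟨hxy, hyx⟩ := Sym2.eq_iff.1 hxy
  · exact h
  · have hxr := hdist x (ne_of_mem_erase hx)
    have hyr := hdist y (ne_of_mem_erase hy)
    rw [hyx] at hxr
    rw [← hxy] at hyr
    omega

lemma exists_iterate_eq_root (hdist : ∀ x, x ≠ r → H.dist (par x) r < H.dist x r) (x : V) :
    ∃ i, par^[i] x = r := by
  induction hn : H.dist x r using Nat.strong_induction_on generalizing x with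
  | _ n ih =>
    by_cases hx : x = r
    · exact ⟨0, hx⟩
    · obtain ⟨i, hi⟩ := ih _ (hn ▸ hdist x hx) (par x) rfl
      exact ⟨i + 1, hi⟩

lemma card_biUnion_toFinset_le [DecidableEq V] (E : Finset (Sym2 V)) :
    #(E.biUnion Sym2.toFinset) ≤ #E * 2 := by
  refine card_biUnion_le_card_mul _ _ _ fun e _ => ?_
  rw [Sym2.card_toFinset]
  split_ifs <;> norm_num

lemma exists_portedForest_of_parent [Fintype V] [DecidableRel H.Adj]
    (hadj : ∀ x, x ≠ r → H.Adj x (par x))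
    (hdist : ∀ x, x ≠ r → H.dist (par x) r < H.dist x r) :
    ∃ T : PortedForest H, #T.ports + 2 * Fintype.card V ≤ 2 * #H.edgeFinset + 3 := by
  classical
  set tree : Finset (Sym2 V) := (univ.erase r).image fun x => s(x, par x)
  have htree : tree ⊆ H.edgeFinset := by
    intro e he
    obtain ⟨x, hx, rfl⟩ := mem_image.1 he
    exact SimpleGraph.mem_edgeFinset.2 (hadj x (ne_of_mem_erase hx))
  have hextra := card_sdiff_add_card_eq_card htree
  have hcard : #tree + 1 = Fintype.card V := card_image_parentEdge hdist
  refine ⟨⟨par, insert r ((H.edgeFinset \ tree).biUnion Sym2.toFinset), fun x => ?_, ?_⟩, ?_⟩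
  · obtain ⟨i, hi⟩ := exists_iterate_eq_root hdist x
    exact ⟨i, hi ▸ mem_insert_self _ _⟩
  · intro x y hxy
    by_cases he : s(x, y) ∈ tree
    · obtain ⟨z, -, hz⟩ := mem_image.1 he
      obtain ⟨rfl, rfl⟩ | ⟨rfl, rfl⟩ := Sym2.eq_iff.1 hz
      · exact Or.inl rfl
      · exact Or.inr (Or.inl rfl)
    · have he' := Finset.mem_sdiff.2 ⟨SimpleGraph.mem_edgeFinset.2 hxy, he⟩
      exact Or.inr (Or.inr ⟨mem_insert_of_mem (mem_biUnion.2 ⟨_, he', by simp⟩),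
        mem_insert_of_mem (mem_biUnion.2 ⟨_, he', by simp⟩)⟩)
  · have hports := card_insert_le r ((H.edgeFinset \ tree).biUnion Sym2.toFinset)
    have hends := card_biUnion_toFinset_le (H.edgeFinset \ tree)
    dsimp only
    omega

end Existence

open Finset in
lemma exists_portedForest_of_connected {V : Type*} [Fintype V] {H : SimpleGraph V}
    (hH : H.Connected) :
    ∃ T : PortedForest H, #T.ports + 2 * Fintype.card V ≤ 2 * H.edgeSet.ncard + 3 := by
  classical
  obtain ⟨r⟩ := hH.nonempty
  have hpar : ∀ x, ∃ y, x ≠ r → H.Adj x y ∧ H.dist y r < H.dist x r := by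
    intro x
    obtain ⟨w, hw⟩ := (hH x r).exists_walk_length_eq_dist
    cases w with
    | nil => exact ⟨r, fun h => absurd rfl h⟩
    | @cons _ y _ h w =>
      refine ⟨y, fun _ => ⟨h, (SimpleGraph.dist_le w).trans_lt ?_⟩⟩
      rw [← hw, SimpleGraph.Walk.length_cons]
      exact Nat.lt_succ_self _
  choose par hpar using hpar
  obtain ⟨T, hT⟩ := exists_portedForest_of_parent (fun x hx => (hpar x hx).1)
    (fun x hx => (hpar x hx).2)
  exact ⟨T, by rwa [Set.ncard_eq_toFinset_card']⟩

namespace PortedForest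

open Finset

variable {V : Type*} [Fintype V] {G H : SimpleGraph V} (T : PortedForest H) {N i : ℕ} {x y v : V}

open Classical in
/-- All ancestors of ports. -/
noncomputable def core : Finset V := {x | ∃ u ∈ T.ports, ∃ i, T.par^[i] u = x}

open Classical in
/-- The ports, and the vertices of the core with more than one child in the core. -/
noncomputable def junctions : Finset V :=
  T.ports ∪ ({v | ∃ t ∈ T.core, ∃ t' ∈ T.core, t ≠ t' ∧ T.par t = v ∧ T.par t' = v} : Finset V)

variable {T}

lemma mem_core : x ∈ T.core ↔ ∃ u ∈ T.ports, ∃ i, T.par^[i] u = x := by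
  simp [core]

lemma ports_subset_core : T.ports ⊆ T.core := fun x hx => mem_core.2 ⟨x, hx, 0, rfl⟩

lemma par_mem_core (hx : x ∈ T.core) : T.par x ∈ T.core := by
  obtain ⟨u, hu, i, rfl⟩ := mem_core.1 hx
  exact mem_core.2 ⟨u, hu, i + 1, Function.iterate_succ_apply' _ _ _⟩

lemma iterate_par_mem_core (hx : x ∈ T.core) (i : ℕ) : T.par^[i] x ∈ T.core := by
  induction i with
  | zero => exact hx
  | succ i ih => rw [Function.iterate_succ_apply']; exact par_mem_core ih

lemma exists_child_mem_core (hv : v ∈ T.core) (hports : v ∉ T.ports) :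
    ∃ t ∈ T.core, T.par t = v := by
  obtain ⟨u, hu, i, rfl⟩ := mem_core.1 hv
  cases i with
  | zero => exact absurd hu hports
  | succ i => exact ⟨T.par^[i] u, mem_core.2 ⟨u, hu, i, rfl⟩,
      (Function.iterate_succ_apply' _ _ _).symm⟩

variable (T) in
/-- The trees of the forest hanging off its core. -/
noncomputable def pendantForest : PendantForest H where
  core := T.core
  par := T.par
  exists_iterate_mem_core x := (T.exists_iterate_mem_ports x).imp fun _ h => ports_subset_core h
  edge x y h := by
    obtain rfl | rfl | ⟨hx, hy⟩ := T.edge h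
    · by_cases hx : x ∈ T.core
      · exact Or.inl ⟨hx, par_mem_core hx⟩
      · exact Or.inr (Or.inl ⟨hx, rfl⟩)
    · by_cases hy : y ∈ T.core
      · exact Or.inl ⟨par_mem_core hy, hy⟩
      · exact Or.inr (Or.inr ⟨hy, rfl⟩)
    · exact Or.inl ⟨ports_subset_core hx, ports_subset_core hy⟩

lemma par_mem_junctions (hx : x ∈ T.core) (hy : y ∈ T.core) (hne : x ≠ y)
    (hpar : T.par x = T.par y) : T.par x ∈ T.junctions := by
  classical
  exact mem_union_right _ (mem_filter.2 ⟨mem_univ _, x, hx, y, hy, hne, rfl, hpar.symm⟩)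

lemma ports_subset_junctions : T.ports ⊆ T.junctions := by
  classical exact subset_union_left

/-- Give each core vertex that is not a port a child of its own: only `#T.ports` core vertices are
left over, and a branching vertex is the parent of one of these. -/
lemma card_junctions_le : #T.junctions ≤ 2 * #T.ports := by
  classical
  obtain ⟨heirs, hsub, hinj, himage⟩ := exists_subset_injOn_image_eq_of_surjOn (f := T.par)
    (T.core : Set V) (T.core \ T.ports) fun v hv => by
      rw [mem_coe, Finset.mem_sdiff] at hv
      exact exists_child_mem_core hv.1 hv.2
  have hcover : T.junctions ⊆ T.ports ∪ (T.core \ heirs).image T.par := by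
    refine union_subset_union_right fun v hv => ?_
    obtain ⟨t, ht, t', ht', hne, rfl, hpar⟩ := (mem_filter.1 hv).2
    by_cases h : t ∈ heirs
    · have h' : t' ∉ heirs := fun h' => hne (hinj h h' hpar.symm)
      exact hpar ▸ mem_image_of_mem _ (Finset.mem_sdiff.2 ⟨ht', h'⟩)
    · exact mem_image_of_mem _ (Finset.mem_sdiff.2 ⟨ht, h⟩)
  have hheirs : #heirs = #(T.core \ T.ports) := by rw [← himage, card_image_of_injOn hinj]
  have := card_sdiff_add_card_eq_card (coe_subset.1 hsub)
  have := card_sdiff_add_card_eq_card (ports_subset_core (T := T))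
  grw [hcover, card_union_le, card_image_le]
  omega

lemma card_children_mem_core_le [DecidableEq V] {A : Finset V} (hports : T.ports ⊆ A)
    (hA : A ⊆ T.core) : #{t ∈ T.core | T.par t ∈ A} ≤ #A := by
  have hsurj : T.core \ A ⊆ ({t ∈ T.core | T.par t ∉ A} : Finset V).image T.par := by
    intro v hv
    rw [Finset.mem_sdiff] at hv
    obtain ⟨t, ht, rfl⟩ := exists_child_mem_core hv.1 fun h => hv.2 (hports h)
    exact mem_image_of_mem _ (mem_filter.2 ⟨ht, hv.2⟩)
  have := (card_le_card hsurj).trans card_image_le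
  have := card_sdiff_add_card_eq_card hA
  have := card_filter_add_card_filter_not (s := T.core) (T.par · ∈ A)
  omega

variable (T) in
open Classical in
/-- The core vertices with a junction among their first `i` ancestors, themselves included. -/
noncomputable def belowJunctions (i : ℕ) : Finset V :=
  {t ∈ T.core | ∃ j ≤ i, T.par^[j] t ∈ T.junctions}

variable (T) in
open Classical in
/-- The junctions and their first `i` ancestors. -/
noncomputable def aboveJunctions (i : ℕ) : Finset V :=
  (range (i + 1)).biUnion fun j => T.junctions.image T.par^[j]

lemma card_belowJunctions_le (i : ℕ) : #(T.belowJunctions i) ≤ (i + 1) * #T.junctions := by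
  classical
  induction i with
  | zero =>
    rw [zero_add, one_mul]
    refine card_le_card fun t ht => ?_
    obtain ⟨j, hj, h⟩ := (mem_filter.1 ht).2
    obtain rfl := Nat.le_zero.1 hj
    exact h
  | succ i ih =>
    have hcover : T.belowJunctions (i + 1) ⊆
        T.junctions ∪ ({t ∈ T.core | T.par t ∈ T.belowJunctions i} : Finset V) := by
      intro t ht
      obtain ⟨htcore, j, hj, h⟩ := mem_filter.1 ht
      cases j with
      | zero => exact mem_union_left _ h
      | succ j =>
        exact mem_union_right _ (mem_filter.2 ⟨htcore,
          mem_filter.2 ⟨par_mem_core htcore, j, Nat.le_of_succ_le_succ hj, h⟩⟩)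
    have hports : T.ports ⊆ T.belowJunctions i := fun u hu =>
      mem_filter.2 ⟨ports_subset_core hu, 0, Nat.zero_le i, ports_subset_junctions hu⟩
    grw [hcover, card_union_le, card_children_mem_core_le hports (filter_subset _ _), ih]
    exact (by ring : _ = _).le

lemma card_aboveJunctions_le (i : ℕ) : #(T.aboveJunctions i) ≤ (i + 1) * #T.junctions := by
  classical
  exact (card_biUnion_le_card_mul _ _ _ fun _ _ => card_image_le).trans_eq (by rw [card_range])

variable (T) in
open Classical in
/-- The core vertices at distance more than `N` from all junctions: around them the core is a
path. -/
noncomputable def remote (N : ℕ) : Finset V :=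
  T.core \ (T.belowJunctions N ∪ T.aboveJunctions N)

lemma card_core_le (N : ℕ) : #T.core ≤ #(T.remote N) + 2 * (N + 1) * #T.junctions := by
  classical
  have := card_belowJunctions_le (T := T) N
  have := card_aboveJunctions_le (T := T) N
  have := card_union_le (T.belowJunctions N) (T.aboveJunctions N)
  have := le_card_sdiff (T.belowJunctions N ∪ T.aboveJunctions N) T.core
  rw [remote, mul_assoc]
  omega

lemma mem_core_of_mem_remote (hv : v ∈ T.remote N) : v ∈ T.core := by
  classical exact (Finset.mem_sdiff.1 hv).1

lemma iterate_notMem_junctions (hv : v ∈ T.remote N) (hi : i ≤ N) :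
    T.par^[i] v ∉ T.junctions := by
  classical
  exact fun h => (Finset.mem_sdiff.1 hv).2 (mem_union_left _
    (mem_filter.2 ⟨mem_core_of_mem_remote hv, i, hi, h⟩))

lemma notMem_junctions_of_iterate_mem_remote (hx : T.par^[i] x ∈ T.remote N) (hi : i ≤ N) :
    x ∉ T.junctions := by
  classical
  exact fun h => (Finset.mem_sdiff.1 hx).2 (mem_union_right _
    (mem_biUnion.2 ⟨i, mem_range.2 (by omega), mem_image_of_mem _ h⟩))

lemma eq_of_iterate_eq_of_mem_remote (hv : v ∈ T.remote N) (hi : i ≤ N) (hx : x ∈ T.core)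
    (hy : y ∈ T.core) (hxv : T.par^[i] x = v) (hyv : T.par^[i] y = v) : x = y := by
  induction i generalizing x y with
  | zero => exact hxv.trans hyv.symm
  | succ i ih =>
    rw [Function.iterate_succ_apply] at hxv hyv
    have hpar := ih (by omega) (par_mem_core hx) (par_mem_core hy) hxv hyv
    by_contra hne
    exact notMem_junctions_of_iterate_mem_remote (hxv ▸ hv) (by omega)
      (par_mem_junctions hx hy hne hpar)

variable (T) in
open Classical in
/-- The ancestors and descendants of `v` in the core, up to generation `N`. -/
noncomputable def kin (N : ℕ) (v : V) : Finset V :=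
  (range (N + 1)).biUnion fun i => {T.par^[i] v} ∪ {y ∈ T.core | T.par^[i] y = v}

lemma mem_kin_iff (hv : v ∈ T.core) :
    y ∈ T.kin N v ↔ y ∈ T.core ∧ ∃ i ≤ N, y = T.par^[i] v ∨ T.par^[i] y = v := by
  classical
  simp only [kin, mem_biUnion, mem_range, Nat.lt_succ_iff, mem_union, mem_singleton, mem_filter]
  constructor
  · rintro ⟨i, hi, rfl | ⟨hy, h⟩⟩
    · exact ⟨iterate_par_mem_core hv i, i, hi, Or.inl rfl⟩
    · exact ⟨hy, i, hi, Or.inr h⟩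
  · rintro ⟨hy, i, hi, h⟩
    exact ⟨i, hi, h.imp_right fun h => ⟨hy, h⟩⟩

lemma card_kin_le (hv : v ∈ T.remote N) : #(T.kin N v) ≤ (N + 1) * 2 := by
  classical
  rw [← card_range (N + 1)]
  refine card_biUnion_le_card_mul _ _ _ fun i hi => ?_
  have huniq : #{y ∈ T.core | T.par^[i] y = v} ≤ 1 := card_le_one.2 fun x hx y hy => by
    rw [mem_filter] at hx hy
    exact eq_of_iterate_eq_of_mem_remote hv (mem_range_succ_iff.1 hi) hx.1 hy.1 hx.2 hy.2
  grw [card_union_le, card_singleton, huniq]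

lemma mem_kin_succ_of_adj (hv : v ∈ T.remote N) (hi : i ≤ N) (hx : x ∈ T.kin i v)
    (hy : y ∈ T.core) (h : H.Adj x y) : y ∈ T.kin (i + 1) v := by
  have hvcore := mem_core_of_mem_remote hv
  rw [mem_kin_iff hvcore] at hx ⊢
  obtain ⟨hxcore, j, hj, hx⟩ := hx
  refine ⟨hy, ?_⟩
  have hxjunc : x ∉ T.junctions := by
    obtain rfl | rfl := hx
    · exact iterate_notMem_junctions hv (hj.trans hi)
    · exact notMem_junctions_of_iterate_mem_remote hv (hj.trans hi)
  obtain rfl | rfl | ⟨hxports, -⟩ := T.edge h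
  · obtain rfl | rfl := hx
    · exact ⟨j + 1, by omega, Or.inl (Function.iterate_succ_apply' _ _ _).symm⟩
    · cases j with
      | zero => exact ⟨1, by omega, Or.inl rfl⟩
      | succ j => exact ⟨j, by omega, Or.inr rfl⟩
  · obtain hx | rfl := hx
    · cases j with
      | zero => exact ⟨1, by omega, Or.inr hx⟩
      | succ j =>
        rw [Function.iterate_succ_apply'] at hx
        refine ⟨j, by omega, Or.inl (by_contra fun hne => hxjunc ?_)⟩
        exact par_mem_junctions hy (iterate_par_mem_core hvcore j) hne hx
    · exact ⟨j + 1, by omega, Or.inr rfl⟩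
  · exact absurd (ports_subset_junctions hxports) hxjunc

lemma top_mem_kin (hv : v ∈ T.remote N) (w : H.Walk y v) (hw : w.length ≤ N) :
    T.pendantForest.top y ∈ T.kin w.length v := by
  have hvcore := mem_core_of_mem_remote hv
  induction w with
  | nil =>
    rw [PendantForest.top_of_mem hvcore, mem_kin_iff hvcore]
    exact ⟨hvcore, 0, le_rfl, Or.inl rfl⟩
  | @cons x y v h w ih =>
    rw [SimpleGraph.Walk.length_cons] at hw ⊢
    have hy := ih hv (by omega) hvcore
    by_cases htop : T.pendantForest.top x = T.pendantForest.top y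
    · rw [htop, mem_kin_iff hvcore]
      rw [mem_kin_iff hvcore] at hy
      exact hy.imp_right fun ⟨i, hi, hy⟩ => ⟨i, by omega, hy⟩
    · obtain ⟨hxcore, hycore⟩ := PendantForest.mem_core_of_adj h htop
      rw [PendantForest.top_of_mem hycore] at hy
      rw [PendantForest.top_of_mem hxcore]
      exact mem_kin_succ_of_adj hv (by omega) hy hxcore h.symm

lemma mem_kin_of_hasPath (hv : v ∈ T.remote N) (hy : y ∈ T.core) {L : ℕ} (hL : L ≤ N)
    (h : HasPath H L v y) : y ∈ T.kin N v := by
  have hvcore := mem_core_of_mem_remote hv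
  obtain ⟨w, -, rfl⟩ := h.symm
  have hkin := top_mem_kin hv w hL
  rw [PendantForest.top_of_mem hy, mem_kin_iff hvcore] at hkin
  rw [mem_kin_iff hvcore]
  exact hkin.imp_right fun ⟨i, hi, h⟩ => ⟨i, hi.trans hL, h⟩

lemma card_remote_le {s : ℕ} (hG : NoBipartiteHole G s) (hN : 1 ≤ N)
    (hsat : JoinsEdgesByPaths G H N) : #(T.remote N) ≤ (2 * N + 4) * s := by
  classical
  by_contra! hcon
  obtain ⟨A, hA, hAcard⟩ := exists_subset_card_eq (s := T.remote N) (n := s) (by nlinarith)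
  set K := A ∪ A.biUnion (T.kin N)
  have hK : #K ≤ s + s * ((N + 1) * 2) := by
    grw [card_union_le, hAcard, ← hAcard]
    gcongr
    exact card_biUnion_le_card_mul _ _ _ fun a ha => card_kin_le (hA ha)
  have hcard := le_card_sdiff K (T.remote N)
  have hring : (2 * N + 4) * s = s + s * ((N + 1) * 2) + s := by ring
  obtain ⟨a, ha, b, hb, hab⟩ := hG A (T.remote N \ K)
    (disjoint_sdiff.mono_left subset_union_left) hAcard.ge (by omega)
  rw [Finset.mem_sdiff] at hb
  refine hb.2 (mem_union_right _ (mem_biUnion.2 ⟨a, ha, ?_⟩))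
  have hbcore := mem_core_of_mem_remote hb.1
  obtain h | h := hsat hab
  · exact mem_kin_of_hasPath (hA ha) hbcore hN (hasPath_one h)
  · exact mem_kin_of_hasPath (hA ha) hbcore le_rfl h

end PortedForest

lemma IsSaturatedIn.card_le {V : Type*} [Fintype V] {G H : SimpleGraph V} {s m : ℕ}
    (hH : IsSaturatedIn G H (cycGraph m)) (hconn : G.Connected) (hG : NoBipartiteHole G s)
    (hs : 1 ≤ s) (hm : 5 ≤ m) :
    Fintype.card V + 16 * s * m * (2 * Fintype.card V) ≤
      16 * s * m * (2 * H.edgeSet.ncard + 3) + 4 * s * ((2 * m + 2) * s) +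
        (4 * s * s + 6 * s) := by
  have hsat := hH.joinsEdgesByPaths (by omega)
  obtain ⟨T, hT⟩ := exists_portedForest_of_connected (hsat.connected hconn)
  have hV := T.pendantForest.card_le_mul_card_core hG hs (by omega) hsat
  have hcore := T.card_core_le (m - 1)
  have hremote := T.card_remote_le hG (by omega) hsat
  have hjunctions := T.card_junctions_le
  rw [show m - 1 + 1 = m by omega] at hcore
  rw [show 2 * (m - 1) + 4 = 2 * m + 2 by omega] at hremote
  have hcore' : T.core.card ≤ (2 * m + 2) * s + 2 * m * (2 * T.ports.card) := by
    grw [hcore, hremote, hjunctions]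
  have hcore_mul := Nat.mul_le_mul_left (4 * s) hcore'
  have hT_mul := Nat.mul_le_mul_left (16 * s * m) hT
  have hV' : Fintype.card V ≤ 4 * s * T.core.card + (4 * s * s + 6 * s) := hV
  nlinarith

/-! ### The upper bound: windmills with pendant vertices -/

open Classical in
/-- Of any two disjoint vertex sets of size at least `s`, the first has a vertex adjacent to at
least the proportion `β` of the second. -/
def JoinsDensely {V : Type*} (G : SimpleGraph V) (β : ℝ) (s : ℕ) : Prop :=
  ∀ A B : Finset V, Disjoint A B → s ≤ A.card → s ≤ B.card →
    ∃ x ∈ A, β * B.card ≤ (B.filter (G.Adj x)).card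

open Classical in
/-- Any two vertices have at least `β * card V` common neighbours. -/
def MinCodegree {V : Type*} [Fintype V] (G : SimpleGraph V) (β : ℝ) : Prop :=
  ∀ ⦃x y : V⦄, x ≠ y →
    β * Fintype.card V ≤ (Finset.univ.filter fun w => G.Adj x w ∧ G.Adj y w).card

section Density

variable {V : Type*} {G : SimpleGraph V} {β : ℝ} {s : ℕ}

lemma JoinsDensely.noBipartiteHole (h : JoinsDensely G β s) (hβ : 0 < β) (hs : 1 ≤ s) :
    NoBipartiteHole G s := by
  classical
  intro A B hAB hA hB
  obtain ⟨x, hx, hdense⟩ := h A B hAB hA hB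
  have hpos : (0 : ℝ) < B.card := by exact_mod_cast hs.trans hB
  have hcard : (0 : ℝ) < (B.filter (G.Adj x)).card := (mul_pos hβ hpos).trans_le hdense
  obtain ⟨y, hy⟩ := Finset.card_pos.1 (Nat.cast_pos.1 hcard)
  exact ⟨x, hx, y, (Finset.mem_filter.1 hy).1, (Finset.mem_filter.1 hy).2⟩

lemma MinCodegree.exists_common_neighbor [Fintype V] (h : MinCodegree G β) (hβ : 0 < β) {x y : V}
    (hxy : x ≠ y) : ∃ w, G.Adj x w ∧ G.Adj y w := by
  classical
  have hpos : (0 : ℝ) < Fintype.card V := by exact_mod_cast Fintype.card_pos_iff.2 ⟨x⟩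
  obtain ⟨w, hw⟩ := Finset.card_pos.1 (Nat.cast_pos.1 ((mul_pos hβ hpos).trans_le (h hxy)))
  exact ⟨w, (Finset.mem_filter.1 hw).2⟩

lemma MinCodegree.connected [Fintype V] [Nonempty V] (h : MinCodegree G β) (hβ : 0 < β) :
    G.Connected := by
  refine ⟨fun x y => ?_⟩
  obtain rfl | hxy := eq_or_ne x y
  · rfl
  · obtain ⟨w, hxw, hyw⟩ := h.exists_common_neighbor hβ hxy
    exact hxw.reachable.trans hyw.symm.reachable

lemma JoinsDensely.exists_adj_subset (h : JoinsDensely G β s) (hβ : 0 ≤ β) {A : Finset V}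
    (hA : 2 * s ≤ A.card) :
    ∃ x ∈ A, ∃ N ⊆ A, (∀ y ∈ N, G.Adj x y) ∧ β / 2 * A.card ≤ N.card := by
  classical
  obtain ⟨S, hSA, hS⟩ := Finset.exists_subset_card_eq (show s ≤ A.card by omega)
  have hrest : (A \ S).card = A.card - s := by rw [Finset.card_sdiff_of_subset hSA, hS]
  obtain ⟨x, hx, hdense⟩ := h S (A \ S) Finset.disjoint_sdiff hS.ge (by omega)
  refine ⟨x, hSA hx, _, (Finset.filter_subset _ _).trans Finset.sdiff_subset,
    fun y hy => (Finset.mem_filter.1 hy).2, le_trans ?_ hdense⟩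
  have hhalf : (A.card : ℝ) / 2 ≤ (A \ S).card := by
    rw [hrest, Nat.cast_sub (by omega)]
    have : (2 * s : ℝ) ≤ A.card := by exact_mod_cast hA
    linarith
  calc β / 2 * A.card = β * (A.card / 2) := by ring
    _ ≤ β * (A \ S).card := by gcongr

lemma JoinsDensely.exists_isNClique (h : JoinsDensely G β s) (hβ : 0 ≤ β) (hβ1 : β ≤ 1) (k : ℕ)
    {A : Finset V} (hA : 2 * s ≤ (β / 2) ^ k * A.card) : ∃ K ⊆ A, G.IsNClique k K := by
  classical
  induction k generalizing A with
  | zero => exact ⟨∅, Finset.empty_subset A, SimpleGraph.isNClique_empty.2 rfl⟩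
  | succ k ih =>
    have hpow : (β / 2) ^ (k + 1) ≤ 1 := pow_le_one₀ (by positivity) (by linarith)
    have hcard : 2 * s ≤ A.card := by
      exact_mod_cast hA.trans (mul_le_of_le_one_left (Nat.cast_nonneg _) hpow)
    obtain ⟨x, hxA, N, hNA, hxN, hN⟩ := h.exists_adj_subset hβ hcard
    obtain ⟨K, hKN, hK⟩ := ih (A := N) <| calc
      (2 * s : ℝ) ≤ (β / 2) ^ k * (β / 2 * A.card) := by rwa [← mul_assoc, ← pow_succ]
      _ ≤ (β / 2) ^ k * N.card := by gcongr
    exact ⟨insert x K, Finset.insert_subset hxA (hKN.trans hNA),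
      hK.insert fun y hy => hxN y (hKN hy)⟩

lemma exists_isNClique_common_neighbors [Fintype V] {k : ℕ} (hG : JoinsDensely G β s)
    (hdeg : MinCodegree G β) (hβ : 0 ≤ β) (hβ1 : β ≤ 1)
    (hs : 2 * s ≤ (β / 2) ^ k * (β * Fintype.card V / 2)) {x y : V} (hxy : x ≠ y)
    {U : Finset V} (hU : U.card ≤ β * Fintype.card V / 2) :
    ∃ K, G.IsNClique k K ∧ Disjoint K U ∧ ∀ z ∈ K, G.Adj x z ∧ G.Adj y z := by
  classical
  set D := Finset.univ.filter fun w => G.Adj x w ∧ G.Adj y w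
  have hD : β * Fintype.card V ≤ D.card := by convert hdeg hxy
  have hDU : β * Fintype.card V / 2 ≤ (D \ U).card := by
    have : (D.card : ℝ) ≤ (D \ U).card + U.card := by
      exact_mod_cast Nat.sub_le_iff_le_add.1 (Finset.le_card_sdiff U D)
    linarith
  obtain ⟨K, hKD, hK⟩ := hG.exists_isNClique hβ hβ1 k (A := D \ U) (hs.trans (by gcongr))
  exact ⟨K, hK, Finset.disjoint_of_subset_left hKD Finset.sdiff_disjoint,
    fun z hz => (Finset.mem_filter.1 (Finset.mem_sdiff.1 (hKD hz)).1).2⟩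

end Density

/-- `H` contains a path of length `L` from `x` to `y` with all vertices in `Q`. -/
def HasPathIn {V : Type*} (H : SimpleGraph V) (Q : Set V) (L : ℕ) (x y : V) : Prop :=
  ∃ w : H.Walk x y, w.IsPath ∧ w.length = L ∧ ∀ v ∈ w.support, v ∈ Q

section PathIn

variable {V : Type*} {H : SimpleGraph V} {Q R : Set V} {L : ℕ} {x y z : V}

lemma HasPathIn.hasPath (h : HasPathIn H Q L x y) : HasPath H L x y :=
  let ⟨w, hw, hL, _⟩ := h
  ⟨w, hw, hL⟩

lemma HasPathIn.symm (h : HasPathIn H Q L x y) : HasPathIn H Q L y x :=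
  let ⟨w, hw, hL, hQ⟩ := h
  ⟨w.reverse, hw.reverse, by rwa [w.length_reverse], by simpa using hQ⟩

lemma HasPathIn.mono (h : HasPathIn H Q L x y) (hQR : Q ⊆ R) : HasPathIn H R L x y :=
  let ⟨w, hw, hL, hQ⟩ := h
  ⟨w, hw, hL, fun v hv => hQR (hQ v hv)⟩

lemma HasPathIn.cons (h : HasPathIn H Q L y z) (hadj : H.Adj x y) (hx : x ∉ Q) :
    HasPathIn H (insert x Q) (L + 1) x z := by
  obtain ⟨w, hw, hL, hQ⟩ := h
  refine ⟨.cons hadj w, hw.cons fun hxw => hx (hQ x hxw), by rw [SimpleGraph.Walk.length_cons, hL],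
    fun v hv => ?_⟩
  rw [SimpleGraph.Walk.support_cons, List.mem_cons] at hv
  exact hv.imp_right (hQ v)

lemma HasPathIn.append {L' : ℕ} (h : HasPathIn H Q L x y) (h' : HasPathIn H R L' y z)
    (hQR : Q ∩ R ⊆ {y}) : HasPathIn H (Q ∪ R) (L + L') x z := by
  obtain ⟨w, hw, hL, hQ⟩ := h
  obtain ⟨w', hw', hL', hR⟩ := h'
  refine ⟨w.append w', ?_, by rw [SimpleGraph.Walk.length_append, hL, hL'], fun v hv => ?_⟩
  · have hnodup := hw'.support_nodup
    rw [← w'.cons_tail_support, List.nodup_cons] at hnodup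
    rw [SimpleGraph.Walk.isPath_def, SimpleGraph.Walk.support_append, List.nodup_append']
    refine ⟨hw.support_nodup, hnodup.2, fun v hv hv' => hnodup.1 ?_⟩
    obtain rfl : v = y := hQR ⟨hQ v hv, hR v (List.mem_of_mem_tail hv')⟩
    exact hv'
  · exact ((SimpleGraph.Walk.mem_support_append_iff w w').1 hv).imp (hQ v) (hR v)

lemma hasPathIn_pair (h : H.Adj x y) : HasPathIn H {x, y} 1 x y :=
  ⟨h.toWalk, .of_adj h, rfl, by simp⟩

lemma hasPathIn_of_isClique {Q : Finset V} (hQ : H.IsClique Q) (hx : x ∈ Q) (hy : y ∈ Q)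
    (hxy : x ≠ y) (hL : 1 ≤ L) (hcard : L + 1 ≤ Q.card) : HasPathIn H Q L x y := by
  classical
  induction L, hL using Nat.le_induction generalizing Q x with
  | base => exact (hasPathIn_pair (hQ hx hy hxy)).mono (by simp [Set.insert_subset_iff, hx, hy])
  | succ L _ ih =>
    have hpos : 0 < ((Q.erase x).erase y).card := by
      rw [Finset.card_erase_of_mem (Finset.mem_erase.2 ⟨hxy.symm, hy⟩),
        Finset.card_erase_of_mem hx]
      omega
    obtain ⟨z, hz⟩ := Finset.card_pos.1 hpos
    obtain ⟨hzy, hzx, hzQ⟩ : z ≠ y ∧ z ≠ x ∧ z ∈ Q := by simpa only [Finset.mem_erase] using hz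
    have hpath : HasPathIn H (Q.erase x) L z y :=
      ih (hQ.subset (Finset.erase_subset x Q)) (Finset.mem_erase.2 ⟨hzx, hzQ⟩)
        (Finset.mem_erase.2 ⟨hxy.symm, hy⟩) hzy (by rw [Finset.card_erase_of_mem hx]; omega)
    refine (hpath.cons (hQ hx hzQ hzx.symm) (by simp)).mono ?_
    rw [← Finset.coe_insert, Finset.insert_erase hx]

end PathIn

/-- The sets in `F` are the blades of a windmill in `G` with hub `h`: pairwise disjoint `k`-cliques
in the neighbourhood of `h`. -/
structure IsWindmill {V : Type*} (G : SimpleGraph V) (h : V) (k : ℕ) (F : Finset (Finset V)) :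
    Prop where
  isNClique : ∀ B ∈ F, G.IsNClique k B
  adj_hub : ∀ B ∈ F, ∀ x ∈ B, G.Adj h x
  pairwiseDisjoint : (F : Set (Finset V)).PairwiseDisjoint id

section Windmill

variable {V : Type*} {G : SimpleGraph V} {β : ℝ} {s k : ℕ} {h : V} {F : Finset (Finset V)}

lemma isWindmill_empty : IsWindmill G h k ∅ := ⟨by simp, by simp, by simp⟩

lemma IsWindmill.card_biUnion [DecidableEq V] (hF : IsWindmill G h k F) :
    (F.biUnion id).card = F.card * k := by
  rw [Finset.card_biUnion hF.pairwiseDisjoint]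
  exact Finset.sum_const_nat fun B hB => (hF.isNClique B hB).card_eq

lemma IsWindmill.insert_blade [DecidableEq V] (hF : IsWindmill G h k F) {K : Finset V}
    (hK : G.IsNClique k K) (hhK : ∀ x ∈ K, G.Adj h x) (hdisj : Disjoint K (F.biUnion id)) :
    IsWindmill G h k (insert K F) where
  isNClique := (Finset.forall_mem_insert ..).2 ⟨hK, hF.isNClique⟩
  adj_hub := (Finset.forall_mem_insert ..).2 ⟨hhK, hF.adj_hub⟩
  pairwiseDisjoint := by
    rw [Finset.coe_insert]
    exact hF.pairwiseDisjoint.insert fun B hB _ =>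
      hdisj.mono_right (Finset.subset_biUnion_of_mem id hB)

variable [Fintype V]

lemma IsWindmill.exists_superset [DecidableEq V] (hF : IsWindmill G h k F) (hG : JoinsDensely G β s)
    (hdeg : MinCodegree G β) (hβ : 0 ≤ β) (hβ1 : β ≤ 1)
    (hs : 2 * s ≤ (β / 2) ^ k * (β * Fintype.card V / 2)) (hk : 1 ≤ k) {Z : Finset V}
    (hZ : h ∉ Z) (hcard : ((F.card + Z.card) * k : ℕ) ≤ β * Fintype.card V / 2) :
    ∃ F' ⊇ F, IsWindmill G h k F' ∧ F'.card = F.card + Z.card ∧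
      ∀ z ∈ Z, ∃ u ∈ F'.biUnion id, G.Adj z u := by
  induction Z using Finset.induction_on with
  | empty => exact ⟨F, le_rfl, hF, rfl, by simp⟩
  | insert z Z hzZ ih =>
    rw [Finset.mem_insert, not_or] at hZ
    rw [Finset.card_insert_of_notMem hzZ, ← add_assoc] at hcard ⊢
    have hcard' : ((F.card + Z.card) * k : ℕ) ≤ β * Fintype.card V / 2 :=
      le_trans (Nat.cast_le.2 (Nat.mul_le_mul_right k (Nat.le_succ _))) hcard
    obtain ⟨F', hFF', hF', hF'card, hdom⟩ := ih hZ.2 hcard'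
    obtain ⟨K, hK, hKF', hadj⟩ := exists_isNClique_common_neighbors hG hdeg hβ hβ1 hs
      (Ne.symm hZ.1) (U := F'.biUnion id) (by rwa [hF'.card_biUnion, hF'card])
    obtain ⟨u, hu⟩ := Finset.card_pos.1 (hK.card_eq ▸ hk)
    have hKmem : K ∉ F' := fun hKmem =>
      Finset.disjoint_left.1 hKF' hu (Finset.mem_biUnion.2 ⟨K, hKmem, hu⟩)
    refine ⟨insert K F', hFF'.trans (Finset.subset_insert K F'),
      hF'.insert_blade hK (fun x hx => (hadj x hx).2) hKF',
      by rw [Finset.card_insert_of_notMem hKmem, hF'card], (Finset.forall_mem_insert ..).2 ⟨?_, ?_⟩⟩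
    · exact ⟨u, by simpa [Finset.biUnion_insert] using .inl hu, (hadj u hu).1⟩
    · intro x hx
      obtain ⟨v, hv, hxv⟩ := hdom x hx
      exact ⟨v, by rw [Finset.biUnion_insert]; exact Finset.mem_union_right _ hv, hxv⟩

lemma exists_isWindmill_card_eq {N : ℕ} (hG : JoinsDensely G β s) (hdeg : MinCodegree G β)
    (hβ : 0 ≤ β) (hβ1 : β ≤ 1) (hs : 2 * s ≤ (β / 2) ^ k * (β * Fintype.card V / 2)) (hk : 1 ≤ k)
    (hN : (N * k : ℕ) ≤ β * Fintype.card V / 2) (h : V) : ∃ F, IsWindmill G h k F ∧ F.card = N := by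
  classical
  have hNV : N < Fintype.card V := by
    have hpos : (0 : ℝ) < Fintype.card V := by exact_mod_cast Fintype.card_pos_iff.2 ⟨h⟩
    have hNk : (N : ℝ) ≤ (N * k : ℕ) := by exact_mod_cast Nat.le_mul_of_pos_right N hk
    exact_mod_cast (show (N : ℝ) < Fintype.card V by nlinarith)
  obtain ⟨Z, hZ, hZcard⟩ := Finset.exists_subset_card_eq (s := Finset.univ.erase h) (n := N)
    (by rw [Finset.card_erase_of_mem (Finset.mem_univ h), Finset.card_univ]; omega)
  obtain ⟨F, -, hF, hFcard, -⟩ := (isWindmill_empty (G := G) (h := h)).exists_superset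
    hG hdeg hβ hβ1 hs hk (fun hh => Finset.ne_of_mem_erase (hZ hh) rfl)
    (by rwa [Finset.card_empty, zero_add, hZcard])
  exact ⟨F, hF, by rw [hFcard, Finset.card_empty, zero_add, hZcard]⟩

lemma exists_dominating_isWindmill [DecidableEq V] {N : ℕ} (hG : JoinsDensely G β s)
    (hdeg : MinCodegree G β) (hβ : 0 < β) (hβ1 : β ≤ 1) (hs1 : 1 ≤ s)
    (hs : 2 * s ≤ (β / 2) ^ k * (β * Fintype.card V / 2)) (hk : 1 ≤ k) (hsN : s ≤ N * k)
    (hN : ((N + s) * k : ℕ) ≤ β * Fintype.card V / 2) (h : V) :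
    ∃ F, IsWindmill G h k F ∧ N ≤ F.card ∧ F.card ≤ N + s ∧
      ∀ x ≠ h, x ∉ F.biUnion id → ∃ u ∈ F.biUnion id, G.Adj u x := by
  classical
  obtain ⟨F₁, hF₁, rfl⟩ := exists_isWindmill_card_eq (N := N) hG hdeg hβ.le hβ1 hs hk
    (le_trans (Nat.cast_le.2 (Nat.mul_le_mul_right k (Nat.le_add_right N s))) hN) h
  set Z := Finset.univ.filter fun x =>
    x ≠ h ∧ x ∉ F₁.biUnion id ∧ ∀ u ∈ F₁.biUnion id, ¬ G.Adj u x with hZ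
  have hZcard : Z.card ≤ s := by
    by_contra! hsZ
    obtain ⟨u, hu, x, hx, hux⟩ := hG.noBipartiteHole hβ hs1 (F₁.biUnion id) Z
      (Finset.disjoint_right.2 fun x hx => (Finset.mem_filter.1 hx).2.2.1)
      (by rwa [hF₁.card_biUnion]) hsZ.le
    exact (Finset.mem_filter.1 hx).2.2.2 u hu hux
  obtain ⟨F, hF₁F, hF, hFcard, hdom⟩ := hF₁.exists_superset hG hdeg hβ.le hβ1 hs hk (Z := Z)
    (by simp [hZ]) (le_trans (Nat.cast_le.2 (Nat.mul_le_mul_right k (by omega))) hN)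
  refine ⟨F, hF, by omega, by omega, fun x hxh hx => ?_⟩
  have hsub : F₁.biUnion id ⊆ F.biUnion id := Finset.biUnion_subset_biUnion_of_subset_left id hF₁F
  by_contra! hcon
  obtain ⟨u, hu, hxu⟩ := hdom x (Finset.mem_filter.2
    ⟨Finset.mem_univ x, hxh, fun hx' => hx (hsub hx'), fun u hu => hcon u (hsub hu)⟩)
  exact hcon u hu hxu.symm

end Windmill

/-- `c` sends each vertex of `M` to a neighbour in `B`, with independent fibres of size at
most `l`. -/
structure IsStarAssignment {V : Type*} [DecidableEq V] (G : SimpleGraph V) (M B : Finset V) (l : ℕ)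
    (c : V → V) : Prop where
  mem : ∀ x ∈ M, c x ∈ B
  adj : ∀ x ∈ M, G.Adj (c x) x
  isIndepSet : ∀ v, G.IsIndepSet (M.filter (c · = v))
  card_le : ∀ v, (M.filter (c · = v)).card ≤ l

section StarAssignment

variable {V : Type*} [DecidableEq V] {G : SimpleGraph V} {M L B I : Finset V} {β : ℝ} {s l t : ℕ}
  {c : V → V} {v : V}

lemma isStarAssignment_empty : IsStarAssignment G ∅ B l c :=
  ⟨by simp, by simp, by simp [SimpleGraph.IsIndepSet], by simp⟩

lemma IsStarAssignment.union (hc : IsStarAssignment G M (B.erase v) l c) (hv : v ∈ B)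
    (hI : G.IsNIndepSet l I) (hvI : ∀ x ∈ I, G.Adj v x) :
    IsStarAssignment G (M ∪ I) B l fun x => if x ∈ I then v else c x := by
  have hfibre (w : V) : (M ∪ I).filter (fun x => (if x ∈ I then v else c x) = w) ⊆
      if w = v then I else M.filter (c · = w) := by
    intro x hx
    obtain ⟨hxMI, hxw⟩ := Finset.mem_filter.1 hx
    by_cases hxI : x ∈ I
    · rw [if_pos hxI] at hxw
      rwa [if_pos hxw.symm]
    · have hxM : x ∈ M := (Finset.mem_union.1 hxMI).resolve_right hxI
      rw [if_neg hxI] at hxw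
      rw [if_neg (hxw ▸ Finset.ne_of_mem_erase (hc.mem x hxM))]
      exact Finset.mem_filter.2 ⟨hxM, hxw⟩
  have hresidual {x : V} (hx : x ∈ M ∪ I) (hxI : x ∉ I) : x ∈ M :=
    (Finset.mem_union.1 hx).resolve_right hxI
  refine ⟨fun x hx => ?_, fun x hx => ?_, fun w => ?_, fun w => ?_⟩
  · split_ifs with hxI
    exacts [hv, Finset.mem_of_mem_erase (hc.mem x (hresidual hx hxI))]
  · split_ifs with hxI
    exacts [hvI x hxI, hc.adj x (hresidual hx hxI)]
  · refine Set.Pairwise.mono (Finset.coe_subset.2 (hfibre w)) ?_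
    split_ifs
    exacts [hI.isIndepSet, hc.isIndepSet w]
  · refine (Finset.card_le_card (hfibre w)).trans ?_
    split_ifs
    exacts [hI.card_eq.le, hc.card_le w]

lemma JoinsDensely.exists_isStarAssignment (hG : JoinsDensely G β s) (hβ : 0 ≤ β)
    (hindep : ∀ A : Finset V, β * t ≤ A.card → ∃ I ⊆ A, G.IsNIndepSet l I) (hst : s ≤ t)
    (hLB : Disjoint L B) (hcard : L.card + l * s ≤ l * B.card) :
    ∃ M ⊆ L, (L \ M).card ≤ t ∧ ∃ c, IsStarAssignment G M B l c := by
  classical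
  induction L using Finset.strongInduction generalizing B with | H L ih => ?_
  obtain hLt | hLt := le_or_gt L.card t
  · exact ⟨∅, Finset.empty_subset L, by rwa [Finset.sdiff_empty], id, isStarAssignment_empty⟩
  have hsB : s < B.card := lt_of_mul_lt_mul_left' (a := l) (by omega)
  have hl : 0 < l := Nat.pos_of_ne_zero (by rintro rfl; omega)
  obtain ⟨v, hv, hvL⟩ := hG B L hLB.symm hsB.le (by omega)
  obtain ⟨I, hIL, hI⟩ := hindep (L.filter (G.Adj v)) ((by gcongr : β * t ≤ β * L.card).trans hvL)
  replace hvI (x) (hx : x ∈ I) : x ∈ L ∧ G.Adj v x := Finset.mem_filter.1 (hIL hx)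
  replace hIL : I ⊆ L := fun x hx => (hvI x hx).1
  have hIne : I.Nonempty := Finset.card_pos.1 (by rwa [hI.card_eq])
  obtain ⟨M, hM, hMt, c, hc⟩ := ih (L \ I) (Finset.sdiff_ssubset hIL hIne) (B := B.erase v)
    (Finset.disjoint_of_subset_left Finset.sdiff_subset
      (Finset.disjoint_of_subset_right (Finset.erase_subset v B) hLB)) (by
    have hle := Finset.card_le_card hIL
    rw [Finset.card_erase_of_mem hv, Finset.card_sdiff_of_subset hIL, hI.card_eq, Nat.mul_sub,
      mul_one]
    rw [hI.card_eq] at hle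
    omega)
  refine ⟨M ∪ I, Finset.union_subset (hM.trans Finset.sdiff_subset) hIL, ?_, _,
    hc.union hv hI fun x hx => (hvI x hx).2⟩
  rwa [Finset.union_comm, ← Finset.sup_eq_union, ← sdiff_sdiff_left]

open Finset in
lemma IsStarAssignment.exists_extension (hc : IsStarAssignment G M B l c)
    (hdom : ∀ x ∈ L, ∃ u ∈ B, G.Adj u x) :
    ∃ d : V → V, (∀ x ∈ L, d x ∈ B ∧ G.Adj (d x) x) ∧ ∃ bad : Finset (Sym2 V),
      #bad ≤ #(L \ M) * (#(L \ M) + l) ∧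
      ∀ x ∈ L, ∀ y ∈ L, d x = d y → G.Adj x y → s(x, y) ∈ bad := by
  choose! u huB hu using hdom
  set d : V → V := fun x => if x ∈ M then c x else u x with hd
  set bad : Finset (Sym2 V) := (L \ M).biUnion fun x =>
    ((L \ M) ∪ M.filter (c · = d x)).image (s(x, ·))
  have mem_bad {x y : V} (hx : x ∈ L) (hxM : x ∉ M) (hy : y ∈ L) (hxy : d x = d y) :
      s(x, y) ∈ bad := by
    refine mem_biUnion.2 ⟨x, Finset.mem_sdiff.2 ⟨hx, hxM⟩, mem_image_of_mem _ (mem_union.2 ?_)⟩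
    by_cases hyM : y ∈ M
    · exact .inr (mem_filter.2 ⟨hyM, by rw [hxy]; exact (if_pos hyM).symm⟩)
    · exact .inl (Finset.mem_sdiff.2 ⟨hy, hyM⟩)
  refine ⟨d, fun x hx => ?_, bad, ?_, fun x hx y hy hxy hadj => ?_⟩
  · simp only [hd]
    split_ifs with hxM
    exacts [⟨hc.mem x hxM, hc.adj x hxM⟩, ⟨huB x hx, hu x hx⟩]
  · exact card_biUnion_le_card_mul _ _ _ fun x _ =>
      card_image_le.trans ((card_union_le _ _).trans (Nat.add_le_add_left (hc.card_le _) _))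
  · by_cases hxM : x ∈ M
    · by_cases hyM : y ∈ M
      · simp only [hd, if_pos hxM, if_pos hyM] at hxy
        exact absurd hadj (hc.isIndepSet (c y) (mem_filter.2 ⟨hxM, hxy⟩)
          (mem_filter.2 ⟨hyM, rfl⟩) hadj.ne)
      · rw [Sym2.eq_swap]
        exact mem_bad hy hyM hx hxy.symm
    · exact mem_bad hx hxM hy hxy

end StarAssignment

/-- The hub and all blades of a windmill. -/
def windmillCore {V : Type*} [DecidableEq V] (h : V) (F : Finset (Finset V)) : Finset V :=
  insert h (F.biUnion id)

/-- The windmill with hub `h` and blades `F`, in which each remaining vertex `x` is a pendant vertex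
attached to `c x`. -/
def pendantWindmill {V : Type*} [DecidableEq V] (h : V) (F : Finset (Finset V)) (c : V → V) :
    SimpleGraph V :=
  SimpleGraph.fromRel fun x y =>
    (∃ B ∈ F, x ∈ insert h B ∧ y ∈ insert h B) ∨ (x ∉ windmillCore h F ∧ y = c x)

section PendantWindmill

variable {V : Type*} [DecidableEq V] {G : SimpleGraph V} {h : V} {k L : ℕ} {F : Finset (Finset V)}
  {B : Finset V} {c : V → V} {x y : V}

lemma insert_subset_windmillCore (hB : B ∈ F) : insert h B ⊆ windmillCore h F :=
  Finset.insert_subset_insert h (Finset.subset_biUnion_of_mem id hB)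

lemma exists_blade_of_mem_windmillCore (hx : x ∈ windmillCore h F) (hxh : x ≠ h) :
    ∃ B ∈ F, x ∈ B :=
  Finset.mem_biUnion.1 ((Finset.mem_insert.1 hx).resolve_left hxh)

lemma pendantWindmill_adj_cases (hxy : (pendantWindmill h F c).Adj x y) :
    (∃ B ∈ F, x ∈ insert h B ∧ y ∈ insert h B) ∨ (x ∉ windmillCore h F ∧ y = c x) ∨
      (y ∉ windmillCore h F ∧ x = c y) := by
  obtain ⟨-, (hB | hx) | (⟨B, hB, hy, hx⟩ | hy)⟩ := (SimpleGraph.fromRel_adj ..).1 hxy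
  exacts [.inl hB, .inr (.inl hx), .inl ⟨B, hB, hx, hy⟩, .inr (.inr hy)]

lemma isClique_pendantWindmill (hB : B ∈ F) :
    (pendantWindmill h F c).IsClique (insert h B : Finset V) := fun _ hx _ hy hxy =>
  (SimpleGraph.fromRel_adj ..).2 ⟨hxy, .inl (.inl ⟨B, hB, hx, hy⟩)⟩

lemma pendantWindmill_adj_pendant (hc : c x ∈ windmillCore h F) (hx : x ∉ windmillCore h F) :
    (pendantWindmill h F c).Adj x (c x) :=
  (SimpleGraph.fromRel_adj ..).2 ⟨fun hxc => hx (hxc ▸ hc), .inl (.inr ⟨hx, rfl⟩)⟩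

lemma IsWindmill.card_insert (hF : IsWindmill G h k F) (hB : B ∈ F) :
    (insert h B).card = k + 1 := by
  rw [Finset.card_insert_of_notMem fun hh => (hF.adj_hub B hB h hh).ne rfl,
    (hF.isNClique B hB).card_eq]

lemma IsWindmill.pendantWindmill_le (hF : IsWindmill G h k F)
    (hc : ∀ x ∉ windmillCore h F, G.Adj (c x) x) : pendantWindmill h F c ≤ G := by
  intro x y hxy
  obtain ⟨B, hB, hx, hy⟩ | ⟨hx, rfl⟩ | ⟨hy, rfl⟩ := pendantWindmill_adj_cases hxy
  · have hclique : G.IsClique (insert h B : Finset V) := by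
      rw [Finset.coe_insert]
      exact (hF.isNClique B hB).isClique.insert fun y hy _ => hF.adj_hub B hB y hy
    exact hclique hx hy hxy.ne
  · exact (hc x hx).symm
  · exact hc y hy

lemma eq_of_pendantWindmill_adj (hc : ∀ x ∉ windmillCore h F, c x ∈ windmillCore h F)
    (hx : x ∉ windmillCore h F) (hxy : (pendantWindmill h F c).Adj x y) : y = c x := by
  obtain ⟨B, hB, hxB, -⟩ | ⟨-, hy⟩ | ⟨hy, rfl⟩ := pendantWindmill_adj_cases hxy
  exacts [absurd (insert_subset_windmillCore hB hxB) hx, hy, absurd (hc y hy) hx]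

lemma IsWindmill.mem_insert_of_adj (hF : IsWindmill G h k F) (hB : B ∈ F) (hx : x ∈ B)
    (hy : y ∈ windmillCore h F) (hxy : (pendantWindmill h F c).Adj x y) : y ∈ insert h B := by
  have hxh : x ≠ h := (hF.adj_hub B hB x hx).ne'
  obtain ⟨B', hB', hxB', hyB'⟩ | ⟨hxcore, -⟩ | ⟨hycore, -⟩ := pendantWindmill_adj_cases hxy
  · have : x ∈ B' := (Finset.mem_insert.1 hxB').resolve_left hxh
    rwa [hF.pairwiseDisjoint.elim_finset hB hB' x hx this]
  · exact absurd (insert_subset_windmillCore hB (Finset.mem_insert_of_mem hx)) hxcore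
  · exact absurd hy hycore

lemma mem_windmillCore_of_mem_cycle (hc : ∀ x ∉ windmillCore h F, c x ∈ windmillCore h F)
    {w : (pendantWindmill h F c).Walk x x} (hw : w.IsCycle) (hy : y ∈ w.support) :
    y ∈ windmillCore h F := by
  by_contra hcore
  have hcycle := hw.rotate hy
  refine hcycle.snd_ne_penultimate ?_
  rw [eq_of_pendantWindmill_adj hc hcore ((w.rotate y hy).adj_snd hcycle.not_nil),
    eq_of_pendantWindmill_adj hc hcore ((w.rotate y hy).adj_penultimate hcycle.not_nil).symm]

lemma IsWindmill.support_subset_insert (hF : IsWindmill G h k F) (hB : B ∈ F)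
    {w : (pendantWindmill h F c).Walk x y} (hw : w.IsPath) (hx : x ∈ B)
    (hcore : ∀ v ∈ w.support, v ∈ windmillCore h F) (hh : y = h ∨ h ∉ w.support) :
    ∀ v ∈ w.support, v ∈ insert h B := by
  induction w with
  | nil => simpa using .inr hx
  | @cons x z y hxz w ih =>
    replace hw := ((SimpleGraph.Walk.cons_isPath_iff hxz w).1 hw).1
    rw [SimpleGraph.Walk.support_cons] at hcore hh
    have hcore' (v) (hv : v ∈ w.support) : v ∈ windmillCore h F :=
      hcore v (List.mem_cons_of_mem x hv)
    have hz : z ∈ insert h B := hF.mem_insert_of_adj hB hx (hcore' z w.start_mem_support) hxz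
    suffices hrest : ∀ v ∈ w.support, v ∈ insert h B by
      rw [SimpleGraph.Walk.support_cons]
      exact List.forall_mem_cons.2 ⟨Finset.mem_insert_of_mem hx, hrest⟩
    obtain rfl | hzB := Finset.mem_insert.1 hz
    · obtain rfl : y = z := hh.resolve_right fun hh =>
        hh (List.mem_cons_of_mem x w.start_mem_support)
      rw [SimpleGraph.Walk.nil_iff_support_eq.1 (SimpleGraph.Walk.isPath_iff_nil.1 hw)]
      simp
    · exact ih hw hzB hcore' (hh.imp_right (mt (List.mem_cons_of_mem x)))

lemma IsWindmill.length_cycle_le (hF : IsWindmill G h k F)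
    (hc : ∀ x ∉ windmillCore h F, c x ∈ windmillCore h F)
    {w : (pendantWindmill h F c).Walk x x} (hw : w.IsCycle) : w.length ≤ k + 1 := by
  wlog hh : x = h ∨ h ∉ w.support generalizing x
  · have hmem : h ∈ w.support := not_not.1 (not_or.1 hh).2
    rw [← w.length_rotate h hmem]
    exact this (hw.rotate hmem) (.inl rfl)
  have hcore (v) (hv : v ∈ w.support) := mem_windmillCore_of_mem_cycle hc hw hv
  cases w with
  | nil => simp
  | @cons _ y _ hxy w =>
    have hpath := ((SimpleGraph.Walk.cons_isCycle_iff w hxy).1 hw).1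
    rw [SimpleGraph.Walk.support_cons, List.mem_cons, not_or] at hh
    rw [SimpleGraph.Walk.support_cons, List.forall_mem_cons] at hcore
    have hyh : y ≠ h := by
      rintro rfl
      exact hh.elim hxy.ne fun hh => hh.2 w.start_mem_support
    obtain ⟨B, hB, hyB⟩ := exists_blade_of_mem_windmillCore (hcore.2 y w.start_mem_support) hyh
    have hsub := hF.support_subset_insert hB hpath hyB hcore.2 (hh.imp_right And.right)
    calc w.length + 1 = w.support.toFinset.card := by
          rw [List.toFinset_card_of_nodup hpath.support_nodup, SimpleGraph.Walk.length_support]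
      _ ≤ (insert h B).card := Finset.card_le_card fun v hv => hsub v (List.mem_toFinset.1 hv)
      _ = k + 1 := hF.card_insert hB

lemma IsWindmill.not_containsCopy_cycGraph (hF : IsWindmill G h k F) (hk : 1 ≤ k)
    (hc : ∀ x ∉ windmillCore h F, c x ∈ windmillCore h F) :
    ¬ ContainsCopy (cycGraph (k + 2)) (pendantWindmill h F c) := by
  rw [containsCopy_cycGraph_iff (by omega)]
  rintro ⟨x, w, hw, hlen⟩
  have := hF.length_cycle_le hc hw
  omega

lemma IsWindmill.hasPathIn_core_of_ne (hF : IsWindmill G h k F) {B' : Finset V} (hB : B ∈ F)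
    (hB' : B' ∈ F) (hne : B ≠ B') (hx : x ∈ B) (hy : y ∈ B') (hL : 2 ≤ L) (hLk : L ≤ 2 * k) :
    HasPathIn (pendantWindmill h F c) (windmillCore h F) L x y := by
  have hxh := (hF.adj_hub B hB x hx).ne'
  have hyh := (hF.adj_hub B' hB' y hy).ne'
  have hto := hasPathIn_of_isClique (L := min k (L - 1)) (isClique_pendantWindmill (c := c) hB)
    (Finset.mem_insert_of_mem hx) (Finset.mem_insert_self h B) hxh (by omega)
    (by rw [hF.card_insert hB]; omega)
  have hfrom := hasPathIn_of_isClique (L := L - min k (L - 1))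
    (isClique_pendantWindmill (c := c) hB') (Finset.mem_insert_self h B')
    (Finset.mem_insert_of_mem hy) hyh.symm (by omega) (by rw [hF.card_insert hB']; omega)
  have hinter : ((insert h B : Finset V) ∩ (insert h B' : Finset V) : Set V) ⊆ {h} := by
    have hdisj : Disjoint B B' := hF.pairwiseDisjoint hB hB' hne
    rw [← Finset.coe_inter, ← Finset.insert_inter_distrib,
      Finset.disjoint_iff_inter_eq_empty.1 hdisj]
    simp
  have hpath := (hto.append hfrom hinter).mono (Set.union_subset
    (Finset.coe_subset.2 (insert_subset_windmillCore hB))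
    (Finset.coe_subset.2 (insert_subset_windmillCore hB')))
  rwa [show min k (L - 1) + (L - min k (L - 1)) = L by omega] at hpath

lemma IsWindmill.hasPathIn_core (hF : IsWindmill G h k F) (hx : x ∈ windmillCore h F)
    (hy : y ∈ windmillCore h F) (hxy : x ≠ y) (hL : 2 ≤ L)
    (hLk : L ≤ k ∨ (L = k + 1 ∧ ¬ (pendantWindmill h F c).Adj x y)) :
    HasPathIn (pendantWindmill h F c) (windmillCore h F) L x y := by
  by_cases hblade : ∃ B ∈ F, x ∈ insert h B ∧ y ∈ insert h B
  · obtain ⟨B, hB, hxB, hyB⟩ := hblade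
    have hclique := isClique_pendantWindmill (h := h) (c := c) hB
    have hLk' : L ≤ k := hLk.resolve_right fun hL => hL.2 (hclique hxB hyB hxy)
    exact (hasPathIn_of_isClique hclique hxB hyB hxy (by omega)
      (by rw [hF.card_insert hB]; omega)).mono (Finset.coe_subset.2 (insert_subset_windmillCore hB))
  have hxh : x ≠ h := by
    rintro rfl
    obtain ⟨B, hB, hyB⟩ := exists_blade_of_mem_windmillCore hy hxy.symm
    exact hblade ⟨B, hB, Finset.mem_insert_self x B, Finset.mem_insert_of_mem hyB⟩
  obtain ⟨B, hB, hxB⟩ := exists_blade_of_mem_windmillCore hx hxh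
  have hyh : y ≠ h := by
    rintro rfl
    exact hblade ⟨B, hB, Finset.mem_insert_of_mem hxB, Finset.mem_insert_self y B⟩
  obtain ⟨B', hB', hyB'⟩ := exists_blade_of_mem_windmillCore hy hyh
  refine hF.hasPathIn_core_of_ne hB hB' ?_ hxB hyB' hL (by omega)
  rintro rfl
  exact hblade ⟨B, hB, Finset.mem_insert_of_mem hxB, Finset.mem_insert_of_mem hyB'⟩

lemma IsWindmill.hasPath_of_not_adj (hF : IsWindmill G h k F) (hk : 3 ≤ k)
    (hc : ∀ x ∉ windmillCore h F, c x ∈ windmillCore h F) (hxy : x ≠ y)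
    (hadj : ¬ (pendantWindmill h F c).Adj x y)
    (hfibre : x ∉ windmillCore h F → y ∉ windmillCore h F → c x ≠ c y) :
    HasPath (pendantWindmill h F c) (k + 1) x y := by
  have pendant_core {x y : V} (hx : x ∉ windmillCore h F) (hy : y ∈ windmillCore h F)
      (hadj : ¬ (pendantWindmill h F c).Adj x y) :
      HasPath (pendantWindmill h F c) (k + 1) x y := by
    have hxcx := pendantWindmill_adj_pendant (hc x hx) hx
    have hcore : HasPathIn (pendantWindmill h F c) (windmillCore h F) k (c x) y :=
      hF.hasPathIn_core (hc x hx) hy (fun hcx => hadj (hcx ▸ hxcx)) (by omega) (.inl le_rfl)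
    exact (hcore.cons hxcx hx).hasPath
  by_cases hx : x ∈ windmillCore h F <;> by_cases hy : y ∈ windmillCore h F
  · exact (hF.hasPathIn_core hx hy hxy (by omega) (.inr ⟨rfl, hadj⟩)).hasPath
  · exact (pendant_core hy hx fun hyx => hadj hyx.symm).symm
  · exact pendant_core hx hy hadj
  · have hcore : HasPathIn (pendantWindmill h F c) (windmillCore h F) (k - 1) (c y) (c x) :=
      hF.hasPathIn_core (hc y hy) (hc x hx) (hfibre hx hy).symm (by omega) (.inl (by omega))
    have htail := (hcore.cons (pendantWindmill_adj_pendant (hc y hy) hy) hy).symm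
    have hpath := htail.cons (pendantWindmill_adj_pendant (hc x hx) hx) (by simp [hxy, hx])
    rw [show k - 1 + 1 + 1 = k + 1 by omega] at hpath
    exact hpath.hasPath

lemma IsWindmill.ncard_edgeSet_pendantWindmill_le [Fintype V] (hF : IsWindmill G h k F) :
    (pendantWindmill h F c).edgeSet.ncard ≤ Fintype.card V + F.card * (k + 2) ^ 2 := by
  set E : Finset (Sym2 V) :=
    Finset.univ.image (fun x => s(x, c x)) ∪ F.biUnion fun B => (insert h B).sym2
  have hsub : (pendantWindmill h F c).edgeSet ⊆ E := fun e => by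
    induction e with | _ x y =>
    intro (hxy : (pendantWindmill h F c).Adj x y)
    obtain ⟨B, hB, hx, hy⟩ | ⟨-, rfl⟩ | ⟨-, rfl⟩ := pendantWindmill_adj_cases hxy
    · exact Finset.mem_union_right _
        (Finset.mem_biUnion.2 ⟨B, hB, Finset.mk_mem_sym2_iff.2 ⟨hx, hy⟩⟩)
    · exact Finset.mem_union_left _ (Finset.mem_image_of_mem _ (Finset.mem_univ x))
    · exact Finset.mem_union_left _
        (Finset.mem_image.2 ⟨y, Finset.mem_univ y, Sym2.eq_swap⟩)
  calc (pendantWindmill h F c).edgeSet.ncard ≤ (E : Set (Sym2 V)).ncard := Set.ncard_le_ncard hsub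
    _ = E.card := Set.ncard_coe_finset E
    _ ≤ _ := (Finset.card_union_le _ _).trans
      (Nat.add_le_add Finset.card_image_le (Finset.card_biUnion_le_card_mul _ _ _ fun B hB => ?_))
  rw [Finset.card_sym2, hF.card_insert hB]
  exact Nat.choose_le_pow _ _

lemma IsWindmill.satNum_le [Fintype V] (hF : IsWindmill G h k F) (hk : 3 ≤ k)
    (hc : ∀ x ∉ windmillCore h F, c x ∈ windmillCore h F ∧ G.Adj (c x) x) {bad : Finset (Sym2 V)}
    (hbad : ∀ x ∉ windmillCore h F, ∀ y ∉ windmillCore h F, c x = c y → G.Adj x y → s(x, y) ∈ bad) :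
    satNum G (cycGraph (k + 2)) ≤ Fintype.card V + F.card * (k + 2) ^ 2 + bad.card := by
  have hcore (x) (hx : x ∉ windmillCore h F) := (hc x hx).1
  grw [satNum_le_ncard_edgeSet_add (bad := bad)
    (hF.pendantWindmill_le fun x hx => (hc x hx).2)
    (hF.not_containsCopy_cycGraph (by omega) hcore) fun x y hG hH hxy => ?_,
    hF.ncard_edgeSet_pendantWindmill_le, Set.ncard_coe_finset]
  refine HasPath.containsCopy_sup_edge (by omega) (hF.hasPath_of_not_adj hk hcore hG.ne hH ?_)
  exact fun hx hy hcxy => hxy (hbad x hx y hy hcxy hG)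

end PendantWindmill

lemma satNum_cycGraph_le {V : Type*} [Fintype V] [Nonempty V] {G : SimpleGraph V} {β : ℝ}
    {s k l t N : ℕ} (hG : JoinsDensely G β s) (hGc : JoinsDensely Gᶜ β s) (hdeg : MinCodegree G β)
    (hβ : 0 < β) (hβ1 : β ≤ 1) (hk : 3 ≤ k) (hs1 : 1 ≤ s)
    (hs : 2 * s ≤ (β / 2) ^ k * (β * Fintype.card V / 2)) (ht : 2 * s ≤ (β / 2) ^ l * (β * t))
    (hN : ((N + s) * k : ℕ) ≤ β * Fintype.card V / 2)
    (hlN : Fintype.card V + l * s ≤ l * (N * k)) :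
    satNum G (cycGraph (k + 2)) ≤ Fintype.card V + (N + s) * (k + 2) ^ 2 + t * (t + l) := by
  classical
  have hst : s ≤ t := by
    have hpow : (β / 2) ^ l ≤ 1 := pow_le_one₀ (by positivity) (by linarith)
    have : (s : ℝ) ≤ t := by
      nlinarith [mul_nonneg hβ.le t.cast_nonneg, t.cast_nonneg (α := ℝ), s.cast_nonneg (α := ℝ)]
    exact_mod_cast this
  have hsN : s ≤ N * k := le_of_mul_le_mul_left (a := l) (by omega) (by
    rw [Nat.pos_iff_ne_zero]
    rintro rfl
    simp at hlN)
  obtain ⟨h⟩ := ‹Nonempty V›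
  obtain ⟨F, hF, hNF, hFN, hdom⟩ :=
    exists_dominating_isWindmill hG hdeg hβ hβ1 hs1 hs (by omega) hsN hN h
  have hindep (A : Finset V) (hA : β * t ≤ A.card) : ∃ I ⊆ A, G.IsNIndepSet l I := by
    simp_rw [← SimpleGraph.isNClique_compl]
    exact hGc.exists_isNClique hβ.le hβ1 l (ht.trans (by gcongr))
  obtain ⟨M, -, hMt, c, hc⟩ := hG.exists_isStarAssignment (L := (windmillCore h F)ᶜ)
    (B := F.biUnion id) hβ.le hindep hst
    (Finset.disjoint_left.2 fun x hx hxF => Finset.mem_compl.1 hx (Finset.mem_insert_of_mem hxF))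
    (by grw [Finset.card_le_univ, hF.card_biUnion, ← hNF, hlN])
  obtain ⟨d, hd, bad, hbadcard, hbad⟩ := hc.exists_extension (L := (windmillCore h F)ᶜ) fun x hx =>
    hdom x (fun hxh => Finset.mem_compl.1 hx (hxh ▸ Finset.mem_insert_self x _))
      fun hxF => Finset.mem_compl.1 hx (Finset.mem_insert_of_mem hxF)
  simp only [Finset.mem_compl] at hd hbad
  grw [hF.satNum_le hk (fun x hx => (hd x hx).imp_left Finset.mem_insert_of_mem) hbad, hbadcard,
    hMt, hFN]

/-! ### Failure probabilities in the random graph -/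

section Chernoff

open ProbabilityTheory

variable {Ω ι : Type*} [MeasurableSpace Ω] {μ : Measure Ω}

lemma iIndepSet_compl {E : ι → Set Ω} (h : iIndepSet E μ) : iIndepSet (fun i => (E i)ᶜ) μ := by
  have hcompl : ∀ i, MeasurableSpace.generateFrom {(E i)ᶜ} = .generateFrom {E i} := by
    refine fun i => le_antisymm ?_ ?_ <;> refine MeasurableSpace.generateFrom_le ?_
    · rintro _ rfl
      exact .compl (MeasurableSpace.measurableSet_generateFrom rfl)
    · rintro _ rfl
      exact .of_compl (MeasurableSpace.measurableSet_generateFrom rfl)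
  simpa only [iIndepSet_iff_iIndep, hcompl] using h

lemma mgf_indicator_one [IsProbabilityMeasure μ] {E : Set Ω} (hE : MeasurableSet E) (t : ℝ) :
    mgf (E.indicator fun _ => 1) μ t = 1 + (exp t - 1) * μ.real E := by
  have hexp : ∀ ω, exp (t * E.indicator (fun _ => 1) ω) =
      1 + (exp t - 1) * E.indicator (fun _ => 1) ω := by
    intro ω
    by_cases hω : ω ∈ E <;> simp [hω]
  have hint : Integrable (E.indicator fun _ => (1 : ℝ)) μ := (integrable_const 1).indicator hE
  simp only [mgf, hexp]
  rw [integral_add (integrable_const 1) (hint.const_mul _), integral_const_mul,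
    integral_indicator_const _ hE]
  simp

open Classical in
-- Chernoff's bound at the exponent `-log 2`.
lemma iIndepSet_measureReal_card_le [Fintype ι] {E : ι → Set Ω} (hE : ∀ i, MeasurableSet (E i))
    (h : iIndepSet E μ) {q : ℝ} (hq : ∀ i, q ≤ μ.real (E i)) (b : ℝ) :
    μ.real {ω | ((Finset.univ.filter fun i => ω ∈ E i).card : ℝ) ≤ b} ≤
      2 ^ b * (1 - q / 2) ^ Fintype.card ι := by
  have := h.isProbabilityMeasure
  set X : ι → Ω → ℝ := fun i => (E i).indicator fun _ => 1
  have hX : ∀ i, Measurable (X i) := fun i => measurable_const.indicator (hE i)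
  have hcard : ∀ ω, ((Finset.univ.filter fun i => ω ∈ E i).card : ℝ) = (∑ i, X i) ω := by
    simp [X, Set.indicator_apply]
  have hint : Integrable (fun ω => exp (-log 2 * (∑ i, X i) ω)) μ := by
    refine .of_bound (C := 1) (by fun_prop) (.of_forall fun ω => ?_)
    rw [← hcard, norm_of_nonneg (exp_pos _).le, exp_le_one_iff]
    have := log_nonneg one_le_two
    exact mul_nonpos_of_nonpos_of_nonneg (by linarith) (Nat.cast_nonneg _)
  have hmgf : ∀ i, mgf (X i) μ (-log 2) = 1 - μ.real (E i) / 2 := by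
    intro i
    rw [mgf_indicator_one (hE i), exp_neg, exp_log two_pos]
    ring
  calc μ.real {ω | ((Finset.univ.filter fun i => ω ∈ E i).card : ℝ) ≤ b}
      = μ.real {ω | (∑ i, X i) ω ≤ b} := by
        congr! 4 with ω
        convert hcard ω
    _ ≤ exp (- -log 2 * b) * mgf (∑ i, X i) μ (-log 2) :=
        measure_le_le_exp_mul_mgf b (neg_nonpos.2 (log_nonneg one_le_two)) hint
    _ = 2 ^ b * ∏ i, (1 - μ.real (E i) / 2) := by
        rw [neg_neg, rpow_def_of_pos two_pos, h.iIndepFun_indicator.mgf_sum hX,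
          Finset.prod_congr rfl fun i _ => hmgf i]
    _ ≤ 2 ^ b * ∏ _i : ι, (1 - q / 2) := by
        refine mul_le_mul_of_nonneg_left (Finset.prod_le_prod (fun i _ => ?_) fun i _ => ?_)
          (by positivity)
        · linarith [measureReal_le_one (μ := μ) (s := E i)]
        · linarith [hq i]
    _ = 2 ^ b * (1 - q / 2) ^ Fintype.card ι := by rw [Finset.prod_const, Finset.card_univ]

end Chernoff

section EdgeEvents

open ProbabilityTheory

variable {n : ℕ} {p : ℝ}

instance : IsProbabilityMeasure (erMeasure n p) := by
  unfold erMeasure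
  infer_instance

lemma mem_edgeSet_graphOf {ω : EdgeType n → Bool} {e : Sym2 (Fin n)} :
    e ∈ (graphOf ω).edgeSet ↔ ∃ h : ¬ e.IsDiag, ω ⟨e, h⟩ = true := by
  simp [graphOf, SimpleGraph.edgeSet_fromEdgeSet]

lemma erMeasure_real_subset_edgeSet (hp0 : 0 ≤ p) (hp1 : p ≤ 1) {S : Finset (Sym2 (Fin n))}
    (hS : ∀ e ∈ S, ¬ e.IsDiag) :
    (erMeasure n p).real {ω | (S : Set (Sym2 (Fin n))) ⊆ (graphOf ω).edgeSet} = p ^ S.card := by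
  classical
  have hset : {ω : EdgeType n → Bool | (S : Set (Sym2 (Fin n))) ⊆ (graphOf ω).edgeSet} =
      Set.univ.pi fun e => if e.1 ∈ S then {true} else Set.univ := by
    ext ω
    simp only [Set.mem_ofPred_eq, Set.subset_def, mem_edgeSet_graphOf, Finset.mem_coe, Set.mem_pi,
      Set.mem_univ, true_imp_iff, Set.mem_ite_univ_right, Set.mem_singleton_iff]
    exact ⟨fun h e he => (h e he).2, fun h e he => ⟨hS e he, h ⟨e, hS e he⟩ he⟩⟩
  have hbern : ∀ e : EdgeType n,
      (PMF.bernoulli (min (toNNReal p) 1) (min_le_right _ _)).toMeasure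
        (if e.1 ∈ S then {true} else Set.univ) = if e.1 ∈ S then ENNReal.ofReal p else 1 := by
    intro e
    split_ifs
    · rw [PMF.toMeasure_apply_singleton _ _ (measurableSet_singleton _), PMF.bernoulli_apply,
        cond_true, min_eq_left (toNNReal_le_one.2 hp1)]
      rfl
    · exact measure_univ
  have hcard : (Finset.univ.filter fun e : EdgeType n => e.1 ∈ S).card = S.card := by
    refine Finset.card_bij (fun e _ => e.1) (by simp) (fun _ _ _ _ => Subtype.ext) fun e he => ?_
    exact ⟨⟨e, hS e he⟩, by simpa using he, rfl⟩
  rw [hset, measureReal_def, erMeasure, Measure.pi_pi]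
  simp only [hbern, Finset.prod_ite, Finset.prod_const, one_pow, mul_one, hcard,
    ENNReal.toReal_pow, ENNReal.toReal_ofReal hp0]

lemma iIndepSet_subset_edgeSet (hp0 : 0 ≤ p) (hp1 : p ≤ 1) {ι : Type*}
    {F : ι → Finset (Sym2 (Fin n))} (hF : ∀ i, ∀ e ∈ F i, ¬ e.IsDiag)
    (hdisj : Pairwise (Function.onFun Disjoint F)) :
    iIndepSet (fun i => {ω | (F i : Set (Sym2 (Fin n))) ⊆ (graphOf ω).edgeSet})
      (erMeasure n p) := by
  classical
  refine (iIndepSet_iff_meas_biInter fun i => .of_discrete).2 fun t => ?_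
  have hinter : ⋂ i ∈ t, {ω | (F i : Set (Sym2 (Fin n))) ⊆ (graphOf ω).edgeSet} =
      {ω | (t.biUnion F : Set (Sym2 (Fin n))) ⊆ (graphOf ω).edgeSet} := by
    ext ω
    simp
  have hunion : ∀ e ∈ t.biUnion F, ¬ e.IsDiag := by simpa using fun e i _ => hF i e
  rw [← ENNReal.toReal_eq_toReal_iff' (measure_ne_top _ _)
    (ENNReal.prod_ne_top fun _ _ => measure_ne_top _ _), ENNReal.toReal_prod, hinter]
  simp only [← measureReal_def, erMeasure_real_subset_edgeSet hp0 hp1 hunion,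
    erMeasure_real_subset_edgeSet hp0 hp1 (hF _)]
  rw [Finset.card_biUnion fun i _ j _ hij => hdisj hij, Finset.prod_pow_eq_pow_sum]

lemma iIndepSet_adj (hp0 : 0 ≤ p) (hp1 : p ≤ 1) {A B : Finset (Fin n)} (hAB : Disjoint A B) :
    iIndepSet (fun e : A × B => {ω | (graphOf ω).Adj e.1 e.2}) (erMeasure n p) := by
  have hne : ∀ (x : A) (y : B), x.1 ≠ y.1 := fun x y => Finset.disjoint_iff_ne.1 hAB x x.2 y y.2
  have h := iIndepSet_subset_edgeSet hp0 hp1 (F := fun e : A × B => {s(e.1.1, e.2.1)})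
    (by simpa using fun x hx y hy => hne ⟨x, hx⟩ ⟨y, hy⟩) fun e f hef => by
      simp only [Function.onFun, Finset.disjoint_singleton, ne_eq, Sym2.eq_iff, not_or, not_and]
      exact ⟨fun h₁ h₂ => hef (Prod.ext (Subtype.ext h₁) (Subtype.ext h₂)),
        fun h₁ => absurd h₁ (hne _ _)⟩
  simpa using h

lemma erMeasure_real_adj (hp0 : 0 ≤ p) (hp1 : p ≤ 1) {x y : Fin n} (hxy : x ≠ y) :
    (erMeasure n p).real {ω | (graphOf ω).Adj x y} = p := by
  simpa using erMeasure_real_subset_edgeSet hp0 hp1 (S := {s(x, y)}) (by simpa using hxy)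

lemma erMeasure_real_compl_adj (hp0 : 0 ≤ p) (hp1 : p ≤ 1) {x y : Fin n} (hxy : x ≠ y) :
    (erMeasure n p).real {ω | (graphOf ω)ᶜ.Adj x y} = 1 - p := by
  have h := probReal_compl_eq_one_sub (μ := erMeasure n p) (s := {ω | (graphOf ω).Adj x y})
    .of_discrete
  rw [erMeasure_real_adj hp0 hp1 hxy] at h
  simpa [SimpleGraph.compl_adj, hxy, Set.compl_def] using h

end EdgeEvents

section FailureProbabilities

open ProbabilityTheory

variable {Ω V : Type*} [MeasurableSpace Ω] {μ : Measure Ω} {X : Ω → SimpleGraph V} {β q θ : ℝ}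

open Classical in
lemma measureReal_forall_card_filter_adj_le {A B : Finset V}
    (hmeas : ∀ x y, MeasurableSet {ω | (X ω).Adj x y})
    (hind : iIndepSet (fun e : A × B => {ω | (X ω).Adj e.1 e.2}) μ)
    (hq : ∀ x ∈ A, ∀ y ∈ B, q ≤ μ.real {ω | (X ω).Adj x y}) :
    μ.real {ω | ∀ x ∈ A, ((B.filter ((X ω).Adj x)).card : ℝ) ≤ β * B.card} ≤
      (2 ^ β * (1 - q / 2)) ^ (A.card * B.card) := by
  have := hind.isProbabilityMeasure
  have hcount : ∀ ω, (Finset.univ.filter fun e : A × B => (X ω).Adj e.1 e.2).card =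
      ∑ x ∈ A, (B.filter ((X ω).Adj x)).card := by
    intro ω
    simp only [Finset.card_filter, Fintype.sum_prod_type]
    rw [← Finset.sum_coe_sort A]
    exact Finset.sum_congr rfl fun x _ => Finset.sum_coe_sort B fun y =>
      if (X ω).Adj x y then 1 else 0
  calc μ.real {ω | ∀ x ∈ A, ((B.filter ((X ω).Adj x)).card : ℝ) ≤ β * B.card}
      ≤ μ.real {ω | ((Finset.univ.filter fun e : A × B => (X ω).Adj e.1 e.2).card : ℝ) ≤
          β * (A.card * B.card : ℕ)} := by
        refine measureReal_mono fun ω hω => ?_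
        rw [Set.mem_ofPred_eq, hcount]
        push_cast
        calc ∑ x ∈ A, ((B.filter ((X ω).Adj x)).card : ℝ) ≤ ∑ _x ∈ A, β * B.card :=
              Finset.sum_le_sum hω
          _ = β * (A.card * B.card) := by rw [Finset.sum_const, nsmul_eq_mul]; ring
    _ ≤ 2 ^ (β * (A.card * B.card : ℕ)) * (1 - q / 2) ^ Fintype.card (A × B) :=
        iIndepSet_measureReal_card_le (E := fun e : A × B => {ω | (X ω).Adj e.1 e.2})
          (fun e => hmeas e.1 e.2) hind (fun e => hq e.1 e.1.2 e.2 e.2.2) _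
    _ = (2 ^ β * (1 - q / 2)) ^ (A.card * B.card) := by
        rw [mul_pow, rpow_mul_natCast two_pos.le]
        simp

lemma sum_sum_pow_card_le_exp_two [Fintype V] :
    ∑ A : Finset V, ∑ B : Finset V,
      (Fintype.card V : ℝ)⁻¹ ^ A.card * (Fintype.card V : ℝ)⁻¹ ^ B.card ≤ exp 2 := by
  have hsum : ∑ A : Finset V, (Fintype.card V : ℝ)⁻¹ ^ A.card ≤ exp 1 := by
    have h := Fintype.sum_pow_mul_eq_add_pow V (Fintype.card V : ℝ)⁻¹ 1
    simp only [one_pow, mul_one] at h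
    rw [h, add_comm]
    exact one_add_inv_pow_le_exp
  simp only [← Finset.mul_sum, ← Finset.sum_mul]
  calc _ ≤ exp 1 * exp 1 := by gcongr
    _ = exp 2 := by rw [← exp_add]; norm_num

lemma pow_mul_le_of_pow_le {r : ℝ} {s a b : ℕ} (hθ0 : 0 ≤ θ) (hθ1 : θ ≤ 1) (hr0 : 0 ≤ r)
    (hr1 : r ≤ 1) (hs : 1 ≤ s) (hθs : θ ^ s ≤ r ^ 4) (ha : s ≤ a) (hb : s ≤ b) :
    θ ^ (a * b) ≤ r * (r ^ a * r ^ b) := by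
  have hab : s * max a b ≤ a * b := by
    obtain h | h := le_total a b
    · rw [max_eq_right h]
      gcongr
    · rw [max_eq_left h, mul_comm]
      gcongr
  calc θ ^ (a * b) ≤ θ ^ (s * max a b) := pow_le_pow_of_le_one hθ0 hθ1 hab
    _ = (θ ^ s) ^ max a b := pow_mul _ _ _
    _ ≤ (r ^ 4) ^ max a b := by gcongr
    _ = r ^ (4 * max a b) := (pow_mul _ _ _).symm
    _ ≤ r ^ (1 + (a + b)) := pow_le_pow_of_le_one hr0 hr1 (by omega)
    _ = r * (r ^ a * r ^ b) := by rw [pow_add, pow_add, pow_one]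

open Classical in
lemma measureReal_not_joinsDensely_le [Fintype V] [IsFiniteMeasure μ] {s : ℕ} (hθ0 : 0 ≤ θ)
    (hθ1 : θ ≤ 1) (hs : 1 ≤ s) (hθs : θ ^ s ≤ (Fintype.card V : ℝ)⁻¹ ^ 4)
    (hX : ∀ A B : Finset V, Disjoint A B →
      μ.real {ω | ∀ x ∈ A, ((B.filter ((X ω).Adj x)).card : ℝ) ≤ β * B.card} ≤
        θ ^ (A.card * B.card)) :
    μ.real {ω | ¬ JoinsDensely (X ω) β s} ≤ exp 2 / Fintype.card V := by
  set r : ℝ := (Fintype.card V : ℝ)⁻¹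
  have hr1 : r ≤ 1 := Nat.cast_inv_le_one _
  set E : Finset V → Finset V → Set Ω := fun A B =>
    {ω | (Disjoint A B ∧ s ≤ A.card ∧ s ≤ B.card) ∧
      ∀ x ∈ A, ((B.filter ((X ω).Adj x)).card : ℝ) ≤ β * B.card}
  have hsub : {ω | ¬ JoinsDensely (X ω) β s} ⊆ ⋃ A, ⋃ B, E A B := by
    intro ω hω
    rw [Set.mem_ofPred_eq, JoinsDensely] at hω
    push Not at hω
    obtain ⟨A, B, hAB, hA, hB, hfew⟩ := hω
    exact Set.mem_iUnion₂.2 ⟨A, B, ⟨hAB, hA, hB⟩, fun x hx => (hfew x hx).le⟩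
  have hE : ∀ A B, μ.real (E A B) ≤ r * (r ^ A.card * r ^ B.card) := by
    intro A B
    by_cases hAB : Disjoint A B ∧ s ≤ A.card ∧ s ≤ B.card
    · refine (measureReal_mono fun ω hω => hω.2).trans ((hX A B hAB.1).trans ?_)
      exact pow_mul_le_of_pow_le hθ0 hθ1 (by positivity) hr1 hs hθs hAB.2.1 hAB.2.2
    · simp only [E, hAB, false_and, Set.ofPred_false, measureReal_empty]
      positivity
  calc μ.real {ω | ¬ JoinsDensely (X ω) β s} ≤ μ.real (⋃ A, ⋃ B, E A B) := measureReal_mono hsub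
    _ ≤ ∑ A, ∑ B, μ.real (E A B) :=
        (measureReal_iUnion_fintype_le _).trans
          (Finset.sum_le_sum fun A _ => measureReal_iUnion_fintype_le _)
    _ ≤ ∑ A : Finset V, ∑ B : Finset V, r * (r ^ A.card * r ^ B.card) := by
        gcongr with A _ B _
        exact hE A B
    _ = r * ∑ A : Finset V, ∑ B : Finset V, r ^ A.card * r ^ B.card := by
        simp only [Finset.mul_sum]
    _ ≤ r * exp 2 := by
        gcongr
        exact sum_sum_pow_card_le_exp_two
    _ = exp 2 / Fintype.card V := by rw [mul_comm, div_eq_mul_inv]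

end FailureProbabilities

section Codegree

open ProbabilityTheory

variable {n : ℕ} {p β : ℝ}

open Classical in
lemma erMeasure_real_card_common_neighbors_le (hp0 : 0 ≤ p) (hp1 : p ≤ 1) {x y : Fin n}
    (hxy : x ≠ y) :
    (erMeasure n p).real {ω | ((Finset.univ.filter fun w =>
      (graphOf ω).Adj x w ∧ (graphOf ω).Adj y w).card : ℝ) ≤ β * n} ≤
      2 ^ (β * n) * (1 - p ^ 2 / 2) ^ (n - 2) := by
  set F : ↥({x, y}ᶜ : Finset (Fin n)) → Finset (Sym2 (Fin n)) := fun w => {s(x, w), s(y, w)}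
  have hne : ∀ w : ↥({x, y}ᶜ : Finset (Fin n)), w.1 ≠ x ∧ w.1 ≠ y := fun w => by simpa using w.2
  have hcard : ∀ w, (F w).card = 2 := fun w => Finset.card_pair (by simp [hxy, (hne w).1.symm])
  have hdiag : ∀ w, ∀ e ∈ F w, ¬ e.IsDiag := fun w => by
    simp [F, (hne w).1.symm, (hne w).2.symm]
  have hdisj : Pairwise (Function.onFun Disjoint F) := fun w w' hw => by
    simp [F, Function.onFun, hw.symm, hne w']
  have hadj : ∀ w, {ω : EdgeType n → Bool | (F w : Set (Sym2 (Fin n))) ⊆ (graphOf ω).edgeSet} =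
      {ω | (graphOf ω).Adj x w ∧ (graphOf ω).Adj y w} := by
    simp [F, Set.insert_subset_iff]
  have h := iIndepSet_measureReal_card_le (fun _ => .of_discrete)
    (iIndepSet_subset_edgeSet hp0 hp1 hdiag hdisj) (q := p ^ 2)
    (fun w => (hcard w ▸ erMeasure_real_subset_edgeSet hp0 hp1 (hdiag w)).ge) (β * n)
  simp only [hadj, Fintype.card_coe, Finset.card_compl, Finset.card_pair hxy,
    Fintype.card_fin] at h
  refine (measureReal_mono fun ω hω => ?_).trans h
  refine le_trans (Nat.cast_le.2 ?_) (Set.mem_ofPred_eq ▸ hω)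
  exact Finset.card_le_card_of_injOn Subtype.val (by intro w; simp) Subtype.val_injective.injOn

lemma pow_sub_two_le {x : ℝ} (hx : 1 / 2 ≤ x) (hn : 2 ≤ n) : x ^ (n - 2) ≤ 4 * x ^ n := by
  obtain ⟨k, rfl⟩ := Nat.exists_eq_add_of_le' hn
  have hsq : 1 ≤ 4 * x ^ 2 := by nlinarith
  rw [Nat.add_sub_cancel, pow_add, mul_left_comm]
  exact le_mul_of_one_le_right (by positivity) hsq

open Classical in
lemma erMeasure_real_not_minCodegree_le (hp0 : 0 ≤ p) (hp1 : p ≤ 1) :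
    (erMeasure n p).real {ω | ¬ MinCodegree (graphOf ω) β} ≤
      n ^ 2 * (4 * (2 ^ β * (1 - p ^ 2 / 2)) ^ n) := by
  set E : Fin n → Fin n → Set (EdgeType n → Bool) := fun x y => {ω | x ≠ y ∧
    ((Finset.univ.filter fun w => (graphOf ω).Adj x w ∧ (graphOf ω).Adj y w).card : ℝ) ≤ β * n}
  have hsub : {ω : EdgeType n → Bool | ¬ MinCodegree (graphOf ω) β} ⊆ ⋃ x, ⋃ y, E x y := by
    intro ω hω
    rw [Set.mem_ofPred_eq, MinCodegree] at hω
    push Not at hω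
    obtain ⟨x, y, hxy, hfew⟩ := hω
    rw [Fintype.card_fin] at hfew
    exact Set.mem_iUnion₂.2 ⟨x, y, hxy, by convert hfew.le⟩
  have hE : ∀ x y, (erMeasure n p).real (E x y) ≤ 4 * (2 ^ β * (1 - p ^ 2 / 2)) ^ n := by
    intro x y
    obtain rfl | hxy := eq_or_ne x y
    · simp only [E, ne_eq, not_true, false_and, Set.ofPred_false, measureReal_empty]
      have : 0 ≤ 1 - p ^ 2 / 2 := by nlinarith
      positivity
    · refine (measureReal_mono fun ω hω => hω.2).trans ?_
      refine (erMeasure_real_card_common_neighbors_le hp0 hp1 hxy).trans ?_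
      have hn : 2 ≤ n := by
        simpa [Finset.card_pair hxy] using Finset.card_le_univ ({x, y} : Finset (Fin n))
      rw [mul_pow, ← rpow_mul_natCast two_pos.le, mul_left_comm]
      gcongr
      exact pow_sub_two_le (by nlinarith) hn
  calc _ ≤ (erMeasure n p).real (⋃ x, ⋃ y, E x y) := measureReal_mono hsub
    _ ≤ ∑ x, ∑ y, (erMeasure n p).real (E x y) :=
        (measureReal_iUnion_fintype_le _).trans
          (Finset.sum_le_sum fun x _ => measureReal_iUnion_fintype_le _)
    _ ≤ ∑ _x : Fin n, ∑ _y : Fin n, 4 * (2 ^ β * (1 - p ^ 2 / 2)) ^ n := by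
        gcongr with x _ y _
        exact hE x y
    _ = n ^ 2 * (4 * (2 ^ β * (1 - p ^ 2 / 2)) ^ n) := by
        simp only [Finset.sum_const, Finset.card_univ, Fintype.card_fin, nsmul_eq_mul]
        ring

end Codegree

/-- The deterministic properties of the random graph from which both bounds on the saturation
number are derived. -/
structure IsPseudorandom {V : Type*} [Fintype V] (G : SimpleGraph V) (β : ℝ) (s : ℕ) : Prop where
  joinsDensely : JoinsDensely G β s
  joinsDensely_compl : JoinsDensely Gᶜ β s
  minCodegree : MinCodegree G β

section WithHighProbability

variable {n s : ℕ} {p β q : ℝ}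

lemma erMeasure_real_not_joinsDensely_le (hp0 : 0 ≤ p) (hp1 : p ≤ 1) (hq : q ≤ p)
    (hθ : 2 ^ β * (1 - q / 2) ≤ 1) (hs : 1 ≤ s)
    (hθs : (2 ^ β * (1 - q / 2)) ^ s ≤ (n : ℝ)⁻¹ ^ 4) :
    (erMeasure n p).real {ω | ¬ JoinsDensely (graphOf ω) β s} ≤ exp 2 / n := by
  have hν : 0 ≤ 1 - q / 2 := by linarith
  rw [← Fintype.card_fin n] at hθs
  refine (measureReal_not_joinsDensely_le (by positivity) hθ hs hθs fun A B hAB => ?_).trans_eq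
    (by rw [Fintype.card_fin])
  refine measureReal_forall_card_filter_adj_le (fun x y => .of_discrete)
    (iIndepSet_adj hp0 hp1 hAB) fun x hx y hy => ?_
  rwa [erMeasure_real_adj hp0 hp1 (Finset.disjoint_iff_ne.1 hAB x hx y hy)]

lemma erMeasure_real_not_joinsDensely_compl_le (hp0 : 0 ≤ p) (hp1 : p ≤ 1) (hq : q ≤ 1 - p)
    (hθ : 2 ^ β * (1 - q / 2) ≤ 1) (hs : 1 ≤ s)
    (hθs : (2 ^ β * (1 - q / 2)) ^ s ≤ (n : ℝ)⁻¹ ^ 4) :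
    (erMeasure n p).real {ω | ¬ JoinsDensely (graphOf ω)ᶜ β s} ≤ exp 2 / n := by
  have hν : 0 ≤ 1 - q / 2 := by linarith
  rw [← Fintype.card_fin n] at hθs
  refine (measureReal_not_joinsDensely_le (X := fun ω => (graphOf ω)ᶜ) (by positivity) hθ hs hθs
    fun A B hAB => ?_).trans_eq (by rw [Fintype.card_fin])
  have hne : ∀ x ∈ A, ∀ y ∈ B, x ≠ y := Finset.disjoint_iff_ne.1 hAB
  refine measureReal_forall_card_filter_adj_le (fun x y => .of_discrete) ?_ fun x hx y hy => ?_
  · convert iIndepSet_compl (iIndepSet_adj hp0 hp1 hAB) using 2 with e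
    ext ω
    simp [SimpleGraph.compl_adj, hne e.1 e.1.2 e.2 e.2.2]
  · rwa [erMeasure_real_compl_adj hp0 hp1 (hne x hx y hy)]

lemma erMeasure_real_not_isPseudorandom_le (hp0 : 0 ≤ p) (hp1 : p ≤ 1) (hqp : q ≤ p ^ 2)
    (hq : q ≤ 1 - p) (hθ : 2 ^ β * (1 - q / 2) ≤ 1) (hs : 1 ≤ s)
    (hθs : (2 ^ β * (1 - q / 2)) ^ s ≤ (n : ℝ)⁻¹ ^ 4) :
    (erMeasure n p).real {ω | ¬ IsPseudorandom (graphOf ω) β s} ≤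
      exp 2 / n + exp 2 / n + n ^ 2 * (4 * (2 ^ β * (1 - q / 2)) ^ n) := by
  have hsub : {ω : EdgeType n → Bool | ¬ IsPseudorandom (graphOf ω) β s} ⊆
      {ω | ¬ JoinsDensely (graphOf ω) β s} ∪ {ω | ¬ JoinsDensely (graphOf ω)ᶜ β s} ∪
        {ω | ¬ MinCodegree (graphOf ω) β} := by
    intro ω hω
    simp only [Set.mem_union, Set.mem_ofPred_eq] at hω ⊢
    by_contra! h
    exact hω ⟨h.1.1, h.1.2, h.2⟩
  have hν : 0 ≤ 1 - p ^ 2 / 2 := by nlinarith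
  refine (measureReal_mono hsub).trans ((measureReal_union_le _ _).trans ?_)
  refine add_le_add ((measureReal_union_le _ _).trans (add_le_add ?_ ?_)) ?_
  · exact erMeasure_real_not_joinsDensely_le hp0 hp1 (by nlinarith) hθ hs hθs
  · exact erMeasure_real_not_joinsDensely_compl_le hp0 hp1 hq hθ hs hθs
  · refine (erMeasure_real_not_minCodegree_le hp0 hp1).trans ?_
    gcongr

lemma exists_two_rpow_mul_lt_one {x : ℝ} (hx : x < 1) : ∃ β : ℝ, 0 < β ∧ β ≤ 1 ∧ 2 ^ β * x < 1 := by
  have hcont : Tendsto (fun β : ℝ => 2 ^ β * x) (nhdsWithin 0 (Set.Ioi 0))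
      (nhds (2 ^ (0 : ℝ) * x)) :=
    ((continuousAt_const_rpow two_ne_zero).mul continuousAt_const).tendsto.mono_left
      nhdsWithin_le_nhds
  obtain ⟨β, hβ, hβ0, hβ1⟩ := ((hcont.eventually_lt_const (by simpa using hx)).and
    (Ioc_mem_nhdsGT one_pos)).exists
  exact ⟨β, hβ0, hβ1, hβ⟩

lemma pow_ceil_neg_log_le {θ : ℝ} (hθ0 : 0 < θ) (hθ1 : θ < 1) (hn : 1 ≤ n) :
    θ ^ ⌈4 / -log θ * log n⌉₊ ≤ (n : ℝ)⁻¹ ^ 4 := by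
  have hlog : log θ < 0 := log_neg hθ0 hθ1
  have : (0 : ℝ) < n := by exact_mod_cast hn
  rw [← log_le_log_iff (by positivity) (by positivity), log_pow, log_pow, log_inv]
  have hceil : 4 / -log θ * log n ≤ ⌈4 / -log θ * log n⌉₊ := Nat.le_ceil _
  have h := mul_le_mul_of_nonneg_right hceil (neg_nonneg.2 hlog.le)
  rw [mul_right_comm, div_mul_cancel₀ _ (neg_ne_zero.2 hlog.ne)] at h
  push_cast
  linarith

theorem exists_tendsto_erMeasure_isPseudorandom (hp0 : 0 < p) (hp1 : p < 1) :
    ∃ β K : ℝ, 0 < β ∧ β ≤ 1 ∧ 0 < K ∧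
      Tendsto (fun n : ℕ => erMeasure n p {ω | IsPseudorandom (graphOf ω) β ⌈K * log n⌉₊})
        atTop (nhds 1) := by
  set q := min (p ^ 2) (1 - p)
  have hq0 : 0 < q := lt_min (by positivity) (by linarith)
  have hq1 : q ≤ 1 - p := min_le_right _ _
  obtain ⟨β, hβ0, hβ1, hθ1⟩ := exists_two_rpow_mul_lt_one (x := 1 - q / 2) (by linarith)
  set θ := 2 ^ β * (1 - q / 2)
  have hθ0 : 0 < θ := mul_pos (by positivity) (by linarith)
  have hK : 0 < 4 / -log θ := div_pos four_pos (neg_pos.2 (log_neg hθ0 hθ1))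
  refine ⟨β, 4 / -log θ, hβ0, hβ1, hK, ?_⟩
  have hfail : Tendsto (fun n : ℕ => exp 2 / n + exp 2 / n + (n : ℝ) ^ 2 * (4 * θ ^ n)) atTop
      (nhds 0) := by
    have h₁ := tendsto_const_div_atTop_nhds_zero_nat (exp 2)
    have h₂ := (tendsto_pow_const_mul_const_pow_of_lt_one 2 hθ0.le hθ1).const_mul 4
    simpa [mul_left_comm] using (h₁.add h₁).add h₂
  have hreal : Tendsto (fun n : ℕ => (erMeasure n p).real
      {ω | ¬ IsPseudorandom (graphOf ω) β ⌈4 / -log θ * log n⌉₊}) atTop (nhds 0) := by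
    refine squeeze_zero' (.of_forall fun _ => measureReal_nonneg) ?_ hfail
    filter_upwards [eventually_ge_atTop 2] with n (hn : 2 ≤ n)
    have hlog : 0 < log n := log_pos (by exact_mod_cast hn)
    exact erMeasure_real_not_isPseudorandom_le hp0.le hp1.le (min_le_left _ _) hq1 hθ1.le
      (Nat.one_le_ceil_iff.2 (mul_pos hK hlog)) (pow_ceil_neg_log_le hθ0 hθ1 (by omega))
  have hprob := ENNReal.tendsto_ofReal (hreal.const_sub 1)
  rw [sub_zero, ENNReal.ofReal_one] at hprob
  refine hprob.congr fun n => ?_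
  rw [← probReal_compl_eq_one_sub .of_discrete, ofReal_measureReal]
  simp [Set.compl_def]

end WithHighProbability

/-! ### Asymptotics -/

section Asymptotics

lemma eventually_le_log_natCast (C : ℝ) : ∀ᶠ n : ℕ in atTop, C ≤ log n :=
  (tendsto_log_atTop.comp tendsto_natCast_atTop_atTop).eventually_ge_atTop C

lemma eventually_mul_log_le_rpow (C : ℝ) {ε : ℝ} (hε : 0 < ε) :
    ∀ᶠ n : ℕ in atTop, C * log n ≤ (n : ℝ) ^ ε := by
  have h := tendsto_natCast_atTop_atTop.eventually
    (((isLittleO_log_rpow_atTop hε).const_mul_left C).bound one_pos)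
  filter_upwards [h] with n hn
  rw [one_mul, norm_of_nonneg (rpow_nonneg n.cast_nonneg ε)] at hn
  exact (le_norm_self _).trans hn

lemma eventually_ceil_mul_log_le {K : ℝ} (hK : 0 < K) :
    ∀ᶠ n : ℕ in atTop, (⌈K * log n⌉₊ : ℝ) ≤ 2 * K * log n := by
  filter_upwards [eventually_le_log_natCast (1 / K)] with n hn
  have h₁ : 1 ≤ K * log n := by rwa [div_le_iff₀' hK] at hn
  have h₂ := Nat.ceil_lt_add_one (zero_le_one.trans h₁)
  linarith

lemma eventually_mul_ceil_mul_log_le_rpow (C : ℝ) {K ε : ℝ} (hC : 0 ≤ C) (hK : 0 < K)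
    (hε : 0 < ε) : ∀ᶠ n : ℕ in atTop, C * ⌈K * log n⌉₊ ≤ (n : ℝ) ^ ε := by
  filter_upwards [eventually_ceil_mul_log_le hK, eventually_mul_log_le_rpow (C * (2 * K)) hε]
    with n hceil hlog
  nlinarith

lemma one_le_natCast_rpow {n : ℕ} {ε : ℝ} (hn : 1 ≤ n) (hε : 0 ≤ ε) : 1 ≤ (n : ℝ) ^ ε :=
  one_le_rpow (by exact_mod_cast hn) hε

lemma eventually_one_le_ceil_mul_log {K : ℝ} (hK : 0 < K) :
    ∀ᶠ n : ℕ in atTop, 1 ≤ ⌈K * log n⌉₊ := by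
  filter_upwards [eventually_le_log_natCast 1] with n hn
  exact Nat.one_le_ceil_iff.2 (by positivity)

lemma exists_block_length {b : ℝ} (hb : 1 < b) : ∃ c > (0 : ℝ), ∀ᶠ n : ℕ in atTop,
    ∃ l : ℕ, c * log n ≤ l ∧ (l : ℝ) ≤ (n : ℝ) ^ (8⁻¹ : ℝ) ∧
      b ^ l ≤ (n : ℝ) ^ (8⁻¹ : ℝ) := by
  have hlogb : 0 < log b := log_pos hb
  refine ⟨1 / (16 * log b), by positivity, ?_⟩
  filter_upwards [eventually_le_log_natCast (8 * log b), eventually_ge_atTop 1,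
    eventually_mul_log_le_rpow (1 / (8 * log b)) (by norm_num : (0 : ℝ) < 8⁻¹)]
    with n hlog hn hy
  have hn0 : (0 : ℝ) < n := by exact_mod_cast hn
  have hx1 : 1 ≤ 1 / (8 * log b) * log n := by
    rw [div_mul_eq_mul_div, one_mul, one_le_div (by positivity)]; exact hlog
  have hl := Nat.floor_le (zero_le_one.trans hx1)
  refine ⟨⌊1 / (8 * log b) * log n⌋₊, ?_, hl.trans hy, ?_⟩
  · have h₁ := Nat.lt_floor_add_one (1 / (8 * log b) * log n)
    have h₂ : (1 : ℝ) ≤ ⌊1 / (8 * log b) * log n⌋₊ := by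
      exact_mod_cast (Nat.one_le_floor_iff _).2 hx1
    have h₃ : 1 / (16 * log b) * log n = 1 / (8 * log b) * log n / 2 := by ring
    linarith
  · rw [← log_le_log_iff (by positivity) (by positivity), log_pow, log_rpow hn0]
    calc _ ≤ 1 / (8 * log b) * log n * log b := by gcongr
      _ = 8⁻¹ * log n := by field_simp

end Asymptotics

lemma IsPseudorandom.card_add_mul_le_mul_satNum {V : Type*} [Fintype V] [Nonempty V]
    {G : SimpleGraph V} {β : ℝ} {s m : ℕ} (hG : IsPseudorandom G β s) (hβ : 0 < β) (hs : 1 ≤ s)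
    (hm : 5 ≤ m) (hcard : (112 * m + 36) * s ^ 2 ≤ Fintype.card V) :
    Fintype.card V + 64 * s * m * Fintype.card V ≤ 64 * s * m * satNum G (cycGraph m) := by
  obtain ⟨H, hH, hsat⟩ := exists_isSaturatedIn_ncard_edgeSet_eq_satNum G
    (not_containsCopy_cycGraph_bot (by omega : 3 ≤ m))
  have h := hH.card_le (hG.minCodegree.connected hβ) (hG.joinsDensely.noBipartiteHole hβ hs) hs hm
  have hsm : s * m ≤ s ^ 2 * m := by gcongr; nlinarith
  rw [hsat] at h
  nlinarith

lemma exists_mul_add_le_mul_pow_four {β y : ℝ} {s l : ℕ} (hβ : 0 < β) (hs : 2 * s ≤ β * y)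
    (hl : l ≤ y) (hpow : (2 / β) ^ l ≤ y) (hy : 1 ≤ y) :
    ∃ t : ℕ, 2 * s ≤ (β / 2) ^ l * (β * t) ∧ t * (t + l) ≤ 6 * y ^ 4 := by
  have hy2 : 1 ≤ y ^ 2 := one_le_pow₀ hy
  have ht : y ^ 2 ≤ ⌈y ^ 2⌉₊ := Nat.le_ceil _
  have ht' : (⌈y ^ 2⌉₊ : ℝ) ≤ 2 * y ^ 2 := by
    linarith [Nat.ceil_lt_add_one (zero_le_one.trans hy2)]
  refine ⟨⌈y ^ 2⌉₊, ?_, ?_⟩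
  · have hinv : (β / 2) ^ l * y ≥ 1 := calc
      (β / 2) ^ l * y ≥ (β / 2) ^ l * (2 / β) ^ l := by gcongr
      _ = 1 := by rw [← mul_pow, div_mul_div_cancel₀ two_ne_zero, div_self hβ.ne', one_pow]
    calc (2 * s : ℝ) ≤ β * y := hs
      _ ≤ (β / 2) ^ l * y * (β * y) := le_mul_of_one_le_left (by positivity) hinv
      _ = (β / 2) ^ l * (β * y ^ 2) := by ring
      _ ≤ (β / 2) ^ l * (β * ⌈y ^ 2⌉₊) := by gcongr
  · calc (⌈y ^ 2⌉₊ * (⌈y ^ 2⌉₊ + l) : ℝ) ≤ 2 * y ^ 2 * (2 * y ^ 2 + y ^ 2) := by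
          gcongr
          exact hl.trans (le_self_pow₀ hy two_ne_zero)
      _ = 6 * y ^ 4 := by ring

lemma exists_add_mul_le_mul_and_add_le {n l s : ℕ} {c L : ℝ} (hc : 0 < c) (hL : 0 < L)
    (hl : c * L ≤ l) (hs : (2 * s + 1) * L ≤ n) :
    ∃ N : ℕ, n + l * s ≤ l * N ∧ (N + s : ℝ) ≤ (1 / c + 1) * (n / L) := by
  have hl0 : (0 : ℝ) < l := (mul_pos hc hL).trans_le hl
  refine ⟨⌈(n / l : ℝ)⌉₊ + s, ?_, ?_⟩
  · have hceil := (div_le_iff₀' hl0).1 (Nat.le_ceil (n / l : ℝ))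
    rw [mul_add]
    gcongr
    exact_mod_cast hceil
  · have hdiv : (n / l : ℝ) ≤ 1 / c * (n / L) := by
      rw [div_mul_div_comm, one_mul]
      gcongr
    have hceil := Nat.ceil_lt_add_one (by positivity : 0 ≤ (n / l : ℝ))
    rw [← le_div_iff₀ hL] at hs
    push_cast
    linarith

section Bounds

variable {β K : ℝ}

theorem exists_add_div_log_le_satNum {m : ℕ} (hβ : 0 < β) (hK : 0 < K) (hm : 5 ≤ m) :
    ∃ c > (0 : ℝ), ∀ᶠ n : ℕ in atTop, ∀ G : SimpleGraph (Fin n),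
      IsPseudorandom G β ⌈K * log n⌉₊ → (n : ℝ) + c * n / log n ≤ satNum G (cycGraph m) := by
  refine ⟨1 / (128 * K * m), by positivity, ?_⟩
  filter_upwards [eventually_ge_atTop 1, eventually_le_log_natCast 1,
    eventually_one_le_ceil_mul_log hK, eventually_ceil_mul_log_le hK,
    eventually_mul_ceil_mul_log_le_rpow (112 * m + 36) (by positivity) hK
      (by norm_num : (0 : ℝ) < 2⁻¹)] with n (hn : 1 ≤ n) hlog hs1 hs hsqrt G hG
  set s := ⌈K * log n⌉₊
  have : Nonempty (Fin n) := ⟨⟨0, hn⟩⟩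
  have hcard : (112 * m + 36 : ℝ) * s ^ 2 ≤ n := calc
    (112 * m + 36 : ℝ) * s ^ 2 ≤ ((112 * m + 36) * s) ^ 2 := by
      rw [mul_pow]
      gcongr
      exact le_self_pow₀ (by linarith [m.cast_nonneg (α := ℝ)]) two_ne_zero
    _ ≤ ((n : ℝ) ^ (2⁻¹ : ℝ)) ^ 2 := by gcongr
    _ = n := by exact_mod_cast rpow_inv_natCast_pow n.cast_nonneg two_ne_zero
  have hsat := hG.card_add_mul_le_mul_satNum hβ hs1 hm
    (by rw [Fintype.card_fin]; exact_mod_cast hcard)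
  rw [Fintype.card_fin] at hsat
  set e := satNum G (cycGraph m)
  have hle : n + 64 * s * m * (n : ℝ) ≤ 64 * s * m * e := by exact_mod_cast hsat
  have hne : (n : ℝ) ≤ e := le_of_mul_le_mul_left
    ((le_add_of_nonneg_left n.cast_nonneg).trans hle) (by positivity)
  have hexcess : (n : ℝ) ≤ (e - n) * (128 * K * m * log n) := calc
    (n : ℝ) ≤ (e - n) * (64 * m) * s := by linarith
    _ ≤ (e - n) * (64 * m) * (2 * K * log n) := by
      have := sub_nonneg.2 hne
      gcongr
    _ = (e - n) * (128 * K * m * log n) := by ring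
  have := div_le_of_le_mul₀ (by positivity) (sub_nonneg.2 hne) hexcess
  rw [div_mul_eq_mul_div, one_mul, div_div]
  linarith

theorem exists_eventually_block_sizes (hβ0 : 0 < β) (hβ1 : β ≤ 1) (hK : 0 < K) (k : ℕ) :
    ∃ c > (0 : ℝ), ∀ᶠ n : ℕ in atTop, 2 * ⌈K * log n⌉₊ ≤ (β / 2) ^ k * (β * n / 2) ∧
      ∃ l t N : ℕ, 2 * ⌈K * log n⌉₊ ≤ (β / 2) ^ l * (β * t) ∧ n + l * ⌈K * log n⌉₊ ≤ l * N ∧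
        ((N + ⌈K * log n⌉₊) * k : ℝ) ≤ β * n / 2 ∧
        (N + ⌈K * log n⌉₊ : ℝ) ≤ c * (n / log n) ∧ (t * (t + l) : ℝ) ≤ n / log n := by
  obtain ⟨c, hc, hlength⟩ := exists_block_length (b := 2 / β) (by rw [one_lt_div hβ0]; linarith)
  have h8 : (0 : ℝ) < 8⁻¹ := by norm_num
  refine ⟨1 / c + 1, by positivity, ?_⟩
  filter_upwards [hlength, eventually_ge_atTop 1, eventually_one_le_ceil_mul_log hK,
    eventually_le_log_natCast (max 1 ((1 / c + 1) * k * 2 / β)),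
    eventually_mul_log_le_rpow 6 h8, eventually_mul_ceil_mul_log_le_rpow 3 (by positivity) hK h8,
    eventually_mul_ceil_mul_log_le_rpow (2 / β) (by positivity) hK h8,
    eventually_mul_ceil_mul_log_le_rpow (4 / ((β / 2) ^ k * β)) (by positivity) hK h8]
    with n ⟨l, hcl, hly, hby⟩ (hn : 1 ≤ n) hs1 hlog hlogy hsy hsβ hsk
  set s := ⌈K * log n⌉₊
  set y := (n : ℝ) ^ (8⁻¹ : ℝ)
  have hy1 : 1 ≤ y := one_le_natCast_rpow hn h8.le
  have hy8 : y ^ 8 = n := by exact_mod_cast rpow_inv_natCast_pow n.cast_nonneg (by norm_num)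
  obtain ⟨hlog1, hlogk⟩ := max_le_iff.1 hlog
  have hlog0 : 0 < log n := zero_lt_one.trans_le hlog1
  rw [div_mul_eq_mul_div, div_le_iff₀' hβ0] at hsβ
  rw [div_mul_eq_mul_div, div_le_iff₀ (by positivity)] at hsk
  obtain ⟨t, ht, htl⟩ := exists_mul_add_le_mul_pow_four hβ0 hsβ hly hby hy1
  obtain ⟨N, hN, hNs⟩ := exists_add_mul_le_mul_and_add_le (n := n) (s := s) hc hlog0 hcl <| calc
    (2 * s + 1) * log n ≤ y * y := by
      have : (1 : ℝ) ≤ s := by exact_mod_cast hs1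
      gcongr <;> linarith
    _ = y ^ 2 := by ring
    _ ≤ n := hy8 ▸ pow_le_pow_right₀ hy1 (by norm_num)
  refine ⟨?_, l, t, N, ht, hN, ?_, hNs, htl.trans ?_⟩
  · have hyn : y ≤ n := hy8 ▸ le_self_pow₀ hy1 (by norm_num)
    have := mul_le_mul_of_nonneg_right hyn (by positivity : 0 ≤ (β / 2) ^ k * β)
    linarith
  · rw [div_le_iff₀ hβ0] at hlogk
    calc ((N + s) * k : ℝ) ≤ (1 / c + 1) * (n / log n) * k := by gcongr
      _ = (1 / c + 1) * k * 2 * (n / log n) / 2 := by ring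
      _ ≤ log n * β * (n / log n) / 2 := by gcongr
      _ = β * n / 2 := by field_simp
  · rw [le_div_iff₀ hlog0]
    calc 6 * y ^ 4 * log n = y ^ 4 * (6 * log n) := by ring
      _ ≤ y ^ 4 * y ^ 4 := by gcongr; exact hlogy.trans (le_self_pow₀ hy1 (by norm_num))
      _ = n := by rw [← hy8]; ring

theorem exists_satNum_le_add_div_log {k : ℕ} (hβ0 : 0 < β) (hβ1 : β ≤ 1) (hK : 0 < K)
    (hk : 3 ≤ k) : ∃ c > (0 : ℝ), ∀ᶠ n : ℕ in atTop, ∀ G : SimpleGraph (Fin n),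
      IsPseudorandom G β ⌈K * log n⌉₊ →
        (satNum G (cycGraph (k + 2)) : ℝ) ≤ n + c * n / log n := by
  obtain ⟨c, hc, hsizes⟩ := exists_eventually_block_sizes hβ0 hβ1 hK k
  refine ⟨c * (k + 2) ^ 2 + 1, by positivity, ?_⟩
  filter_upwards [hsizes, eventually_ge_atTop 1, eventually_one_le_ceil_mul_log hK]
    with n ⟨hs, l, t, N, ht, hlN, hNk, hN, htl⟩ (hn : 1 ≤ n) hs1 G hG
  set s := ⌈K * log n⌉₊
  have : Nonempty (Fin n) := ⟨⟨0, hn⟩⟩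
  have hsat : satNum G (cycGraph (k + 2)) ≤ n + (N + s) * (k + 2) ^ 2 + t * (t + l) := by
    have hlNk : n + l * s ≤ l * (N * k) :=
      hlN.trans (Nat.mul_le_mul_left l (Nat.le_mul_of_pos_right N (by omega)))
    have h := satNum_cycGraph_le (s := s) (l := l) (t := t) (N := N) hG.joinsDensely
      hG.joinsDensely_compl hG.minCodegree hβ0 hβ1 hk hs1
    rw [Fintype.card_fin] at h
    exact h hs ht (by exact_mod_cast hNk) hlNk
  calc (satNum G (cycGraph (k + 2)) : ℝ)
      ≤ n + (N + s) * (k + 2) ^ 2 + t * (t + l) := by exact_mod_cast hsat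
    _ ≤ n + c * (n / log n) * (k + 2) ^ 2 + n / log n := by gcongr
    _ = n + (c * (k + 2) ^ 2 + 1) * n / log n := by ring

end Bounds

/-- For fixed `p ∈ (0,1)` and fixed `m ≥ 5`, there are constants
`c₁, c₂ > 0` such that whp `n + c₁·n/ln n ≤ sat(G(n,p), C_m) ≤ n + c₂·n/ln n`. -/
theorem cycle_saturation_theta (p : ℝ) (hp0 : 0 < p) (hp1 : p < 1)
    (m : ℕ) (hm : 5 ≤ m) :
    ∃ c₁ > (0 : ℝ), ∃ c₂ > (0 : ℝ),
      Tendsto (fun n : ℕ =>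
        erMeasure n p {ω |
          (n : ℝ) + c₁ * n / Real.log n ≤ (satNum (graphOf ω) (cycGraph m) : ℝ) ∧
          (satNum (graphOf ω) (cycGraph m) : ℝ) ≤ (n : ℝ) + c₂ * n / Real.log n})
        atTop (nhds 1) := by
  obtain ⟨k, rfl⟩ := Nat.exists_eq_add_of_le' (by omega : 2 ≤ m)
  obtain ⟨β, K, hβ0, hβ1, hK, hwhp⟩ := exists_tendsto_erMeasure_isPseudorandom hp0 hp1
  obtain ⟨c₁, hc₁, hlower⟩ := exists_add_div_log_le_satNum hβ0 hK hm
  obtain ⟨c₂, hc₂, hupper⟩ := exists_satNum_le_add_div_log (k := k) hβ0 hβ1 hK (by omega)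
  refine ⟨c₁, hc₁, c₂, hc₂, tendsto_of_tendsto_of_tendsto_of_le_of_le' hwhp tendsto_const_nhds ?_
    (.of_forall fun n => prob_le_one)⟩
  filter_upwards [hlower, hupper] with n hlow hup
  exact measure_mono fun ω hω => ⟨hlow _ hω, hup _ hω⟩
end

section
/- Let p ∈ (0,1), c > 0 and ε > 0 be fixed constants. There exists a constant K = K(p,c,ε) such that with high probability the following holds for G(n,p): for every induced subgraph H of G(n,p) on at least εn vertices and every spanning subgraph F of H for which there exists a spanning subgraph H' of H obtained from H by removing at most cn edges such that F is C_4-saturated in H', one has (1) F has at most ⌊(3/p)·ln n⌋ isolated vertices, and (2) the number of vertices of degree exactly 1 in F is at most K·(√(|E(F)|)·ln n + n/ln n). -/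
open MeasureTheory Filter Real

/-!
A Chernoff and union bound argument gives two properties of `G = G(n,p)`, both inherited by induced
subgraphs: disjoint sets of sizes `(3/p) ln n` and `(ε/2) n` have more than `cn` edges between
them, and every set `A` of at least `L = (32/p) ln n` vertices spans more than `(p/16)|A|²` edges.

If `F` is `C₄`-saturated in `H'` and `uv` is an edge of `H'`, then `uv` is an edge of `F` or `F` has
a path of length three from `u` to `v`. An isolated vertex of `F` is therefore isolated in `H'`, so
more than `(3/p) ln n` isolated vertices would force the removal of more than `cn` edges. If `u` and
`v` are leaves with neighbours `x` and `y`, then `uv` or `xy` is an edge of `F`. In particular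
leaves with a common neighbour are not adjacent in `H'`, so the classes of leaves sharing a
neighbour that have at least `L` elements span only removed edges, and together contain
`O(n / ln n)` leaves. Choosing one leaf from each class gives a set spanning at most `cn + 2|E(F)|`
edges, so there are `O(ln n + √(n + |E(F)|))` classes, and the classes with fewer than `L` elements
contain `O(ln n √|E(F)| + n / ln n)` leaves.
-/

section Chernoff

open ProbabilityTheory

lemma mgf_neg_one_le_exp (ν : Measure Bool) [IsProbabilityMeasure ν] {p : ℝ}
    (hp : p ≤ ν.real {true}) :
    mgf (fun b : Bool => if b then (1 : ℝ) else 0) ν (-1) ≤ exp (-(p / 2)) := by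
  have hfalse : ν.real {false} = 1 - ν.real {true} := by
    rw [← probReal_compl_eq_one_sub (measurableSet_singleton true)]
    congr 1
    ext b
    cases b <;> simp
  have hmgf : mgf (fun b : Bool => if b then (1 : ℝ) else 0) ν (-1) =
      1 - (1 - exp (-1)) * ν.real {true} := by
    rw [mgf, integral_fintype Integrable.of_finite]
    simp only [Fintype.sum_bool, smul_eq_mul, hfalse, if_true, Bool.false_eq_true, if_false,
      mul_one, mul_zero, exp_zero]
    ring
  have hexp : exp (-1) < 1 / 2 := exp_neg_one_lt_half
  nlinarith [add_one_le_exp (-(p / 2)), measureReal_nonneg (μ := ν) (s := {true})]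

lemma measureReal_card_filter_le_le_exp {ι : Type*} [Fintype ι] (ν : ι → Measure Bool)
    [∀ i, IsProbabilityMeasure (ν i)] {p : ℝ} (hp : ∀ i, p ≤ (ν i).real {true})
    (T : Finset ι) (t : ℝ) :
    (Measure.pi ν).real {ω | (({i ∈ T | ω i = true} : Finset ι).card : ℝ) ≤ t}
      ≤ exp (t - p / 2 * T.card) := by
  let X : ι → (ι → Bool) → ℝ := fun i ω => if ω i then 1 else 0
  have hindep : iIndepFun X (Measure.pi ν) :=
    iIndepFun_pi (X := fun _ (b : Bool) => if b then (1 : ℝ) else 0)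
      fun _ => Measurable.of_discrete.aemeasurable
  have hmgf (i : ι) : mgf (X i) (Measure.pi ν) (-1) ≤ exp (-(p / 2)) := by
    refine le_of_eq_of_le ?_ (mgf_neg_one_le_exp (ν i) (hp i))
    rw [← (measurePreserving_eval ν i).map_eq]
    exact (mgf_map (X := fun b : Bool => if b then (1 : ℝ) else 0)
      (measurable_pi_apply (X := fun _ : ι => Bool) i).aemeasurable
      Measurable.of_discrete.aestronglyMeasurable).symm
  have hcard (ω : ι → Bool) :
      (({i ∈ T | ω i = true} : Finset ι).card : ℝ) = (∑ i ∈ T, X i) ω := by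
    rw [Finset.sum_apply, Finset.natCast_card_filter]
  simp_rw [hcard]
  calc (Measure.pi ν).real {ω | (∑ i ∈ T, X i) ω ≤ t}
      ≤ exp (-(-1) * t) * mgf (∑ i ∈ T, X i) (Measure.pi ν) (-1) :=
        measure_le_le_exp_mul_mgf t (by norm_num) Integrable.of_finite
    _ = exp t * ∏ i ∈ T, mgf (X i) (Measure.pi ν) (-1) := by
        rw [hindep.mgf_sum fun _ => Measurable.of_discrete, neg_neg, one_mul]
    _ ≤ exp t * ∏ _i ∈ T, exp (-(p / 2)) := by
        gcongr with i
        · exact fun _ _ => mgf_nonneg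
        · exact hmgf i
    _ = exp (t - p / 2 * T.card) := by
        rw [Finset.prod_const, ← exp_nat_mul, ← exp_add]
        ring_nf

end Chernoff

instance isProbabilityMeasure_erMeasure (n : ℕ) (p : ℝ) :
    IsProbabilityMeasure (erMeasure n p) := by
  unfold erMeasure
  infer_instance

lemma erMeasure_real_ncard_le_le_exp {n : ℕ} {p : ℝ} (hp1 : p ≤ 1)
    (P : Set (Sym2 (Fin n))) (t : ℝ) :
    (erMeasure n p).real {ω | (((graphOf ω).edgeSet ∩ P).ncard : ℝ) ≤ t}
      ≤ exp (t - p / 2 * (P \ Sym2.diagSet).ncard) := by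
  classical
  let T : Finset (EdgeType n) := {e | e.1 ∈ P}
  have hval {U : Finset (EdgeType n)} {Q : Set (Sym2 (Fin n))}
      (hQ : Q = Subtype.val '' (U : Set (EdgeType n))) : Q.ncard = U.card := by
    rw [hQ, Set.ncard_image_of_injective _ Subtype.val_injective, Set.ncard_coe_finset]
  have hP : (P \ Sym2.diagSet).ncard = T.card := hval <| by
    ext e
    simp [T, and_comm]
  have hedges (ω : EdgeType n → Bool) :
      ((graphOf ω).edgeSet ∩ P).ncard = ({e ∈ T | ω e = true} : Finset _).card := hval <| by
    ext e
    simp only [graphOf, T]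
    aesop
  simp_rw [hP, hedges]
  refine measureReal_card_filter_le_le_exp _ (fun _ => ?_) T t
  calc p ≤ (min p.toNNReal 1 : NNReal) := by simp [hp1]
    _ = _ := by
      rw [measureReal_def, PMF.toMeasure_apply_singleton _ _ (measurableSet_singleton _)]
      rfl

lemma measureReal_exists_and_le_sum {Ω ι : Type*} [MeasurableSpace Ω] [Fintype ι] {μ : Measure Ω}
    {Q : ι → Prop} {E : ι → Set Ω} {b : ι → ℝ} (hb : ∀ i, 0 ≤ b i)
    (hE : ∀ i, Q i → μ.real (E i) ≤ b i) :
    μ.real {ω | ∃ i, Q i ∧ ω ∈ E i} ≤ ∑ i, b i := by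
  have hunion : {ω | ∃ i, Q i ∧ ω ∈ E i} = ⋃ i, {ω | Q i ∧ ω ∈ E i} := by
    ext ω
    simp
  rw [hunion]
  refine (measureReal_iUnion_fintype_le _).trans (Finset.sum_le_sum fun i _ => ?_)
  by_cases hi : Q i
  · simpa [hi] using hE i hi
  · simpa [hi] using hb i

section Whp

/-- The graph property `P` holds with high probability for `G(n,p)`, for a fixed edge
probability `p`. -/
def Whp (p : ℝ) (P : ∀ n, SimpleGraph (Fin n) → Prop) : Prop :=
  Tendsto (fun n => erMeasure n p {ω | P n (graphOf ω)}) atTop (nhds 1)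

variable {p : ℝ} {P Q : ∀ n, SimpleGraph (Fin n) → Prop}

lemma whp_iff_tendsto_real_not :
    Whp p P ↔
      Tendsto (fun n => (erMeasure n p).real {ω | ¬ P n (graphOf ω)}) atTop (nhds 0) := by
  have hcompl (n : ℕ) : (erMeasure n p).real {ω | ¬ P n (graphOf ω)} =
      1 - (erMeasure n p).real {ω | P n (graphOf ω)} :=
    probReal_compl_eq_one_sub .of_discrete
  simp_rw [hcompl]
  rw [Whp, ← ENNReal.tendsto_toReal_iff (fun _ => measure_ne_top _ _) ENNReal.one_ne_top]
  simp_rw [← measureReal_def, ENNReal.toReal_one]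
  constructor <;> intro h <;> simpa using h.const_sub 1

lemma Whp.tendsto_erMeasure (hP : Whp p P) {E : ∀ n, Set (EdgeType n → Bool)}
    (hE : ∀ᶠ n in atTop, ∀ ω, P n (graphOf ω) → ω ∈ E n) :
    Tendsto (fun n => erMeasure n p (E n)) atTop (nhds 1) :=
  tendsto_of_tendsto_of_tendsto_of_le_of_le' hP tendsto_const_nhds
    (hE.mono fun _ hn => measure_mono hn) (.of_forall fun _ => prob_le_one)

lemma Whp.and (hP : Whp p P) (hQ : Whp p Q) : Whp p fun n G => P n G ∧ Q n G := by
  rw [whp_iff_tendsto_real_not] at hP hQ ⊢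
  refine squeeze_zero (fun _ => measureReal_nonneg) (fun n => ?_) (by simpa using hP.add hQ)
  simp_rw [not_and_or]
  exact measureReal_union_le _ _

end Whp

section EdgeCounts

variable {V W : Type*}

/-- Any two disjoint vertex sets of sizes at least `a` and `b` have more than `m` edges of `G`
between them. The thresholds are real so that they can be taken of the form `a * log n`. -/
def HasManyCrossEdges (G : SimpleGraph V) (a b m : ℝ) : Prop :=
  ∀ I J : Finset V, Disjoint I J → a ≤ I.card → b ≤ J.card →
    m < (G.edgeSet ∩ Set.image2 Sym2.mk I J).ncard

/-- Every vertex set `A` with at least `L` elements spans more than `δ * |A| ^ 2` edges of `G`. -/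
def IsLocallyDense (G : SimpleGraph V) (L δ : ℝ) : Prop :=
  ∀ A : Finset V, L ≤ A.card → δ * (A.card : ℝ) ^ 2 < (G.edgeSet ∩ (A : Set V).sym2).ncard

lemma ncard_edgeSet_comap_inter (G : SimpleGraph V) (f : W ↪ V) (P : Set (Sym2 W)) :
    ((G.comap f).edgeSet ∩ P).ncard = (G.edgeSet ∩ Sym2.map f '' P).ncard := by
  have hedges : (G.comap f).edgeSet = Sym2.map f ⁻¹' G.edgeSet := by
    ext ⟨x, y⟩
    rfl
  rw [hedges, ← Set.image_preimage_inter,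
    Set.ncard_image_of_injective _ (Sym2.map.injective f.injective)]

lemma HasManyCrossEdges.comap {G : SimpleGraph V} {a b m : ℝ} (hG : HasManyCrossEdges G a b m)
    (f : W ↪ V) : HasManyCrossEdges (G.comap f) a b m := by
  intro I J hIJ hI hJ
  rw [ncard_edgeSet_comap_inter, Set.image_image2]
  simpa [Set.image2_image_left, Set.image2_image_right] using
    hG (I.map f) (J.map f) ((Finset.disjoint_map f).2 hIJ) (by simpa) (by simpa)

lemma IsLocallyDense.comap {G : SimpleGraph V} {L δ : ℝ} (hG : IsLocallyDense G L δ) (f : W ↪ V) :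
    IsLocallyDense (G.comap f) L δ := by
  intro A hA
  rw [ncard_edgeSet_comap_inter, ← Set.sym2_image]
  simpa using hG (A.map f) (by simpa)

lemma ncard_image2_mk_diff_diagSet {I J : Finset V} (hIJ : Disjoint I J) :
    (Set.image2 Sym2.mk (I : Set V) J \ Sym2.diagSet).ncard = I.card * J.card := by
  have hdisj := Finset.disjoint_left.1 hIJ
  have hdiag : Disjoint (Set.image2 Sym2.mk (I : Set V) J) Sym2.diagSet := by
    rw [Set.disjoint_left]
    rintro _ ⟨x, hx, y, hy, rfl⟩ (rfl : x = y)
    exact hdisj hx hy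
  have hinj : Set.InjOn Sym2.mk.uncurry ((I : Set V) ×ˢ (J : Set V)) := by
    rintro ⟨x, y⟩ ⟨hx, -⟩ ⟨x', y'⟩ ⟨-, hy'⟩ h
    rcases Sym2.eq_iff.1 h with ⟨rfl, rfl⟩ | ⟨rfl, rfl⟩
    · rfl
    · exact (hdisj hx hy').elim
  rw [hdiag.sdiff_eq_left, ← Set.image_uncurry_prod, hinj.ncard_image, Set.ncard_prod,
    Set.ncard_coe_finset, Set.ncard_coe_finset]

lemma ncard_sym2_diff_diagSet (A : Finset V) :
    ((A : Set V).sym2 \ Sym2.diagSet).ncard = A.card.choose 2 := by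
  classical
  rw [← Sym2.card_image_offDiag, ← Set.ncard_coe_finset]
  congr 1
  ext ⟨x, y⟩
  aesop

end EdgeCounts

section RandomGraph

variable {p : ℝ}

lemma erMeasure_real_not_hasManyCrossEdges_le {n : ℕ} {a b m : ℝ} (hp0 : 0 ≤ p) (hp1 : p ≤ 1)
    (hb : 0 ≤ b) :
    (erMeasure n p).real {ω | ¬ HasManyCrossEdges (graphOf ω) a b m}
      ≤ 4 ^ n * exp (m - p / 2 * (a * b)) := by
  have hpair (IJ : Finset (Fin n) × Finset (Fin n))
      (h : Disjoint IJ.1 IJ.2 ∧ a ≤ IJ.1.card ∧ b ≤ IJ.2.card) :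
      (erMeasure n p).real
          {ω | (((graphOf ω).edgeSet ∩ Set.image2 Sym2.mk IJ.1 IJ.2).ncard : ℝ) ≤ m}
        ≤ exp (m - p / 2 * (a * b)) := by
    obtain ⟨hIJ, hI, hJ⟩ := h
    refine (erMeasure_real_ncard_le_le_exp hp1 _ m).trans ?_
    rw [ncard_image2_mk_diff_diagSet hIJ, Nat.cast_mul]
    gcongr
  calc _ = _ := by simp [HasManyCrossEdges, and_assoc]
    _ ≤ ∑ _IJ : Finset (Fin n) × Finset (Fin n), exp (m - p / 2 * (a * b)) :=
        measureReal_exists_and_le_sum (fun _ => by positivity) hpair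
    _ = 4 ^ n * exp (m - p / 2 * (a * b)) := by
        norm_num [← mul_pow]

lemma whp_hasManyCrossEdges (hp0 : 0 < p) (hp1 : p ≤ 1) {a b : ℝ} (ha : 0 < a) (hb : 0 < b)
    (c : ℝ) : Whp p fun n G => HasManyCrossEdges G (a * log n) (b * n) (c * n) := by
  have hlog : ∀ᶠ n : ℕ in atTop, (c + 2) / (p / 2 * a * b) ≤ log n :=
    (tendsto_log_atTop.comp tendsto_natCast_atTop_atTop).eventually_ge_atTop _
  have hbase : 4 * exp (-2) < 1 := by
    have hsq : exp (-2) = exp (-1) * exp (-1) := by rw [← exp_add]; norm_num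
    nlinarith [exp_neg_one_lt_half, exp_pos (-1)]
  rw [whp_iff_tendsto_real_not]
  refine squeeze_zero' (.of_forall fun _ => measureReal_nonneg) ?_
    (tendsto_pow_atTop_nhds_zero_of_lt_one (by positivity) hbase)
  filter_upwards [hlog] with n hn
  refine (erMeasure_real_not_hasManyCrossEdges_le hp0.le hp1 (by positivity)).trans ?_
  rw [mul_pow, ← exp_nat_mul]
  gcongr
  rw [div_le_iff₀ (by positivity)] at hn
  nlinarith [mul_le_mul_of_nonneg_right hn (Nat.cast_nonneg (α := ℝ) n)]

lemma erMeasure_real_ncard_edgeSet_sym2_le {n : ℕ} (hp0 : 0 < p) (hp1 : p ≤ 1) {A : Finset (Fin n)}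
    (hlog : 1 ≤ log n) (hA : 32 / p * log n ≤ A.card) :
    (erMeasure n p).real
        {ω | (((graphOf ω).edgeSet ∩ (A : Set (Fin n)).sym2).ncard : ℝ)
          ≤ p / 16 * (A.card : ℝ) ^ 2}
      ≤ (n : ℝ)⁻¹ * (n : ℝ)⁻¹ ^ A.card := by
  have hn : (0 : ℝ) < n := by
    by_contra! h
    norm_num [h.antisymm n.cast_nonneg] at hlog
  have hpa : 32 * log n ≤ p * A.card := by
    rw [div_mul_eq_mul_div, div_le_iff₀ hp0] at hA
    linarith
  have hcard : (2 : ℝ) ≤ A.card := by nlinarith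
  calc _ ≤ exp (p / 16 * (A.card : ℝ) ^ 2 - p / 2 * (A.card * (A.card - 1) / 2)) := by
        rw [← Nat.cast_choose_two, ← ncard_sym2_diff_diagSet]
        exact erMeasure_real_ncard_le_le_exp hp1 _ _
    _ ≤ exp (-log n * (A.card + 1)) := by
        gcongr
        nlinarith [mul_le_mul_of_nonneg_right hpa A.card.cast_nonneg, hcard]
    _ = (n : ℝ)⁻¹ * (n : ℝ)⁻¹ ^ A.card := by
        rw [← log_inv, ← rpow_def_of_pos (inv_pos.2 hn), ← pow_succ']
        exact_mod_cast rpow_natCast _ _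

lemma erMeasure_real_not_isLocallyDense_le {n : ℕ} (hp0 : 0 < p) (hp1 : p ≤ 1) (hlog : 1 ≤ log n) :
    (erMeasure n p).real {ω | ¬ IsLocallyDense (graphOf ω) (32 / p * log n) (p / 16)}
      ≤ exp 1 / n := by
  have hn : (n : ℝ) ≠ 0 := by
    rintro h
    norm_num [h] at hlog
  have hsets := measureReal_exists_and_le_sum (μ := erMeasure n p) (ι := Finset (Fin n))
    (b := fun A => (n : ℝ)⁻¹ * (n : ℝ)⁻¹ ^ A.card) (fun _ => by positivity)
    (fun A => erMeasure_real_ncard_edgeSet_sym2_le hp0 hp1 (A := A) hlog)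
  calc _ = _ := by simp [IsLocallyDense]
    _ ≤ ∑ A : Finset (Fin n), (n : ℝ)⁻¹ * (n : ℝ)⁻¹ ^ A.card := hsets
    _ = (n : ℝ)⁻¹ * ((n : ℝ)⁻¹ + 1) ^ n := by
        rw [← Finset.mul_sum, ← Fin.sum_pow_mul_eq_add_pow]
        simp
    _ ≤ (n : ℝ)⁻¹ * exp (n : ℝ)⁻¹ ^ n := by
        gcongr
        exact add_one_le_exp _
    _ = exp 1 / n := by rw [← exp_nat_mul, mul_inv_cancel₀ hn, inv_mul_eq_div]

lemma whp_isLocallyDense (hp0 : 0 < p) (hp1 : p ≤ 1) :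
    Whp p fun n G => IsLocallyDense G (32 / p * log n) (p / 16) := by
  rw [whp_iff_tendsto_real_not]
  refine squeeze_zero' (.of_forall fun _ => measureReal_nonneg) ?_
    (tendsto_const_div_atTop_nhds_zero_nat (exp 1))
  filter_upwards [(tendsto_log_atTop.comp tendsto_natCast_atTop_atTop).eventually_ge_atTop 1]
    with n hn using erMeasure_real_not_isLocallyDense_le hp0 hp1 hn

end RandomGraph

section LocallyDense

variable {V α : Type*} [Finite V] {G : SimpleGraph V} {L δ : ℝ}

lemma sum_ncard_sym2_fiber_le [DecidableEq α] {D : Finset V} {f : V → α} {R : Set (Sym2 V)}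
    (hR : ∀ u ∈ D, ∀ v ∈ D, G.Adj u v → f u = f v → s(u, v) ∈ R) (X : Finset α) :
    ∑ x ∈ X, (G.edgeSet ∩ (({v ∈ D | f v = x} : Finset V) : Set V).sym2).ncard ≤ R.ncard := by
  rw [← finsum_mem_coe_finset, ← X.finite_toSet.ncard_biUnion (fun _ _ => Set.toFinite _)]
  · refine Set.ncard_le_ncard (Set.iUnion₂_subset ?_)
    rintro x - ⟨u, v⟩ ⟨huv, hu, hv⟩
    simp only [Finset.coe_filter, Set.mem_ofPred_eq] at hu hv
    exact hR u hu.1 v hv.1 huv (hu.2.trans hv.2.symm)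
  · intro x _ y _ hxy
    rw [Function.onFun, Set.disjoint_left]
    rintro ⟨u, v⟩ ⟨-, hx, -⟩ ⟨-, hy, -⟩
    exact hxy ((Finset.mem_filter.1 hx).2.symm.trans (Finset.mem_filter.1 hy).2)

lemma IsLocallyDense.card_le_of_fibers (hG : IsLocallyDense G L δ) (hL : 0 < L) (hδ : 0 < δ)
    [DecidableEq α] {D : Finset V} {f : V → α} {R : Set (Sym2 V)}
    (hR : ∀ u ∈ D, ∀ v ∈ D, G.Adj u v → f u = f v → s(u, v) ∈ R) :
    (D.card : ℝ) ≤ R.ncard / (δ * L) + L * (D.image f).card := by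
  let fiber (x : α) : Finset V := {v ∈ D | f v = x}
  have hfiber (x : α) : ((fiber x).card : ℝ) ≤
      (G.edgeSet ∩ (fiber x : Set V).sym2).ncard / (δ * L) + L := by
    rcases le_or_gt L (fiber x).card with hx | hx
    · refine le_add_of_le_of_nonneg ?_ hL.le
      rw [le_div_iff₀ (by positivity)]
      calc ((fiber x).card : ℝ) * (δ * L) ≤ (fiber x).card * (δ * (fiber x).card) := by gcongr
        _ = δ * ((fiber x).card : ℝ) ^ 2 := by ring
        _ ≤ _ := (hG _ hx).le
    · exact le_add_of_nonneg_of_le (by positivity) hx.le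
  calc (D.card : ℝ) = ∑ x ∈ D.image f, ((fiber x).card : ℝ) := by
        rw [Finset.card_eq_sum_card_image f D, Nat.cast_sum]
    _ ≤ ∑ x ∈ D.image f, ((G.edgeSet ∩ (fiber x : Set V).sym2).ncard / (δ * L) + L) :=
        Finset.sum_le_sum fun x _ => hfiber x
    _ = ((∑ x ∈ D.image f, (G.edgeSet ∩ (fiber x : Set V).sym2).ncard : ℕ) : ℝ) / (δ * L) +
          L * (D.image f).card := by
        rw [Finset.sum_add_distrib, Finset.sum_const, nsmul_eq_mul, mul_comm L, Nat.cast_sum,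
          Finset.sum_div]
    _ ≤ R.ncard / (δ * L) + L * (D.image f).card := by
        gcongr
        exact sum_ncard_sym2_fiber_le hR _

lemma injOn_sym2Map {β : Type*} {f : β → α} {s : Set β} (hf : s.InjOn f) :
    s.sym2.InjOn (Sym2.map f) := by
  rintro ⟨a, b⟩ ⟨ha, hb⟩ ⟨a', b'⟩ ⟨ha', hb'⟩ h
  rcases Sym2.eq_iff.1 h with ⟨h₁, h₂⟩ | ⟨h₁, h₂⟩
  · exact Sym2.eq_iff.2 (.inl ⟨hf ha ha' h₁, hf hb hb' h₂⟩)
  · exact Sym2.eq_iff.2 (.inr ⟨hf ha hb' h₁, hf hb ha' h₂⟩)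

lemma IsLocallyDense.card_image_le (hG : IsLocallyDense G L δ) (hL : 0 ≤ L) (hδ : 0 < δ)
    [Finite α] [DecidableEq α] {D : Finset V} {f : V → α} {R : Set (Sym2 V)} {Q : Set (Sym2 α)}
    (hRQ : ∀ u ∈ D, ∀ v ∈ D, G.Adj u v → s(u, v) ∈ R ∨ s(f u, f v) ∈ Q) :
    ((D.image f).card : ℝ) ≤ L + √((R.ncard + Q.ncard) / δ) := by
  obtain ⟨B, hBD, hinj, hBX⟩ := Finset.exists_subset_injOn_image_eq_of_surjOn (f := f)
    (D : Set V) (D.image f) (by rw [Finset.coe_image]; exact Set.surjOn_image f D)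
  have hcard : B.card = (D.image f).card := by rw [← hBX, Finset.card_image_of_injOn hinj]
  -- `B` contains exactly one vertex of each fibre of `f`, so distinct pairs in `B` have distinct
  -- images.
  rw [← hcard]
  rcases lt_or_ge (B.card : ℝ) L with hB | hB
  · exact le_add_of_le_of_nonneg hB.le (sqrt_nonneg _)
  have hsub : G.edgeSet ∩ (B : Set V).sym2 ⊆ R ∪ ((B : Set V).sym2 ∩ Sym2.map f ⁻¹' Q) := by
    rintro ⟨u, v⟩ ⟨huv, hu, hv⟩
    exact (hRQ u (hBD hu) v (hBD hv) huv).imp id fun h => ⟨⟨hu, hv⟩, h⟩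
  have hQ : ((B : Set V).sym2 ∩ Sym2.map f ⁻¹' Q).ncard ≤ Q.ncard :=
    Set.ncard_le_ncard_of_injOn (Sym2.map f) (fun _ h => h.2)
      ((injOn_sym2Map hinj).mono Set.inter_subset_left)
  have hedges : (G.edgeSet ∩ (B : Set V).sym2).ncard ≤ R.ncard + Q.ncard :=
    (Set.ncard_le_ncard hsub).trans ((Set.ncard_union_le _ _).trans (by gcongr))
  refine le_add_of_nonneg_of_le hL (le_sqrt_of_sq_le ?_)
  rw [le_div_iff₀' hδ]
  exact (hG B hB).le.trans (by exact_mod_cast hedges)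

end LocallyDense

section Saturation

variable {V : Type*} {G F : SimpleGraph V} {u v : V}

lemma exists_walk_of_adj_add_one {m : ℕ} [NeZero m] {g : ZMod m → V} {i : ZMod m}
    (hadj : ∀ j ≠ i, F.Adj (g j) (g (j + 1))) :
    ∃ w : F.Walk (g (i + 1)) (g i), w.length + 1 = m := by
  have hwalk (k : ℕ) (hk : k + 1 ≤ m) :
      ∃ w : F.Walk (g (i + 1)) (g (i + (k + 1 : ℕ))), w.length = k := by
    induction k with
    | zero => exact ⟨.copy .nil rfl (by simp), by simp⟩
    | succ k ih =>
      obtain ⟨w, hw⟩ := ih (by lia)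
      have hne : i + (k + 1 : ℕ) ≠ i := by
        rw [Ne, add_eq_left, ZMod.natCast_eq_zero_iff]
        exact Nat.not_dvd_of_pos_of_lt k.succ_pos hk
      exact ⟨(w.concat (hadj _ hne)).copy rfl (by push_cast; ring_nf), by simp [hw]⟩
  have hm : m - 1 + 1 = m := Nat.sub_one_add_one (NeZero.ne m)
  obtain ⟨w, hw⟩ := hwalk (m - 1) hm.le
  exact ⟨w.copy rfl (by simp [hm]), by simp [hw, hm]⟩

lemma IsSaturatedIn.exists_walk_of_cycGraph {m : ℕ} (hm : 3 ≤ m)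
    (h : IsSaturatedIn G F (cycGraph m)) (hG : G.Adj u v) (hF : ¬ F.Adj u v) :
    ∃ w : F.Walk u v, w.length + 1 = m := by
  obtain ⟨-, hfree, hsat⟩ := h
  obtain ⟨g, hg, hcopy⟩ := hsat u v hG hF
  have : Fact (1 < m) := ⟨by lia⟩
  have : NeZero m := ⟨by lia⟩
  have hstep (j : ZMod m) : F.Adj (g j) (g (j + 1)) ∨ s(g j, g (j + 1)) = s(u, v) := by
    have hj : (cycGraph m).Adj j (j + 1) := by simp [cycGraph]
    simpa using (hcopy hj).imp id And.left
  obtain ⟨i, hi⟩ : ∃ i, ¬ F.Adj (g i) (g (i + 1)) := by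
    by_contra! hall
    refine hfree ⟨g, hg, fun a b hab => ?_⟩
    rcases hab.2 with rfl | rfl
    · exact (hall b).symm
    · exact hall a
  have hiuv := (hstep i).resolve_left hi
  have hadj (j : ZMod m) (hji : j ≠ i) : F.Adj (g j) (g (j + 1)) := by
    refine (hstep j).resolve_right fun hj => ?_
    rcases Sym2.eq_iff.1 (hj.trans hiuv.symm) with ⟨hgj, -⟩ | ⟨hgj, hgi⟩
    · exact hji (hg hgj)
    · have htwo : ((2 : ℕ) : ZMod m) = 0 := by
        push_cast
        linear_combination hg hgi - hg hgj
      exact Nat.not_dvd_of_pos_of_lt two_pos hm ((ZMod.natCast_eq_zero_iff 2 m).1 htwo)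
  obtain ⟨w, hw⟩ := exists_walk_of_adj_add_one hadj
  rcases Sym2.eq_iff.1 hiuv with ⟨rfl, rfl⟩ | ⟨rfl, rfl⟩
  · exact ⟨w.reverse, by simpa⟩
  · exact ⟨w, hw⟩

lemma IsSaturatedIn.exists_adj_of_cycGraph {m : ℕ} (hm : 3 ≤ m)
    (h : IsSaturatedIn G F (cycGraph m)) (hG : G.Adj u v) : ∃ w, F.Adj u w := by
  by_cases hF : F.Adj u v
  · exact ⟨v, hF⟩
  · obtain ⟨w, hw⟩ := h.exists_walk_of_cycGraph hm hG hF
    exact ⟨w.snd, w.adj_snd (SimpleGraph.Walk.not_nil_iff_lt_length.2 (by lia))⟩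

lemma IsSaturatedIn.adj_or_adj_of_neighborSet_eq_singleton {x y : V}
    (h : IsSaturatedIn G F (cycGraph 4)) (hu : F.neighborSet u = {x})
    (hv : F.neighborSet v = {y}) (hG : G.Adj u v) : F.Adj u v ∨ F.Adj x y := by
  by_contra! hF
  obtain ⟨w, hw⟩ := h.exists_walk_of_cycGraph (by norm_num) hG hF.1
  match w, hw with
  | .cons (v := x') hux (.cons (v := y') hxy (.cons hyv .nil)), _ =>
    obtain rfl : x' = x := by simpa [hu] using (F.mem_neighborSet u x').2 hux
    obtain rfl : y' = y := by simpa [hv] using (F.mem_neighborSet v y').2 hyv.symm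
    exact hF.2 hxy

lemma IsSaturatedIn.not_adj_of_neighborSet_eq_singleton {x : V}
    (h : IsSaturatedIn G F (cycGraph 4)) (hu : F.neighborSet u = {x})
    (hv : F.neighborSet v = {x}) : ¬ G.Adj u v := by
  intro hG
  rcases h.adj_or_adj_of_neighborSet_eq_singleton hu hv hG with hF | hF
  · obtain rfl : v = x := by simpa [hu] using (F.mem_neighborSet u v).2 hF
    exact F.irrefl (hv ▸ rfl : v ∈ F.neighborSet v)
  · exact F.irrefl hF

variable [Finite V] {H : SimpleGraph V} {r : ℝ}

lemma IsSaturatedIn.ncard_isolated_le {m : ℕ} {a b : ℝ} (hm : 3 ≤ m)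
    (h : IsSaturatedIn H F (cycGraph m)) (hG : HasManyCrossEdges G a b r)
    (hr : (G.edgeSet \ H.edgeSet).ncard ≤ r) (ha : 0 ≤ a) (hab : a + 1 + b ≤ Nat.card V) :
    {v | ∀ w, ¬ F.Adj v w}.ncard ≤ ⌊a⌋₊ := by
  classical
  have := Fintype.ofFinite V
  by_contra! hlt
  rw [Set.ncard_eq_toFinset_card'] at hlt
  obtain ⟨I, hI, hIcard⟩ := Finset.exists_subset_card_eq (Nat.succ_le_of_lt hlt)
  have hsub : G.edgeSet ∩ Set.image2 Sym2.mk I (Iᶜ : Finset V) ⊆ G.edgeSet \ H.edgeSet := by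
    rintro _ ⟨huv, u, hu, v, -, rfl⟩
    refine ⟨huv, fun hH => ?_⟩
    obtain ⟨w, hw⟩ := h.exists_adj_of_cycGraph hm hH
    exact (Set.mem_toFinset.1 (hI hu)) w hw
  have hIa : (I.card : ℝ) ≤ a + 1 := by
    rw [hIcard, Nat.cast_add_one]
    gcongr
    exact Nat.floor_le ha
  have haI : a ≤ I.card := by
    rw [hIcard]
    exact_mod_cast (Nat.lt_floor_add_one a).le
  have hJ : b ≤ (Iᶜ : Finset V).card := by
    have hcompl : (I.card : ℝ) + (Iᶜ : Finset V).card = Nat.card V := by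
      exact_mod_cast Nat.card_eq_fintype_card (α := V) ▸ I.card_add_card_compl
    linarith
  refine (hG I Iᶜ disjoint_compl_right haI hJ).not_ge (le_trans ?_ hr)
  exact_mod_cast Set.ncard_le_ncard hsub

lemma IsSaturatedIn.ncard_leaves_le {L δ : ℝ} (h : IsSaturatedIn H F (cycGraph 4))
    (hG : IsLocallyDense G L δ) (hr : (G.edgeSet \ H.edgeSet).ncard ≤ r) (hL : 0 < L)
    (hδ : 0 < δ) :
    ({v | (F.neighborSet v).ncard = 1}.ncard : ℝ) ≤
      r / (δ * L) + L * (L + √((r + 2 * F.edgeSet.ncard) / δ)) := by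
  classical
  have := Fintype.ofFinite V
  set D : Finset V := {v | (F.neighborSet v).ncard = 1}.toFinset with hD
  have hneighbor (v : V) (hv : v ∈ D) : ∃ x, F.neighborSet v = {x} :=
    Set.ncard_eq_one.1 (by simpa [D] using hv)
  choose! f hf using hneighbor
  have hfiber := hG.card_le_of_fibers hL hδ (D := D) (f := f) (R := G.edgeSet \ H.edgeSet)
    fun u hu v hv huv hfuv => ⟨huv, h.not_adj_of_neighborSet_eq_singleton (hf u hu)
      (hfuv ▸ hf v hv)⟩
  have himage := hG.card_image_le hL.le hδ (D := D) (f := f)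
    (R := (G.edgeSet \ H.edgeSet) ∪ F.edgeSet) (Q := F.edgeSet) fun u hu v hv huv => by
      by_cases hH : H.Adj u v
      · exact (h.adj_or_adj_of_neighborSet_eq_singleton (hf u hu) (hf v hv) hH).imp_left .inr
      · exact .inl (.inl ⟨huv, hH⟩)
  have hcount : (((G.edgeSet \ H.edgeSet) ∪ F.edgeSet).ncard + F.edgeSet.ncard : ℝ) ≤
      r + 2 * F.edgeSet.ncard := by
    have hunion : (((G.edgeSet \ H.edgeSet) ∪ F.edgeSet).ncard : ℝ) ≤
        (G.edgeSet \ H.edgeSet).ncard + F.edgeSet.ncard := by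
      exact_mod_cast Set.ncard_union_le _ _
    linarith
  rw [Set.ncard_eq_toFinset_card', ← hD]
  refine hfiber.trans ?_
  gcongr
  exact himage.trans (by gcongr)

end Saturation

section Asymptotics

lemma eventually_log_natCast_pow_four_le : ∀ᶠ n : ℕ in atTop, log n ^ 4 ≤ n := by
  filter_upwards [tendsto_natCast_atTop_atTop.eventually
    ((isLittleO_pow_log_id_atTop (n := 4)).bound one_pos)] with n hn
  simpa [abs_of_nonneg (log_natCast_nonneg n)] using hn

lemma eventually_mul_log_natCast_add_le (a : ℝ) {b : ℝ} (hb : 0 < b) (d : ℝ) :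
    ∀ᶠ n : ℕ in atTop, a * log n + d ≤ b * n := by
  have hlog := (isLittleO_log_id_atTop.comp_tendsto tendsto_natCast_atTop_atTop).const_mul_left a
  have hconst := tendsto_natCast_atTop_atTop.eventually_ge_atTop (d / (b / 2))
  filter_upwards [hlog.bound (half_pos hb), hconst] with n hn hd
  have hmul : a * log n ≤ b / 2 * n := by
    simpa using (le_abs_self _).trans hn
  rw [div_le_iff₀' (by positivity)] at hd
  linarith

lemma exists_mul_div_add_mul_add_sqrt_le {c C δ : ℝ} (hc : 0 ≤ c) (hC : 0 < C) (hδ : 0 < δ) :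
    ∃ K, ∀ E l n : ℝ, 0 ≤ E → 1 ≤ l → l ^ 4 ≤ n →
      c * n / (δ * (C * l)) + C * l * (C * l + √((c * n + 2 * E) / δ)) ≤ K * (√E * l + n / l) := by
  refine ⟨c / (δ * C) + C ^ 2 + C * √(c / δ) + C * √(2 / δ), fun E l n hE hl hn => ?_⟩
  have hn0 : 0 ≤ n := le_trans (by positivity) hn
  have hsq : l ^ 2 ≤ √n := le_sqrt_of_sq_le (by rwa [← pow_mul])
  have hsqrt : √((c * n + 2 * E) / δ) ≤ √(c / δ) * √n + √(2 / δ) * √E := by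
    rw [← sqrt_mul (by positivity), ← sqrt_mul (by positivity), add_div, mul_div_right_comm,
      mul_div_right_comm]
    simp_rw [sqrt_eq_rpow]
    exact rpow_add_le_add_rpow (by positivity) (by positivity) (by norm_num) (by norm_num)
  have hlin : l * √n ≤ n / l := by
    rw [le_div_iff₀ (by positivity)]
    nlinarith [sq_sqrt hn0, sqrt_nonneg n]
  have hquad : l ^ 2 ≤ n / l := by
    nlinarith [sqrt_nonneg n]
  calc c * n / (δ * (C * l)) + C * l * (C * l + √((c * n + 2 * E) / δ))
      ≤ c * n / (δ * (C * l)) + C * l * (C * l + (√(c / δ) * √n + √(2 / δ) * √E)) := by gcongr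
    _ = c / (δ * C) * (n / l) + C ^ 2 * l ^ 2 + C * √(c / δ) * (l * √n)
          + C * √(2 / δ) * (√E * l) := by
        field_simp
        ring
    _ ≤ c / (δ * C) * (√E * l + n / l) + C ^ 2 * (√E * l + n / l)
          + C * √(c / δ) * (√E * l + n / l) + C * √(2 / δ) * (√E * l + n / l) := by
        have hEl : 0 ≤ √E * l := by positivity
        have hnl : 0 ≤ n / l := by positivity
        gcongr <;> linarith
    _ = _ := by ring

end Asymptotics

/-- For fixed `p ∈ (0,1)`, `c > 0`, `ε > 0`, there is a constant
`K` such that whp: for every induced subgraph `H = G(n,p)[S]` with `|S| ≥ εn`, and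
every spanning `F ≤ H` which is `C₄`-saturated in some spanning `H' ≤ H` obtained
by removing at most `cn` edges from `H`, (1) `F` has at most `⌊(3/p)·ln n⌋`
isolated vertices, and (2) the number of degree-1 vertices of `F` is at most
`K·(√|E(F)|·ln n + n/ln n)`. -/
theorem saturated_few_low_degree (p c ε : ℝ) (hp0 : 0 < p) (hp1 : p < 1)
    (hc : 0 < c) (hε : 0 < ε) :
    ∃ K : ℝ,
      Tendsto (fun n : ℕ =>
        erMeasure n p {ω |
          ∀ S : Set (Fin n), ε * n ≤ (S.ncard : ℝ) →
            ∀ F H' : SimpleGraph S,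
              H' ≤ (graphOf ω).induce S →
              (((((graphOf ω).induce S).edgeSet \ H'.edgeSet).ncard : ℝ) ≤ c * n) →
              IsSaturatedIn H' F (cycGraph 4) →
              ({v : S | ∀ w : S, ¬ F.Adj v w}.ncard ≤ ⌊(3 / p) * Real.log n⌋₊ ∧
               ({v : S | (F.neighborSet v).ncard = 1}.ncard : ℝ)
                 ≤ K * (Real.sqrt (F.edgeSet.ncard) * Real.log n
                          + n / Real.log n))})
        atTop (nhds 1) := by
  obtain ⟨K, hK⟩ := exists_mul_div_add_mul_add_sqrt_le hc.le
    (show 0 < 32 / p by positivity) (show 0 < p / 16 by positivity)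
  have hwhp := (whp_hasManyCrossEdges hp0 hp1.le (a := 3 / p) (by positivity) (half_pos hε) c).and
    (whp_isLocallyDense hp0 hp1.le)
  refine ⟨K, hwhp.tendsto_erMeasure ?_⟩
  filter_upwards [(tendsto_log_atTop.comp tendsto_natCast_atTop_atTop).eventually_ge_atTop 1,
    eventually_log_natCast_pow_four_le, eventually_mul_log_natCast_add_le (3 / p) (half_pos hε) 1]
    with n hlog hlog4 hroom ω ⟨hcross, hdense⟩ S hS F H' _ hremoved hsat
  have hcard : 3 / p * log n + 1 + ε / 2 * n ≤ Nat.card S := by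
    rw [Nat.card_coe_set_eq]
    linarith
  have hleaves := hsat.ncard_leaves_le (hdense.comap (.subtype _)) hremoved
    (mul_pos (by positivity) (one_pos.trans_le hlog)) (by positivity)
  exact ⟨hsat.ncard_isolated_le (by norm_num) (hcross.comap (.subtype _)) hremoved
    (by positivity) hcard, hleaves.trans (hK _ _ _ (by positivity) hlog hlog4)⟩
end
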